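/- arXiv:1706.07984 — 5 statements merged into one kernel-verified Lean document; each statement's English description precedes it below -/
import Mathlib

section
/- Let 0 < p < 4, let μ be a Borel probability measure on ℝⁿ, and let S ∈ SL_n(ℝ) (det S = 1). If both Cov_p(μ) and Cov_p(S_*μ) are scalar matrices (i.e. each is a positive multiple of the identity), then S is an orthogonal matrix. -/
/-!
Let `A = Sᵀ S`, with orthonormal eigenbasis `b`, eigenvalues `a i > 0`, and `∏ a i = 1`, so that
`∑ log (a i) = 0`. Along the geodesic `t ↦ A ^ t` from `1` to `A` the functional
`B ↦ ∫ ⟪B x, x⟫ ^ (p / 2) ∂μ` is convex, and the two covariance conditions say that both end points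
are critical; strict convexity then forces `A = 1`.

The argument compares the derivatives at the two end points directly. With `y i = ⟪b i, x⟫`,
their difference is, up to a factor, the integral of
`∑ log (a i) * a i * y i ^ 2 * ‖S x‖ ^ (p - 2) - ∑ log (a i) * y i ^ 2 * ‖x‖ ^ (p - 2)`.
By `integral_inner_mul_inner` the integral vanishes, because each of the two sums integrates to a
multiple of `∑ log (a i) = 0`. By `gap_nonneg` the integrand is nonnegative, and by `gap_eq_zero` it
vanishes only where `y i = 0` for every `i` with `a i ≠ 1`. If some `a i ≠ 1`, then `⟪b i, x⟫ = 0`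
for almost every `x`, which contradicts `∫ ⟪b i, x⟫ ^ 2 * ‖x‖ ^ (p - 2) ∂μ = κ > 0`.
-/

open MeasureTheory

/-- Polarised form of "the `L^p`-covariance is `κ` times the identity". The diagonal entries are
integrable because their integrals are nonzero, and they dominate the off-diagonal ones. -/
lemma integral_inner_mul_inner {n : ℕ} {p κ : ℝ} (hκ : 0 < κ)
    (ν : Measure (EuclideanSpace ℝ (Fin n)))
    (hν : ∀ i j : Fin n, (∫ x, x i * x j * ‖x‖ ^ (p - 2) ∂ν) = if i = j then κ else 0)
    (u v : EuclideanSpace ℝ (Fin n)) :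
    Integrable (fun x => inner ℝ u x * inner ℝ v x * ‖x‖ ^ (p - 2)) ν ∧
      ∫ x, inner ℝ u x * inner ℝ v x * ‖x‖ ^ (p - 2) ∂ν = κ * inner ℝ u v := by
  have hdiag : ∀ i, Integrable (fun x : EuclideanSpace ℝ (Fin n) => x i * x i * ‖x‖ ^ (p - 2)) ν := by
    intro i
    by_contra h
    have := hν i i
    rw [integral_undef h, if_pos rfl] at this
    exact hκ.ne this
  have hall : ∀ i j,
      Integrable (fun x : EuclideanSpace ℝ (Fin n) => x i * x j * ‖x‖ ^ (p - 2)) ν := by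
    intro i j
    refine ((hdiag i).add (hdiag j)).mono' ?_ (Filter.Eventually.of_forall fun x => ?_)
    · have hm : Measurable fun x : EuclideanSpace ℝ (Fin n) => x i * x j * ‖x‖ ^ (p - 2) := by
        fun_prop
      exact hm.aestronglyMeasurable
    · have h0 : 0 ≤ ‖x‖ ^ (p - 2) := Real.rpow_nonneg (norm_nonneg x) _
      rw [Real.norm_eq_abs, abs_mul, abs_of_nonneg h0]
      simp only [Pi.add_apply]
      rw [← add_mul]
      refine mul_le_mul_of_nonneg_right ?_ h0
      rw [abs_le]
      constructor <;> nlinarith [sq_nonneg (x i + x j), sq_nonneg (x i - x j)]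
  have hexp : (fun x : EuclideanSpace ℝ (Fin n) => inner ℝ u x * inner ℝ v x * ‖x‖ ^ (p - 2))
      = fun x => ∑ i, ∑ j, u i * v j * (x i * x j * ‖x‖ ^ (p - 2)) := by
    funext x
    simp only [PiLp.inner_apply, RCLike.inner_apply, conj_trivial]
    rw [Finset.sum_mul_sum, Finset.sum_mul]
    refine Finset.sum_congr rfl fun i _ => ?_
    rw [Finset.sum_mul]
    exact Finset.sum_congr rfl fun j _ => by ring
  have hin : ∀ i j, Integrable (fun x : EuclideanSpace ℝ (Fin n) =>
      u i * v j * (x i * x j * ‖x‖ ^ (p - 2))) ν := fun i j => (hall i j).const_mul _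
  rw [hexp]
  refine ⟨integrable_finsetSum _ fun i _ => integrable_finsetSum _ fun j _ => hin i j, ?_⟩
  rw [integral_finsetSum _ fun i _ => integrable_finsetSum _ fun j _ => hin i j]
  simp only [PiLp.inner_apply, RCLike.inner_apply, conj_trivial]
  rw [Finset.mul_sum]
  refine Finset.sum_congr rfl fun i _ => ?_
  rw [integral_finsetSum _ fun j _ => hin i j]
  simp only [integral_const_mul, hν]
  simp
  ring

/-- The convexity inequality: the integrand comparing the two end points dominates
`(t ^ p - r ^ p) * log (t ^ 2 / r ^ 2)`, where `r` and `t` play the roles of `‖x‖` and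
`‖S x‖`. -/
lemma gap_lower_bound {ι : Type*} [Fintype ι] {p r t : ℝ} (hr : 0 < r) (ht : 0 < t)
    (a y : ι → ℝ) (ha : ∀ i, 0 < a i) (hy : ∑ i, y i ^ 2 = r ^ 2)
    (hay : ∑ i, a i * y i ^ 2 = t ^ 2) :
    (t ^ p - r ^ p) * Real.log (t ^ 2 / r ^ 2) ≤
      (∑ i, Real.log (a i) * (a i * y i ^ 2)) * t ^ (p - 2)
        - (∑ i, Real.log (a i) * y i ^ 2) * r ^ (p - 2) := by
  set s := t ^ 2 / r ^ 2 with hs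
  have hs0 : 0 < s := by positivity
  have hsr : s * r ^ 2 = t ^ 2 := by rw [hs]; field_simp
  -- tangent line at `s` of the convex function `a * log a`
  have h1 : t ^ 2 * Real.log s ≤ ∑ i, Real.log (a i) * (a i * y i ^ 2) := by
    have hle : ∀ i, (Real.log s + 1) * (a i * y i ^ 2) - s * y i ^ 2
        ≤ Real.log (a i) * (a i * y i ^ 2) := by
      intro i
      have h := Real.log_le_sub_one_of_pos (div_pos hs0 (ha i))
      rw [Real.log_div hs0.ne' (ha i).ne'] at h
      have h' := mul_le_mul_of_nonneg_left h (ha i).le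
      have e : a i * (s / a i - 1) = s - a i := by
        have := (ha i).ne'
        field_simp
      rw [e] at h'
      nlinarith [mul_le_mul_of_nonneg_right h' (sq_nonneg (y i))]
    have := Finset.sum_le_sum fun i (_ : i ∈ Finset.univ) => hle i
    rw [Finset.sum_sub_distrib, ← Finset.mul_sum, ← Finset.mul_sum, hy, hay] at this
    linarith
  -- tangent line at `s` of the concave function `log a`
  have h2 : ∑ i, Real.log (a i) * y i ^ 2 ≤ r ^ 2 * Real.log s := by
    have hle : ∀ i, Real.log (a i) * y i ^ 2
        ≤ (Real.log s - 1) * y i ^ 2 + s⁻¹ * (a i * y i ^ 2) := by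
      intro i
      have h := Real.log_le_sub_one_of_pos (div_pos (ha i) hs0)
      rw [Real.log_div (ha i).ne' hs0.ne', div_eq_mul_inv] at h
      nlinarith [mul_le_mul_of_nonneg_right h (sq_nonneg (y i))]
    have := Finset.sum_le_sum fun i (_ : i ∈ Finset.univ) => hle i
    rw [Finset.sum_add_distrib, ← Finset.mul_sum, ← Finset.mul_sum, hy, hay, ← hsr,
      inv_mul_cancel_left₀ hs0.ne'] at this
    linarith
  have hpow : ∀ z : ℝ, 0 < z → z ^ p = z ^ 2 * z ^ (p - 2) := by
    intro z hz
    rw [← Real.rpow_natCast z 2, ← Real.rpow_add hz]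
    congr 1
    push_cast
    ring
  rw [hpow t ht, hpow r hr]
  nlinarith [mul_le_mul_of_nonneg_right h1 (Real.rpow_pos_of_pos ht (p - 2)).le,
    mul_le_mul_of_nonneg_right h2 (Real.rpow_pos_of_pos hr (p - 2)).le]

lemma rpow_sub_mul_log_pos {p r t : ℝ} (hp : 0 < p) (hr : 0 < r) (ht : 0 < t) (hne : t ≠ r) :
    0 < (t ^ p - r ^ p) * Real.log (t ^ 2 / r ^ 2) := by
  rcases lt_or_gt_of_ne hne with h | h
  · refine mul_pos_of_neg_of_neg (sub_neg.2 (Real.rpow_lt_rpow ht.le h hp)) ?_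
    exact Real.log_neg (by positivity) ((div_lt_one (by positivity)).2 (by gcongr))
  · refine mul_pos (sub_pos.2 (Real.rpow_lt_rpow hr.le h hp)) ?_
    exact Real.log_pos ((one_lt_div (by positivity)).2 (by gcongr))

lemma gap_nonneg {ι : Type*} [Fintype ι] {p r t : ℝ} (hp : 0 < p) (hr : 0 < r) (ht : 0 < t)
    (a y : ι → ℝ) (ha : ∀ i, 0 < a i) (hy : ∑ i, y i ^ 2 = r ^ 2)
    (hay : ∑ i, a i * y i ^ 2 = t ^ 2) :
    0 ≤ (∑ i, Real.log (a i) * (a i * y i ^ 2)) * t ^ (p - 2)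
        - (∑ i, Real.log (a i) * y i ^ 2) * r ^ (p - 2) := by
  refine le_trans ?_ (gap_lower_bound hr ht a y ha hy hay)
  by_cases h : t = r
  · simp [h]
  · exact (rpow_sub_mul_log_pos hp hr ht h).le

/-- The equality case: equality forces `t = r`, after which the integrand is a positive multiple
of `∑ (a i - 1) * log (a i) * y i ^ 2`. -/
lemma gap_eq_zero {ι : Type*} [Fintype ι] {p r t : ℝ} (hp : 0 < p) (hr : 0 < r) (ht : 0 < t)
    (a y : ι → ℝ) (ha : ∀ i, 0 < a i) (hy : ∑ i, y i ^ 2 = r ^ 2)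
    (hay : ∑ i, a i * y i ^ 2 = t ^ 2)
    (h0 : (∑ i, Real.log (a i) * (a i * y i ^ 2)) * t ^ (p - 2)
        - (∑ i, Real.log (a i) * y i ^ 2) * r ^ (p - 2) = 0) (i : ι) (hi : a i ≠ 1) :
    y i = 0 := by
  have htr : t = r := by
    by_contra h
    exact absurd (gap_lower_bound hr ht a y ha hy hay)
      (by rw [h0, not_le]; exact rpow_sub_mul_log_pos hp hr ht h)
  rw [htr, ← sub_mul, ← Finset.sum_sub_distrib] at h0
  have hsum := (mul_eq_zero.1 h0).resolve_right (Real.rpow_pos_of_pos hr _).ne'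
  have hpos : ∀ j, a j ≠ 1 → 0 < (a j - 1) * Real.log (a j) := by
    intro j hj
    rcases lt_or_gt_of_ne hj with h | h
    · exact mul_pos_of_neg_of_neg (by linarith) (Real.log_neg (ha j) h)
    · exact mul_pos (by linarith) (Real.log_pos h)
  have hnn : ∀ j ∈ Finset.univ, 0 ≤ Real.log (a j) * (a j * y j ^ 2) - Real.log (a j) * y j ^ 2 := by
    intro j _
    have e : Real.log (a j) * (a j * y j ^ 2) - Real.log (a j) * y j ^ 2
        = (a j - 1) * Real.log (a j) * y j ^ 2 := by ring
    rw [e]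
    by_cases hj : a j = 1
    · simp [hj]
    · exact mul_nonneg (hpos j hj).le (sq_nonneg _)
  have hz := (Finset.sum_eq_zero_iff_of_nonneg hnn).1 hsum i (Finset.mem_univ i)
  have hz' : (a i - 1) * Real.log (a i) * y i ^ 2 = 0 := by linarith
  exact pow_eq_zero_iff (two_ne_zero) |>.1 ((mul_eq_zero.1 hz').resolve_left (hpos i hi).ne')

/-- Spectral decomposition of `Sᵀ S`: an orthonormal basis `b` in which `S` has orthogonal images,
with squared singular values `a`. -/
lemma exists_singular_basis {n : ℕ}
    (S : EuclideanSpace ℝ (Fin n) ≃ₗ[ℝ] EuclideanSpace ℝ (Fin n))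
    (hdet : LinearMap.det (S : EuclideanSpace ℝ (Fin n) →ₗ[ℝ] EuclideanSpace ℝ (Fin n)) = 1) :
    ∃ (b : OrthonormalBasis (Fin n) ℝ (EuclideanSpace ℝ (Fin n))) (a : Fin n → ℝ),
      (∀ i, 0 < a i) ∧ ∏ i, a i = 1 ∧
      ∀ i x, inner ℝ (S (b i)) (S x) = a i * inner ℝ (b i) x := by
  set L := S.toLinearMap with hL
  have hT : (L.adjoint * L).IsSymmetric := L.isSymmetric_adjoint_mul_self
  have hn : Module.finrank ℝ (EuclideanSpace ℝ (Fin n)) = n := finrank_euclideanSpace_fin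
  have hin : ∀ i x, inner ℝ (S (hT.eigenvectorBasis hn i)) (S x)
      = hT.eigenvalues hn i * inner ℝ (hT.eigenvectorBasis hn i) x := by
    intro i x
    have h1 := L.adjoint_inner_left x (L (hT.eigenvectorBasis hn i))
    have h2 := hT.apply_eigenvectorBasis hn i
    rw [Module.End.mul_apply] at h2
    rw [h2, inner_smul_left] at h1
    exact h1.symm
  refine ⟨hT.eigenvectorBasis hn, hT.eigenvalues hn, fun i => ?_, ?_, hin⟩
  · have h := hin i (hT.eigenvectorBasis hn i)
    rw [real_inner_self_eq_norm_sq, real_inner_self_eq_norm_sq,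
      (hT.eigenvectorBasis hn).orthonormal.1 i] at h
    have hne : S (hT.eigenvectorBasis hn i) ≠ 0 := by
      rw [Ne, S.map_eq_zero_iff]
      exact (hT.eigenvectorBasis hn).orthonormal.ne_zero i
    have := norm_pos_iff.2 hne
    nlinarith
  · have h := hT.det_eq_prod_eigenvalues hn
    have hadj : LinearMap.det L.adjoint = LinearMap.det L := by
      have e := LinearMap.toMatrix_adjoint (EuclideanSpace.basisFun (Fin n) ℝ)
        (EuclideanSpace.basisFun (Fin n) ℝ) L
      rw [← LinearMap.det_toMatrix (EuclideanSpace.basisFun (Fin n) ℝ).toBasis, e,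
        Matrix.det_conjTranspose, LinearMap.det_toMatrix]
      simp
    rw [map_mul, hadj, hdet] at h
    simpa using h.symm

/-- Let `0 < p < 4`, let `μ` be a Borel probability measure on `ℝⁿ`
(with `∫‖x‖^{p-2}dμ` finite and nonzero, both before and after pushing forward),
and let `S ∈ SL_n(ℝ)`. If both `Cov_p(μ)` and `Cov_p(S_*μ)` are positive multiples of
the identity, then `S` is orthogonal (it preserves the Euclidean norm). -/
theorem stmt_9 (n : ℕ) (p : ℝ) (hp0 : 0 < p) (hp4 : p < 4)
    (μ : Measure (EuclideanSpace ℝ (Fin n))) [IsProbabilityMeasure μ]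
    (S : EuclideanSpace ℝ (Fin n) ≃ₗ[ℝ] EuclideanSpace ℝ (Fin n))
    -- S has determinant one
    (hdet : LinearMap.det (S : EuclideanSpace ℝ (Fin n) →ₗ[ℝ] EuclideanSpace ℝ (Fin n)) = 1)
    -- ∫ ‖x‖^{p-2} is finite and nonzero for μ and S_*μ
    (hint : Integrable (fun x => ‖x‖ ^ (p - 2)) μ)
    (hne : (∫ x, ‖x‖ ^ (p - 2) ∂μ) ≠ 0)
    (hintS : Integrable (fun x => ‖x‖ ^ (p - 2)) (Measure.map (fun x => S x) μ))
    (hneS : (∫ x, ‖x‖ ^ (p - 2) ∂(Measure.map (fun x => S x) μ)) ≠ 0)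
    -- Cov_p(μ) is a positive multiple of the identity
    (hμ : ∃ κ : ℝ, 0 < κ ∧ ∀ i j : Fin n,
      (∫ x, x i * x j * ‖x‖ ^ (p - 2) ∂μ) = if i = j then κ else 0)
    -- Cov_p(S_*μ) is a positive multiple of the identity
    (hSμ : ∃ κ : ℝ, 0 < κ ∧ ∀ i j : Fin n,
      (∫ x, x i * x j * ‖x‖ ^ (p - 2) ∂(Measure.map (fun x => S x) μ)) = if i = j then κ else 0) :
    ∀ x, ‖S x‖ = ‖x‖ := by
  obtain ⟨κ, hκ, hμ⟩ := hμ
  obtain ⟨κ', hκ', hSμ⟩ := hSμ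
  obtain ⟨b, a, ha, hprod, hin⟩ := exists_singular_basis S hdet
  have hlog : ∑ i, Real.log (a i) = 0 := by
    rw [← Real.log_prod (fun i _ => (ha i).ne'), hprod, Real.log_one]
  have hparse : ∀ x, ∑ i, inner ℝ (b i) x ^ 2 = ‖x‖ ^ 2 := by
    intro x
    rw [← real_inner_self_eq_norm_sq, ← b.sum_inner_mul_inner x x]
    exact Finset.sum_congr rfl fun i _ => by rw [real_inner_comm, sq]
  have hparseS : ∀ x, ∑ i, a i * inner ℝ (b i) x ^ 2 = ‖S x‖ ^ 2 := by
    intro x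
    have h : S x = ∑ i, inner ℝ (b i) x • S (b i) := by
      conv_lhs => rw [← b.sum_repr' x]
      simp
    rw [← real_inner_self_eq_norm_sq]
    conv_rhs => rw [h, sum_inner]
    refine Finset.sum_congr rfl fun i _ => ?_
    rw [← h, real_inner_smul_left, hin]
    ring
  have hSm : Measurable fun x => S x :=
    (LinearMap.continuous_of_finiteDimensional S.toLinearMap).measurable
  have hI : ∀ i, Integrable (fun x => inner ℝ (b i) x ^ 2 * ‖x‖ ^ (p - 2)) μ ∧
      ∫ x, inner ℝ (b i) x ^ 2 * ‖x‖ ^ (p - 2) ∂μ = κ := by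
    intro i
    have h := integral_inner_mul_inner hκ μ hμ (b i) (b i)
    rw [real_inner_self_eq_norm_sq, b.orthonormal.1 i] at h
    simpa [← sq] using h
  -- pairing `S_* μ` with `S (b i)` gives `a i ^ 2 * ⟪b i, x⟫ ^ 2` and total mass `κ' * a i`
  have hIS : ∀ i, Integrable (fun x => a i * inner ℝ (b i) x ^ 2 * ‖S x‖ ^ (p - 2)) μ ∧
      ∫ x, a i * inner ℝ (b i) x ^ 2 * ‖S x‖ ^ (p - 2) ∂μ = κ' := by
    intro i
    obtain ⟨h1, h2⟩ := integral_inner_mul_inner hκ' _ hSμ (S (b i)) (S (b i))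
    rw [integral_map hSm.aemeasurable h1.aestronglyMeasurable] at h2
    have h1 := h1.comp_measurable hSm
    have e : (fun x => a i * inner ℝ (b i) x ^ 2 * ‖S x‖ ^ (p - 2)) =
        fun x => (a i)⁻¹ * (inner ℝ (S (b i)) (S x) * inner ℝ (S (b i)) (S x)
          * ‖S x‖ ^ (p - 2)) := by
      funext x
      have := (ha i).ne'
      rw [hin]
      field_simp
    rw [e]
    refine ⟨h1.const_mul _, ?_⟩
    rw [integral_const_mul, h2, hin, real_inner_self_eq_norm_sq, b.orthonormal.1 i]
    have := (ha i).ne'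
    field_simp
  set F : EuclideanSpace ℝ (Fin n) → ℝ := fun x =>
    (∑ i, Real.log (a i) * (a i * inner ℝ (b i) x ^ 2)) * ‖S x‖ ^ (p - 2)
      - (∑ i, Real.log (a i) * inner ℝ (b i) x ^ 2) * ‖x‖ ^ (p - 2) with hF
  have hFe : F = fun x => (∑ i, Real.log (a i) * (a i * inner ℝ (b i) x ^ 2 * ‖S x‖ ^ (p - 2)))
      - ∑ i, Real.log (a i) * (inner ℝ (b i) x ^ 2 * ‖x‖ ^ (p - 2)) := by
    funext x
    simp only [hF, Finset.sum_mul, mul_assoc]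
  have hi1 : ∀ i ∈ Finset.univ, Integrable (fun x =>
      Real.log (a i) * (a i * inner ℝ (b i) x ^ 2 * ‖S x‖ ^ (p - 2))) μ :=
    fun i _ => (hIS i).1.const_mul _
  have hi2 : ∀ i ∈ Finset.univ, Integrable (fun x =>
      Real.log (a i) * (inner ℝ (b i) x ^ 2 * ‖x‖ ^ (p - 2))) μ :=
    fun i _ => (hI i).1.const_mul _
  have hFint : Integrable F μ := by
    rw [hFe]
    exact (integrable_finsetSum _ hi1).sub (integrable_finsetSum _ hi2)
  have hFzero : ∫ x, F x ∂μ = 0 := by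
    rw [hFe, integral_sub (integrable_finsetSum _ hi1) (integrable_finsetSum _ hi2),
      integral_finsetSum _ hi1, integral_finsetSum _ hi2]
    simp only [integral_const_mul, (hI _).2, (hIS _).2, ← Finset.sum_mul, hlog]
    ring
  have hFnn : ∀ x, 0 ≤ F x := by
    intro x
    by_cases hx : x = 0
    · simp [hF, hx]
    · exact gap_nonneg hp0 (norm_pos_iff.2 hx) (norm_pos_iff.2 (by simpa using hx)) a _ ha
        (hparse x) (hparseS x)
  have hFae : F =ᵐ[μ] 0 := (integral_eq_zero_iff_of_nonneg hFnn hFint).1 hFzero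
  have hone : ∀ i, a i = 1 := by
    intro i
    by_contra hi
    have hz : (fun x => inner ℝ (b i) x ^ 2 * ‖x‖ ^ (p - 2)) =ᵐ[μ] 0 := by
      filter_upwards [hFae] with x hx0
      by_cases hx : x = 0
      · simp [hx]
      · have := gap_eq_zero hp0 (norm_pos_iff.2 hx) (norm_pos_iff.2 (by simpa using hx)) a _ ha
          (hparse x) (hparseS x) hx0 i hi
        simp [this]
    have := (hI i).2
    rw [integral_congr_ae hz] at this
    simp at this
    exact hκ.ne this
  intro x
  have h := hparseS x
  simp only [hone, one_mul, hparse] at h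
  exact ((sq_eq_sq₀ (norm_nonneg _) (norm_nonneg _)).1 h).symm
end

section
/- Let 0 < p < 4 and let μ be an L^p-isotropic Borel probability measure on ℝⁿ (in particular, μ is centered and Z_{p,μ} = ∫|x|^{p-2} dμ is finite and nonzero). Then for T ∈ GL_n(ℝ), the push-forward T_*μ is L^p-isotropic if and only if T is an orthogonal matrix. -/
open MeasureTheory

/-- `μ` is centered and Lᵖ-isotropic: `∫ x dμ = 0`, `Z_{p,μ} = ∫ ‖x‖^{p-2} dμ` is finite
and nonzero, and `Cov_p(μ) = Z_{p,μ}·Id`. -/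
def IsLpIsotropic {n : ℕ} (p : ℝ) (μ : Measure (EuclideanSpace ℝ (Fin n))) : Prop :=
  (∫ x, x ∂μ) = 0 ∧
  Integrable (fun x => ‖x‖ ^ (p - 2)) μ ∧ (∫ x, ‖x‖ ^ (p - 2) ∂μ) ≠ 0 ∧
  ∀ i j : Fin n, (∫ x, x i * x j * ‖x‖ ^ (p - 2) ∂μ)
      = if i = j then ∫ x, ‖x‖ ^ (p - 2) ∂μ else 0

/-!
Write `Z = ∫ ‖x‖^(p-2) dμ` and `Z' = ∫ ‖T x‖^(p-2) dμ`. Isotropy of `μ` is equivalent to the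
bilinear identity `∫ ⟪x, u⟫ ⟪x, v⟫ ‖x‖^(p-2) dμ = Z ⟪u, v⟫` (`integral_inner_mul_inner`), which is
visibly preserved by linear isometries.

Conversely, let `M` and `m` be the largest and smallest singular values of `T`, attained at unit
eigenvectors `v` and `u` of `T* T` (`exists_extremal_eigenvectors`). Testing isotropy of `T_* μ`
against `T v` and `T u` gives
`Z' = M² ∫ ⟪x, v⟫² ‖T x‖^(p-2) dμ = m² ∫ ⟪x, u⟫² ‖T x‖^(p-2) dμ`.
If `c ‖x‖^(p-2) ≤ ‖T x‖^(p-2) ≤ C ‖x‖^(p-2)`, isotropy of `μ` turns this into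
`M² c Z ≤ Z' ≤ m² C Z`, so `M² c ≤ m² C`. For `p ≥ 2` take `c = m^(p-2)`, `C = M^(p-2)`, which yields
`M^(4-p) ≤ m^(4-p)`; for `p ≤ 2` take `c = M^(p-2)`, `C = m^(p-2)`, which yields `M^p ≤ m^p`.
Either way `M = m`, since `0 < p < 4`, so `T` is a multiple of an isometry. Then `Z' = M^p Z` by
isotropy of `T_* μ`, whereas `Z' = M^(p-2) Z` by definition, so `M = 1`.
-/

/-! ### The bilinear form of isotropy -/

section Isotropic

variable {n : ℕ} {p : ℝ} {μ : Measure (EuclideanSpace ℝ (Fin n))}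

/-- The diagonal entries of `Cov_p(μ)` are nonzero, whereas the Bochner integral of a
non-integrable function is zero. So each `x i ^ 2 * ‖x‖ ^ (p - 2)` is integrable, and so is
their sum over `i`. -/
lemma IsLpIsotropic.integrable_moment (h : IsLpIsotropic p μ) :
    Integrable (fun x => ‖x‖ ^ 2 * ‖x‖ ^ (p - 2)) μ := by
  obtain ⟨-, -, hZ, hc⟩ := h
  have hi : ∀ i : Fin n, Integrable (fun x => x i * x i * ‖x‖ ^ (p - 2)) μ := by
    intro i
    by_contra hn
    have h1 := hc i i
    rw [integral_undef hn, if_pos rfl] at h1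
    exact hZ h1.symm
  have h2 := integrable_finsetSum Finset.univ (fun i _ => hi i)
  refine h2.congr (Filter.Eventually.of_forall fun x => ?_)
  simp only [EuclideanSpace.real_norm_sq_eq, Finset.sum_mul]
  exact Finset.sum_congr rfl fun i _ => by ring

lemma IsLpIsotropic.integrable_inner (h : IsLpIsotropic p μ) (u v : EuclideanSpace ℝ (Fin n)) :
    Integrable (fun x => inner ℝ x u * inner ℝ x v * ‖x‖ ^ (p - 2)) μ := by
  refine (h.integrable_moment.const_mul (‖u‖ * ‖v‖)).mono' ?_ ?_
  · have : Measurable (fun x : EuclideanSpace ℝ (Fin n) =>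
        inner ℝ x u * inner ℝ x v * ‖x‖ ^ (p - 2)) :=
      ((by fun_prop : Continuous fun x : EuclideanSpace ℝ (Fin n) =>
        inner ℝ x u * inner ℝ x v).measurable).mul (measurable_norm.pow_const _)
    exact this.aestronglyMeasurable
  · refine Filter.Eventually.of_forall fun x => ?_
    have h1 := abs_real_inner_le_norm x u
    have h2 := abs_real_inner_le_norm x v
    have h3 : 0 ≤ ‖x‖ ^ (p - 2) := by positivity
    rw [Real.norm_eq_abs, abs_mul, abs_mul, abs_of_nonneg h3]
    calc _ ≤ (‖x‖ * ‖u‖) * (‖x‖ * ‖v‖) * ‖x‖ ^ (p - 2) := by gcongr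
      _ = _ := by ring

/-- Basis-free form of `Cov_p(μ) = Z_{p,μ}·Id`. -/
lemma IsLpIsotropic.integral_inner_mul_inner (h : IsLpIsotropic p μ)
    (u v : EuclideanSpace ℝ (Fin n)) :
    ∫ x, inner ℝ x u * inner ℝ x v * ‖x‖ ^ (p - 2) ∂μ
      = (∫ x, ‖x‖ ^ (p - 2) ∂μ) * inner ℝ u v := by
  have hint : ∀ i j : Fin n, Integrable (fun x => x i * x j * ‖x‖ ^ (p - 2)) μ := by
    intro i j
    simpa [EuclideanSpace.inner_single_right] using
      h.integrable_inner (EuclideanSpace.single i 1) (EuclideanSpace.single j 1)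
  have hexp : ∀ x : EuclideanSpace ℝ (Fin n), inner ℝ x u * inner ℝ x v * ‖x‖ ^ (p - 2)
      = ∑ i, ∑ j, u i * v j * (x i * x j * ‖x‖ ^ (p - 2)) := by
    intro x
    simp only [PiLp.inner_apply, RCLike.inner_apply, conj_trivial]
    rw [Finset.sum_mul_sum, Finset.sum_mul]
    simp_rw [Finset.sum_mul]
    refine Finset.sum_congr rfl fun i _ => Finset.sum_congr rfl fun j _ => ?_
    ring
  simp_rw [hexp]
  rw [integral_finsetSum _ fun i _ => integrable_finsetSum _ fun j _ => (hint i j).const_mul _]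
  simp_rw [integral_finsetSum Finset.univ fun j _ => (hint _ j).const_mul _, integral_const_mul,
    h.2.2.2, PiLp.inner_apply, RCLike.inner_apply, conj_trivial, Finset.mul_sum]
  refine Finset.sum_congr rfl fun i _ => ?_
  simp
  ring

lemma IsLpIsotropic.normalization_pos (h : IsLpIsotropic p μ) : 0 < ∫ x, ‖x‖ ^ (p - 2) ∂μ :=
  lt_of_le_of_ne (integral_nonneg fun x => by positivity) h.2.2.1.symm

end Isotropic

/-! ### Extremal singular values and comparison of weights -/

/-- The extremal singular values of `T`, as `‖T u‖` and `‖T v‖` for unit eigenvectors `u`, `v` of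
`T* T`; the eigenvector equation is stated in weak form. -/
lemma exists_extremal_eigenvectors {n : ℕ} (hn : 0 < n)
    (T : EuclideanSpace ℝ (Fin n) ≃ₗ[ℝ] EuclideanSpace ℝ (Fin n)) :
    ∃ u v : EuclideanSpace ℝ (Fin n), ‖u‖ = 1 ∧ ‖v‖ = 1 ∧
      (∀ x, inner ℝ (T x) (T u) = ‖T u‖ ^ 2 * inner ℝ x u) ∧
      (∀ x, inner ℝ (T x) (T v) = ‖T v‖ ^ 2 * inner ℝ x v) ∧
      (∀ x, ‖T u‖ * ‖x‖ ≤ ‖T x‖) ∧ (∀ x, ‖T x‖ ≤ ‖T v‖ * ‖x‖) := by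
  have : Nonempty (Fin n) := ⟨⟨0, hn⟩⟩
  let S : EuclideanSpace ℝ (Fin n) →ₗ[ℝ] EuclideanSpace ℝ (Fin n) := T.toLinearMap
  have hS : (LinearMap.adjoint S * S).IsSymmetric := LinearMap.isSymmetric_adjoint_mul_self S
  have hdim : Module.finrank ℝ (EuclideanSpace ℝ (Fin n)) = n := by simp
  let b := hS.eigenvectorBasis hdim
  have hb1 : ∀ i, ‖b i‖ = 1 := fun i => b.orthonormal.1 i
  have h0 : ∀ i x, inner ℝ (T x) (T (b i)) = hS.eigenvalues hdim i * inner ℝ x (b i) := by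
    intro i x
    have h1 := hS.apply_eigenvectorBasis hdim i
    have h2 : inner ℝ x ((LinearMap.adjoint S * S) (b i)) = inner ℝ (T x) (T (b i)) := by
      rw [Module.End.mul_apply, LinearMap.adjoint_inner_right]
      rfl
    rw [← h2, h1, inner_smul_right]
    rfl
  have hev : ∀ i, hS.eigenvalues hdim i = ‖T (b i)‖ ^ 2 := by
    intro i
    have := h0 i (b i)
    rw [real_inner_self_eq_norm_sq, real_inner_self_eq_norm_sq, hb1] at this
    linarith
  have hw : ∀ i x, inner ℝ (T x) (T (b i)) = ‖T (b i)‖ ^ 2 * inner ℝ x (b i) := by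
    intro i x
    rw [h0, hev]
  have hsum : ∀ x, ‖T x‖ ^ 2 = ∑ i, ‖T (b i)‖ ^ 2 * inner ℝ x (b i) ^ 2 := by
    intro x
    have h1 : inner ℝ ((LinearMap.adjoint S * S) x) x = ‖T x‖ ^ 2 := by
      rw [Module.End.mul_apply, LinearMap.adjoint_inner_left, ← real_inner_self_eq_norm_sq]
      rfl
    rw [← h1, ← b.sum_inner_mul_inner]
    refine Finset.sum_congr rfl fun i _ => ?_
    have h2 : inner ℝ ((LinearMap.adjoint S * S) x) (b i) = inner ℝ (T x) (T (b i)) := by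
      rw [Module.End.mul_apply, LinearMap.adjoint_inner_left]
      rfl
    rw [h2, hw, real_inner_comm x (b i)]
    ring
  have hnorm : ∀ x, ‖x‖ ^ 2 = ∑ i, inner ℝ x (b i) ^ 2 := by
    intro x
    rw [← real_inner_self_eq_norm_sq, ← b.sum_inner_mul_inner]
    refine Finset.sum_congr rfl fun i _ => ?_
    rw [real_inner_comm x (b i), sq]
  obtain ⟨i, hi⟩ := Finite.exists_min fun i => ‖T (b i)‖
  obtain ⟨j, hj⟩ := Finite.exists_max fun i => ‖T (b i)‖
  refine ⟨b i, b j, hb1 i, hb1 j, hw i, hw j, fun x => ?_, fun x => ?_⟩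
  · refine (sq_le_sq₀ (by positivity) (by positivity)).1 ?_
    rw [mul_pow, hsum x, hnorm x, Finset.mul_sum]
    refine Finset.sum_le_sum fun k _ => ?_
    have := hi k
    gcongr
  · refine (sq_le_sq₀ (by positivity) (by positivity)).1 ?_
    rw [mul_pow, hsum x, hnorm x, Finset.mul_sum]
    refine Finset.sum_le_sum fun k _ => ?_
    have := hj k
    gcongr

/-- Comparison of the weights for a nonnegative exponent. -/
lemma rpow_bounds_of_nonneg {m M r s q : ℝ} (hm : 0 < m) (hM : 0 < M) (hr : 0 ≤ r)
    (h1 : m * r ≤ s) (h2 : s ≤ M * r) (hq : 0 ≤ q) :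
    m ^ q * r ^ q ≤ s ^ q ∧ s ^ q ≤ M ^ q * r ^ q := by
  rw [← Real.mul_rpow hm.le hr, ← Real.mul_rpow hM.le hr]
  have hs : 0 ≤ s := le_trans (by positivity) h1
  exact ⟨Real.rpow_le_rpow (by positivity) h1 hq, Real.rpow_le_rpow hs h2 hq⟩

/-- Comparison of the weights for a nonpositive exponent. For `r = 0` also `s = 0`, and the
convention for `0 ^ q` makes all terms zero unless `q = 0`. -/
lemma rpow_bounds_of_nonpos {m M r s q : ℝ} (hm : 0 < m) (hM : 0 < M) (hr : 0 ≤ r)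
    (h1 : m * r ≤ s) (h2 : s ≤ M * r) (hq : q ≤ 0) :
    M ^ q * r ^ q ≤ s ^ q ∧ s ^ q ≤ m ^ q * r ^ q := by
  rw [← Real.mul_rpow hm.le hr, ← Real.mul_rpow hM.le hr]
  rcases hr.eq_or_lt with rfl | hr
  · have : s = 0 := by linarith
    simp [this]
  · have hs : 0 < s := lt_of_lt_of_le (by positivity) h1
    exact ⟨Real.rpow_le_rpow_of_nonpos hs h2 hq,
      Real.rpow_le_rpow_of_nonpos (by positivity) h1 hq⟩

/-! ### Push-forward by a linear automorphism -/

section Linear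

variable {n : ℕ} {p : ℝ} {μ : Measure (EuclideanSpace ℝ (Fin n))}
  (T : EuclideanSpace ℝ (Fin n) ≃ₗ[ℝ] EuclideanSpace ℝ (Fin n))

lemma measurableEmbedding_linearEquiv : MeasurableEmbedding (fun x => T x) :=
  T.toContinuousLinearEquiv.toHomeomorph.measurableEmbedding

lemma map_integral_id (h : (∫ x, x ∂μ) = 0) : ∫ x, x ∂(Measure.map (fun x => T x) μ) = 0 := by
  rw [(measurableEmbedding_linearEquiv T).integral_map]
  have := T.toContinuousLinearEquiv.integral_comp_comm (μ := μ) (fun x => x)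
  rw [h, map_zero] at this
  exact this

lemma isLpIsotropic_map_of_isometry (h : IsLpIsotropic p μ) (hT : ∀ x, ‖T x‖ = ‖x‖) :
    IsLpIsotropic p (Measure.map (fun x => T x) μ) := by
  have hemb := measurableEmbedding_linearEquiv T
  let L : EuclideanSpace ℝ (Fin n) ≃ₗᵢ[ℝ] EuclideanSpace ℝ (Fin n) := ⟨T, hT⟩
  have hco : ∀ x i, (T x) i = inner ℝ x (L.symm (EuclideanSpace.single i 1)) := by
    intro x i
    rw [← L.inner_map_map, L.apply_symm_apply, EuclideanSpace.inner_single_right]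
    simp [L]
  refine ⟨map_integral_id T h.1, ?_, ?_, fun i j => ?_⟩
  · rw [hemb.integrable_map_iff]
    simpa [Function.comp_def, hT] using h.2.1
  · rw [hemb.integral_map]
    simpa [hT] using h.2.2.1
  · rw [hemb.integral_map, hemb.integral_map]
    simp_rw [hT, hco]
    rw [h.integral_inner_mul_inner, L.symm.inner_map_map, EuclideanSpace.inner_single_right]
    simp [eq_comm]

/-- Isotropy of `T_* μ` tested against `T w`, for `w` an eigenvector of `T* T`. -/
lemma normalization_map_eq (h' : IsLpIsotropic p (Measure.map (fun x => T x) μ))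
    {w : EuclideanSpace ℝ (Fin n)} (hw : w ≠ 0)
    (he : ∀ x, inner ℝ (T x) (T w) = ‖T w‖ ^ 2 * inner ℝ x w) :
    Integrable (fun x => inner ℝ x w ^ 2 * ‖T x‖ ^ (p - 2)) μ ∧
    ∫ x, ‖T x‖ ^ (p - 2) ∂μ = ‖T w‖ ^ 2 * ∫ x, inner ℝ x w ^ 2 * ‖T x‖ ^ (p - 2) ∂μ := by
  have hemb := measurableEmbedding_linearEquiv T
  have hTw : 0 < ‖T w‖ := norm_pos_iff.2 (by simpa using hw)
  have hfun : ∀ x, inner ℝ (T x) (T w) * inner ℝ (T x) (T w) * ‖T x‖ ^ (p - 2)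
      = ‖T w‖ ^ 4 * (inner ℝ x w ^ 2 * ‖T x‖ ^ (p - 2)) := by
    intro x
    rw [he]
    ring
  constructor
  · have h1 := h'.integrable_inner (T w) (T w)
    rw [hemb.integrable_map_iff] at h1
    simp only [Function.comp_def, hfun] at h1
    exact (integrable_const_mul_iff (IsUnit.mk0 _ (by positivity)) _).1 h1
  · have h1 := h'.integral_inner_mul_inner (T w) (T w)
    rw [hemb.integral_map, hemb.integral_map] at h1
    simp_rw [hfun] at h1
    rw [integral_const_mul, real_inner_self_eq_norm_sq] at h1
    have h2 : ‖T w‖ ^ 2 ≠ 0 := by positivity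
    apply mul_right_cancel₀ h2
    rw [← h1]
    ring

lemma integral_sq_inner (h : IsLpIsotropic p μ) {w : EuclideanSpace ℝ (Fin n)} (hw : ‖w‖ = 1) :
    Integrable (fun x => inner ℝ x w ^ 2 * ‖x‖ ^ (p - 2)) μ ∧
    ∫ x, inner ℝ x w ^ 2 * ‖x‖ ^ (p - 2) ∂μ = ∫ x, ‖x‖ ^ (p - 2) ∂μ := by
  have h1 := h.integrable_inner w w
  have h2 := h.integral_inner_mul_inner w w
  rw [real_inner_self_eq_norm_sq, hw] at h2
  simp only [← sq] at h1 h2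
  exact ⟨h1, by simpa using h2⟩

lemma lower_bound (h : IsLpIsotropic p μ) (h' : IsLpIsotropic p (Measure.map (fun x => T x) μ))
    {w : EuclideanSpace ℝ (Fin n)} (hw : ‖w‖ = 1)
    (he : ∀ x, inner ℝ (T x) (T w) = ‖T w‖ ^ 2 * inner ℝ x w) {c : ℝ}
    (hc : ∀ x, c * ‖x‖ ^ (p - 2) ≤ ‖T x‖ ^ (p - 2)) :
    ‖T w‖ ^ 2 * c * ∫ x, ‖x‖ ^ (p - 2) ∂μ ≤ ∫ x, ‖T x‖ ^ (p - 2) ∂μ := by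
  obtain ⟨hi', hZ'⟩ := normalization_map_eq T h' (norm_ne_zero_iff.1 (by simp [hw])) he
  obtain ⟨hi, hZ⟩ := integral_sq_inner h hw
  rw [hZ', ← hZ, mul_assoc, ← integral_const_mul]
  refine mul_le_mul_of_nonneg_left (integral_mono (hi.const_mul c) hi' fun x => ?_) (sq_nonneg _)
  have := mul_le_mul_of_nonneg_left (hc x) (sq_nonneg (inner ℝ x w))
  simp only
  linarith

lemma upper_bound (h : IsLpIsotropic p μ) (h' : IsLpIsotropic p (Measure.map (fun x => T x) μ))
    {w : EuclideanSpace ℝ (Fin n)} (hw : ‖w‖ = 1)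
    (he : ∀ x, inner ℝ (T x) (T w) = ‖T w‖ ^ 2 * inner ℝ x w) {C : ℝ}
    (hC : ∀ x, ‖T x‖ ^ (p - 2) ≤ C * ‖x‖ ^ (p - 2)) :
    ∫ x, ‖T x‖ ^ (p - 2) ∂μ ≤ ‖T w‖ ^ 2 * C * ∫ x, ‖x‖ ^ (p - 2) ∂μ := by
  obtain ⟨hi', hZ'⟩ := normalization_map_eq T h' (norm_ne_zero_iff.1 (by simp [hw])) he
  obtain ⟨hi, hZ⟩ := integral_sq_inner h hw
  rw [hZ', ← hZ, mul_assoc, ← integral_const_mul C]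
  refine mul_le_mul_of_nonneg_left (integral_mono hi' (hi.const_mul C) fun x => ?_) (sq_nonneg _)
  have := mul_le_mul_of_nonneg_left (hC x) (sq_nonneg (inner ℝ x w))
  simp only
  linarith

lemma isometry_of_isLpIsotropic_map (hp0 : 0 < p) (hp4 : p < 4) (h : IsLpIsotropic p μ)
    (h' : IsLpIsotropic p (Measure.map (fun x => T x) μ)) (x : EuclideanSpace ℝ (Fin n)) :
    ‖T x‖ = ‖x‖ := by
  rcases Nat.eq_zero_or_pos n with rfl | hn
  · simp [Subsingleton.elim x 0]
  obtain ⟨u, v, hu, hv, heu, hev, hlo, hup⟩ := exists_extremal_eigenvectors hn T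
  have hZ := h.normalization_pos
  have hm : 0 < ‖T u‖ := norm_pos_iff.2 (by simpa using norm_ne_zero_iff.1 (by simp [hu]))
  have hM : 0 < ‖T v‖ := norm_pos_iff.2 (by simpa using norm_ne_zero_iff.1 (by simp [hv]))
  have hmM : ‖T u‖ ≤ ‖T v‖ := by simpa [hu] using hup u
  have hsplit : ∀ a : ℝ, 0 < a → ∀ e : ℝ, a ^ 2 * a ^ e = a ^ (2 + e) := by
    intro a ha e
    rw [Real.rpow_add ha, Real.rpow_two]
  have key : ‖T v‖ ≤ ‖T u‖ := by
    rcases le_total 0 (p - 2) with hq | hq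
    · have hb := fun x => rpow_bounds_of_nonneg hm hM (norm_nonneg x) (hlo x) (hup x) hq
      have h1 := (lower_bound T h h' hv hev fun x => (hb x).1).trans
        (upper_bound T h h' hu heu fun x => (hb x).2)
      have h2 := le_of_mul_le_mul_right h1 hZ
      have e : ∀ a : ℝ, 0 < a → a ^ 2 = a ^ (4 - p) * a ^ (p - 2) := by
        intro a ha
        rw [← Real.rpow_add ha, ← Real.rpow_two]
        congr 1
        ring
      rw [e _ hM, e _ hm] at h2
      have h3 : ‖T v‖ ^ (4 - p) ≤ ‖T u‖ ^ (4 - p) := by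
        have hpos : 0 < ‖T v‖ ^ (p - 2) * ‖T u‖ ^ (p - 2) := by positivity
        refine le_of_mul_le_mul_right ?_ hpos
        linarith
      exact (Real.rpow_le_rpow_iff hM.le hm.le (by linarith)).1 h3
    · have hb := fun x => rpow_bounds_of_nonpos hm hM (norm_nonneg x) (hlo x) (hup x) hq
      have h1 := (lower_bound T h h' hv hev fun x => (hb x).1).trans
        (upper_bound T h h' hu heu fun x => (hb x).2)
      have h2 := le_of_mul_le_mul_right h1 hZ
      rw [hsplit _ hM, hsplit _ hm] at h2
      exact (Real.rpow_le_rpow_iff hM.le hm.le (by linarith)).1 h2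
  have heq : ∀ x, ‖T x‖ = ‖T v‖ * ‖x‖ := fun x =>
    le_antisymm (hup x) ((mul_le_mul_of_nonneg_right key (norm_nonneg x)).trans (hlo x))
  have hpow : ∀ x, ‖T x‖ ^ (p - 2) = ‖T v‖ ^ (p - 2) * ‖x‖ ^ (p - 2) := by
    intro x
    rw [heq, Real.mul_rpow hM.le (norm_nonneg x)]
  -- `Z' = M² M^(p-2) Z` by isotropy, and `Z' = M^(p-2) Z` by homogeneity.
  have h1 := le_antisymm (lower_bound T h h' hv hev fun x => (hpow x).ge)
    (upper_bound T h h' hv hev fun x => (hpow x).le)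
  rw [integral_congr_ae (Filter.Eventually.of_forall hpow), integral_const_mul, mul_assoc] at h1
  have hpos : ‖T v‖ ^ (p - 2) * ∫ x, ‖x‖ ^ (p - 2) ∂μ ≠ 0 :=
    (mul_pos (Real.rpow_pos_of_pos hM _) hZ).ne'
  have h2 : ‖T v‖ ^ 2 = 1 := by
    apply mul_right_cancel₀ hpos
    rw [h1, one_mul]
  have h3 : ‖T v‖ = 1 := (pow_eq_one_iff_of_nonneg hM.le two_ne_zero).1 h2
  rw [heq, h3, one_mul]

end Linear

/-- Uniqueness of the Lᵖ-isotropic position, `0 < p < 4`: if `μ` is an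
Lᵖ-isotropic Borel probability measure on `ℝⁿ` and `T ∈ GL_n(ℝ)`, then `T_*μ` is
Lᵖ-isotropic if and only if `T` is orthogonal. -/
theorem stmt_10 (n : ℕ) (p : ℝ) (hp0 : 0 < p) (hp4 : p < 4)
    (μ : Measure (EuclideanSpace ℝ (Fin n))) [IsProbabilityMeasure μ]
    (hiso : IsLpIsotropic p μ)
    (T : EuclideanSpace ℝ (Fin n) ≃ₗ[ℝ] EuclideanSpace ℝ (Fin n)) :
    IsLpIsotropic p (Measure.map (fun x => T x) μ) ↔ (∀ x, ‖T x‖ = ‖x‖) :=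
  ⟨fun h' => isometry_of_isLpIsotropic_map T hp0 hp4 hiso h',
    fun hT => isLpIsotropic_map_of_isometry T hiso hT⟩
end

section
/- Let 0 < p < 4 and let μ be an L^p-isotropic Borel probability measure on ℝⁿ with ∫|x|^p dμ finite. Then for every S ∈ SL_n(ℝ) (det S = 1), ∫ |x|^p dμ(x) ≤ ∫ |x|^p d(S_*μ)(x) = ∫ |Sx|^p dμ(x). -/
/-!
Diagonalise `S* S` in an orthonormal eigenbasis `b` with eigenvalues `a i > 0`, so that
`‖S x‖² = ∑ a i ⟪b i, x⟫²` and `∏ a i = det (S* S) = 1`. Concavity of `log` with the weights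
`⟪b i, x⟫² / ‖x‖²`, followed by `1 + u ≤ exp u`, gives the pointwise bound
`‖x‖^p + (p/2) ‖x‖^(p-2) ∑ log (a i) ⟪b i, x⟫² ≤ ‖S x‖^p` (`pointwise_bound`).
Isotropy says that `∫ ⟪v, x⟫² ‖x‖^(p-2) dμ = Z` for every unit vector `v`
(`integral_inner_sq`), so the second term integrates to `(p/2) Z ∑ log (a i) = 0`.
-/

open MeasureTheory

open scoped RealInnerProductSpace

/-- The tangent-line bound at `t = 0` for the convex function
`t ↦ (∑ aᵢᵗ cᵢ) ^ (p/2)`, evaluated at `t = 1`, with `r² = ∑ cᵢ` and `N² = ∑ aᵢ cᵢ`. -/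
lemma pointwise_bound {n : ℕ} {p r N : ℝ} (hp : 0 < p) (hr : 0 < r) (hN : 0 < N)
    (a c : Fin n → ℝ) (ha : ∀ i, 0 < a i) (hc : ∀ i, 0 ≤ c i)
    (hcr : ∑ i, c i = r ^ 2) (hac : ∑ i, a i * c i = N ^ 2) :
    r ^ p + p / 2 * ∑ i, Real.log (a i) * (c i * r ^ (p - 2)) ≤ N ^ p := by
  have hlog : ∑ i, Real.log (a i) * c i ≤ r ^ 2 * (2 * Real.log (N / r)) := by
    have h := strictConcaveOn_log_Ioi.concaveOn.le_map_sum (t := Finset.univ)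
      (w := fun i => c i / r ^ 2) (p := a) (fun i _ => by have := hc i; positivity)
      (by rw [← Finset.sum_div, hcr, div_self (by positivity)]) (fun i _ => ha i)
    have e1 : ∑ i, (c i / r ^ 2) • Real.log (a i) = (∑ i, Real.log (a i) * c i) / r ^ 2 := by
      rw [Finset.sum_div]
      exact Finset.sum_congr rfl fun i _ => by simp only [smul_eq_mul]; ring
    have e2 : ∑ i, (c i / r ^ 2) • a i = (N / r) ^ 2 := by
      rw [div_pow, ← hac, Finset.sum_div]
      exact Finset.sum_congr rfl fun i _ => by simp only [smul_eq_mul]; ring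
    rw [e1, e2, Real.log_pow, div_le_iff₀ (by positivity)] at h
    push_cast at h
    linarith
  have hrp : r ^ p = r ^ (p - 2) * r ^ 2 := by
    rw [← Real.rpow_natCast r 2, ← Real.rpow_add hr]; norm_num
  have hNp : N ^ p = r ^ p * (N / r) ^ p := by
    rw [← Real.mul_rpow hr.le (by positivity), mul_div_cancel₀ _ hr.ne']
  have hexp : 1 + p * Real.log (N / r) ≤ (N / r) ^ p := by
    rw [Real.rpow_def_of_pos (by positivity)]
    linarith [Real.add_one_le_exp (Real.log (N / r) * p)]
  have hsum : ∑ i, Real.log (a i) * (c i * r ^ (p - 2))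
      = r ^ (p - 2) * ∑ i, Real.log (a i) * c i := by
    rw [Finset.mul_sum]
    exact Finset.sum_congr rfl fun i _ => by ring
  calc _ ≤ r ^ p + p / 2 * (r ^ (p - 2) * (r ^ 2 * (2 * Real.log (N / r)))) := by
        rw [hsum]; gcongr
    _ = r ^ p * (1 + p * Real.log (N / r)) := by rw [hrp]; ring
    _ ≤ N ^ p := by rw [hNp]; gcongr

/-- Spectral data of `S* S`. -/
lemma exists_spectral {n : ℕ}
    (S : EuclideanSpace ℝ (Fin n) ≃ₗ[ℝ] EuclideanSpace ℝ (Fin n))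
    (hdet : LinearMap.det (S : EuclideanSpace ℝ (Fin n) →ₗ[ℝ] EuclideanSpace ℝ (Fin n)) = 1) :
    ∃ (b : OrthonormalBasis (Fin n) ℝ (EuclideanSpace ℝ (Fin n))) (a : Fin n → ℝ),
      (∀ i, 0 < a i) ∧ ∏ i, a i = 1 ∧ ∀ x, ∑ i, a i * ⟪b i, x⟫ ^ 2 = ‖S x‖ ^ 2 := by
  set f : EuclideanSpace ℝ (Fin n) →ₗ[ℝ] EuclideanSpace ℝ (Fin n) := S.toLinearMap with hf
  have hT : (f.adjoint * f).IsSymmetric := f.isSymmetric_adjoint_mul_self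
  have hn : Module.finrank ℝ (EuclideanSpace ℝ (Fin n)) = n := by simp
  have key : ∀ i x, ⟪f (hT.eigenvectorBasis hn i), f x⟫
      = hT.eigenvalues hn i * ⟪hT.eigenvectorBasis hn i, x⟫ := by
    intro i x
    have h := hT.apply_eigenvectorBasis hn i
    rw [← LinearMap.adjoint_inner_left]
    change ⟪(f.adjoint * f) _, x⟫ = _
    rw [h, inner_smul_left]
    simp
  refine ⟨hT.eigenvectorBasis hn, hT.eigenvalues hn, fun i => ?_, ?_, fun x => ?_⟩
  · have h := key i (hT.eigenvectorBasis hn i)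
    rw [real_inner_self_eq_norm_sq, real_inner_self_eq_norm_sq,
      (hT.eigenvectorBasis hn).orthonormal.norm_eq_one] at h
    have hne : f (hT.eigenvectorBasis hn i) ≠ 0 := by
      simpa [hf] using (hT.eigenvectorBasis hn).orthonormal.ne_zero i
    have := norm_pos_iff.2 hne
    nlinarith
  · have h := hT.det_eq_prod_eigenvalues hn
    have h2 := LinearMap.normDet_sq f
    rw [LinearMap.normDet_eq_abs_det, hdet] at h2
    have h3 : LinearMap.det (f.adjoint * f) = 1 := by
      simpa using h2.symm
    rw [h3] at h
    simpa using h.symm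
  · change _ = ‖f x‖ ^ 2
    rw [← real_inner_self_eq_norm_sq]
    conv_rhs => rw [← (hT.eigenvectorBasis hn).sum_repr' x, map_sum, sum_inner]
    refine Finset.sum_congr rfl fun i _ => ?_
    rw [← map_sum, (hT.eigenvectorBasis hn).sum_repr' x, map_smul, inner_smul_left, key]
    simp only [conj_trivial]
    ring

lemma rpow_two_mul {p : ℝ} (hp : 0 < p) {r : ℝ} (hr : 0 ≤ r) :
    r ^ 2 * r ^ (p - 2) = r ^ p := by
  rcases hr.eq_or_lt with rfl | hr
  · simp [Real.zero_rpow hp.ne']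
  · rw [← Real.rpow_natCast r 2, ← Real.rpow_add hr]; norm_num

lemma integrable_coord {n : ℕ} {p : ℝ} (hp : 0 < p)
    (μ : Measure (EuclideanSpace ℝ (Fin n)))
    (hint : Integrable (fun x => ‖x‖ ^ p) μ) (i j : Fin n) :
    Integrable (fun x : EuclideanSpace ℝ (Fin n) => x i * x j * ‖x‖ ^ (p - 2)) μ := by
  refine hint.mono' (by fun_prop) (Filter.Eventually.of_forall fun x => ?_)
  rw [← rpow_two_mul hp (norm_nonneg x), norm_mul, norm_mul, sq,
    Real.norm_of_nonneg (Real.rpow_nonneg (norm_nonneg x) _)]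
  gcongr <;> exact PiLp.norm_apply_le x _

lemma inner_sq_expand {n : ℕ} (p : ℝ) (v x : EuclideanSpace ℝ (Fin n)) :
    ⟪v, x⟫ ^ 2 * ‖x‖ ^ (p - 2)
      = ∑ i, ∑ j, v i * v j * (x i * x j * ‖x‖ ^ (p - 2)) := by
  rw [PiLp.inner_apply, sq, Finset.sum_mul_sum, Finset.sum_mul]
  refine Finset.sum_congr rfl fun i _ => ?_
  rw [Finset.sum_mul]
  refine Finset.sum_congr rfl fun j _ => ?_
  simp only [RCLike.inner_apply, conj_trivial]
  ring

lemma integrable_inner_sq {n : ℕ} {p : ℝ} (hp : 0 < p)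
    (μ : Measure (EuclideanSpace ℝ (Fin n)))
    (hint : Integrable (fun x => ‖x‖ ^ p) μ) (v : EuclideanSpace ℝ (Fin n)) :
    Integrable (fun x : EuclideanSpace ℝ (Fin n) => ⟪v, x⟫ ^ 2 * ‖x‖ ^ (p - 2)) μ := by
  simp_rw [inner_sq_expand]
  exact integrable_finsetSum _ fun i _ => integrable_finsetSum _ fun j _ =>
    (integrable_coord hp μ hint i j).const_mul _

/-- The coordinate form of isotropy, rewritten as a quadratic form in an arbitrary direction. -/
lemma integral_inner_sq {n : ℕ} {p : ℝ} (hp : 0 < p)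
    (μ : Measure (EuclideanSpace ℝ (Fin n))) (hiso : IsLpIsotropic p μ)
    (hint : Integrable (fun x => ‖x‖ ^ p) μ) (v : EuclideanSpace ℝ (Fin n)) :
    ∫ x, ⟪v, x⟫ ^ 2 * ‖x‖ ^ (p - 2) ∂μ = ‖v‖ ^ 2 * ∫ x, ‖x‖ ^ (p - 2) ∂μ := by
  have hI := integrable_coord hp μ hint
  simp_rw [inner_sq_expand]
  rw [integral_finsetSum _ fun i _ => integrable_finsetSum _ fun j _ => (hI i j).const_mul _]
  simp_rw [integral_finsetSum Finset.univ fun j _ => (hI _ j).const_mul _, integral_const_mul,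
    hiso.2.2.2, EuclideanSpace.real_norm_sq_eq, Finset.sum_mul]
  refine Finset.sum_congr rfl fun i _ => ?_
  simp [sq]

/-- an Lᵖ-isotropic measure (`0 < p < 4`) minimizes the `p`-th moment
`∫‖x‖^p` among its volume-preserving linear images:
`∫ ‖x‖^p dμ ≤ ∫ ‖x‖^p d(S_*μ) = ∫ ‖Sx‖^p dμ` for every `S ∈ SL_n(ℝ)`. -/
theorem stmt_11 (n : ℕ) (p : ℝ) (hp0 : 0 < p) (hp4 : p < 4)
    (μ : Measure (EuclideanSpace ℝ (Fin n))) [IsProbabilityMeasure μ]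
    (hiso : IsLpIsotropic p μ)
    (hint : Integrable (fun x => ‖x‖ ^ p) μ)
    (S : EuclideanSpace ℝ (Fin n) ≃ₗ[ℝ] EuclideanSpace ℝ (Fin n))
    (hdet : LinearMap.det (S : EuclideanSpace ℝ (Fin n) →ₗ[ℝ] EuclideanSpace ℝ (Fin n)) = 1) :
    (∫ x, ‖x‖ ^ p ∂μ) ≤ (∫ x, ‖x‖ ^ p ∂(Measure.map (fun x => S x) μ)) ∧
    (∫ x, ‖x‖ ^ p ∂(Measure.map (fun x => S x) μ)) = ∫ x, ‖S x‖ ^ p ∂μ := by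
  have hScont : Continuous (fun x => S x) :=
    (S : EuclideanSpace ℝ (Fin n) →ₗ[ℝ] EuclideanSpace ℝ (Fin n)).continuous_of_finiteDimensional
  have hmap : (∫ x, ‖x‖ ^ p ∂(Measure.map (fun x => S x) μ)) = ∫ x, ‖S x‖ ^ p ∂μ :=
    integral_map hScont.measurable.aemeasurable
      (measurable_norm.pow_const p).aestronglyMeasurable
  refine ⟨?_, hmap⟩
  rw [hmap]
  obtain ⟨b, a, ha, hprod, hnorm⟩ := exists_spectral S hdet
  have hlog : ∑ i, Real.log (a i) = 0 := by
    rw [← Real.log_prod (fun i _ => (ha i).ne'), hprod, Real.log_one]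
  have hSint : Integrable (fun x => ‖S x‖ ^ p) μ := by
    let L := LinearMap.toContinuousLinearMap
      (S : EuclideanSpace ℝ (Fin n) →ₗ[ℝ] EuclideanSpace ℝ (Fin n))
    refine (hint.const_mul (‖L‖ ^ p)).mono'
      (hScont.measurable.norm.pow_const p).aestronglyMeasurable
      (Filter.Eventually.of_forall fun x => ?_)
    rw [Real.norm_of_nonneg (Real.rpow_nonneg (norm_nonneg _) _),
      ← Real.mul_rpow (norm_nonneg _) (norm_nonneg _)]
    exact Real.rpow_le_rpow (norm_nonneg _) (L.le_opNorm x) hp0.le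
  have hI := fun i => (integrable_inner_sq hp0 μ hint (b i)).const_mul (Real.log (a i))
  have hsumI : Integrable (fun x : EuclideanSpace ℝ (Fin n) => p / 2 *
      ∑ i, Real.log (a i) * (⟪b i, x⟫ ^ 2 * ‖x‖ ^ (p - 2))) μ :=
    (integrable_finsetSum _ fun i _ => hI i).const_mul _
  have hzero : ∫ x, p / 2 * ∑ i, Real.log (a i) * (⟪b i, x⟫ ^ 2 * ‖x‖ ^ (p - 2)) ∂μ = 0 := by
    rw [integral_const_mul, integral_finsetSum _ fun i _ => hI i]
    simp_rw [integral_const_mul, integral_inner_sq hp0 μ hiso hint, b.orthonormal.norm_eq_one]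
    rw [← Finset.sum_mul, hlog]
    simp
  calc ∫ x, ‖x‖ ^ p ∂μ
      = ∫ x, (‖x‖ ^ p + p / 2 *
          ∑ i, Real.log (a i) * (⟪b i, x⟫ ^ 2 * ‖x‖ ^ (p - 2))) ∂μ := by
        rw [integral_add hint hsumI, hzero, add_zero]
    _ ≤ ∫ x, ‖S x‖ ^ p ∂μ := by
        refine integral_mono (hint.add hsumI) hSint fun x => ?_
        rcases eq_or_ne x 0 with rfl | hx
        · simp
        · exact pointwise_bound hp0 (norm_pos_iff.2 hx)
            (norm_pos_iff.2 (by simpa using hx)) a _ ha (fun i => sq_nonneg _)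
            (b.sum_sq_inner_right x) (hnorm x)
end

section
/- There exist universal constants c, C, C' > 0 such that the following holds. Let 1 ≤ p ≤ 2, let n ≥ C', and let μ be an L^p-isotropic, absolutely continuous log-concave probability measure on ℝⁿ. If T ∈ GL_n(ℝ) is such that T_*μ is isotropic (centered with covariance matrix equal to the identity), then c ≤ ‖T‖_op ≤ C and c ≤ ‖T^{-1}‖_op ≤ C. -/
/-! With `v(θ) = ∫ ⟪x, θ⟫² dμ`, the isotropy of `T_* μ` says `v(θ) = ‖(T⁻¹)* θ‖²`, so the theorem
amounts to bounding `v` above and below, on the unit sphere, by universal constants.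

The Prékopa–Leindler inequality (`pl_pi`) makes `μ` and all its linear images log-concave measures.
One-dimensional marginals therefore satisfy a reverse Hölder inequality (`fourth_moment`), and by a
Paley–Zygmund argument they exceed a fixed fraction of their standard deviation with probability
bounded below (`paley_zygmund`).

Put `R² = ∫ ‖x‖² dμ`, `u = ‖x‖ / R`, and let `z = ∫ u ^ (p - 2) dμ`. The hypothesis says that
`∫ ⟪x, θ⟫² u ^ (p - 2) dμ = z` for every unit `θ`, where `-1 ≤ p - 2 ≤ 0`. Since `u` has second moment
one, `z ≥ 1/2` (`weight_lower`). Since `u ^ (2 - p) ≤ 1 + u` and fourth moments are controlled,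
`v(θ) ≤ B z` (`variance_le_weighted`). The trace of the hypothesis gives `n z ≤ 2 R²`. Hence
`v(θ) ≤ 2 B R² / n`: no direction carries much more than its share of the total variance `R²`, and a
positive proportion of the principal axes have variance of order `R² / n`.

It remains to bound `z` above and `v` below, which needs a negative moment of `u`. Three principal axes
of variance of order `R² / n` span a three-dimensional marginal satisfying a small ball estimate
(`small_ball`), hence having a negative second moment of order `n / R²` (`neg_moment`). Averaging over
order `n` disjoint triples by AM–HM (`exists_norm_neg_moment`) yields `∫ u⁻² dμ ≤ D` with `D` universal.
Then `z ≤ 2 + D` (`weight_upper`), so `v` is bounded above, and `1/2 ≤ z ≤ v(θ) (1 + (D + C₄) / 2)`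
(`weighted_le_variance`), `C₄` being the reverse Hölder constant, so `v` is bounded below
(`exists_variance_bounds`). -/

open MeasureTheory

/-- A log-concave density, i.e. a function of the form `e^{-H}` with `H` convex. -/
def IsLogConcaveDensity {n : ℕ} (f : EuclideanSpace ℝ (Fin n) → ℝ) : Prop :=
  (∀ x, 0 ≤ f x) ∧
  ∀ x y : EuclideanSpace ℝ (Fin n), ∀ a b : ℝ, 0 ≤ a → 0 ≤ b → a + b = 1 →
    f x ^ a * f y ^ b ≤ f (a • x + b • y)

/-- An absolutely continuous log-concave probability measure. -/
def IsLogConcaveAC {n : ℕ} (μ : Measure (EuclideanSpace ℝ (Fin n))) : Prop :=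
  ∃ f : EuclideanSpace ℝ (Fin n) → ℝ, IsLogConcaveDensity f ∧
    μ = volume.withDensity (fun x => ENNReal.ofReal (f x))

section Helpers

open Set
open scoped ENNReal Pointwise RealInnerProductSpace

local notation "E3" => EuclideanSpace ℝ (Fin 3)

/-! ### The Prékopa–Leindler inequality -/

/-- One-dimensional Brunn–Minkowski for compact sets. -/
lemma bm_compact {K L : Set ℝ} (hK : IsCompact K) (hL : IsCompact L) (hKn : K.Nonempty)
    (hLn : L.Nonempty) : volume K + volume L ≤ volume (K + L) := by
  obtain ⟨m, hm, hmax⟩ := hK.exists_isGreatest hKn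
  obtain ⟨l, hl, hmin⟩ := hL.exists_isLeast hLn
  have h1 : volume ((fun x => x + l) '' K) = volume K := by
    simp
  have h2 : volume ((fun x => m + x) '' L) = volume L := by
    simp
  have hsub : ((fun x => x + l) '' K) ∪ ((fun x => m + x) '' L) ⊆ K + L := by
    rintro _ (⟨x, hx, rfl⟩ | ⟨x, hx, rfl⟩)
    · exact Set.add_mem_add hx hl
    · exact Set.add_mem_add hm hx
  -- The two translates of `K` and `L` lie on either side of `m + l`.
  have hinter : volume (((fun x => x + l) '' K) ∩ ((fun x => m + x) '' L)) = 0 := by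
    refine measure_mono_null (t := {m + l}) ?_ (by simp)
    rintro _ ⟨⟨x, hx, rfl⟩, ⟨y, hy, hxy⟩⟩
    have := hmax hx
    have := hmin hy
    simp only at hxy
    simp only [mem_singleton_iff]
    linarith
  have hmeas : MeasurableSet ((fun x => m + x) '' L) :=
    (hL.image (by fun_prop)).measurableSet
  rw [← h1, ← h2, ← measure_union₀ hmeas.nullMeasurableSet hinter]
  exact measure_mono hsub

/-- `a |A| + b |B| ≤ |D|` whenever `aA + bB ⊆ D`, by inner regularity from the compact case. The
set `D` need not be measurable. Adding fixed points of `A` and `B` to the compact subsets keeps them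
nonempty. -/
lemma bm_scaled {a b : ℝ} (ha : 0 < a) (hb : 0 < b) {A B D : Set ℝ} (hA : MeasurableSet A)
    (hB : MeasurableSet B) (hAn : A.Nonempty) (hBn : B.Nonempty)
    (h : ∀ x ∈ A, ∀ y ∈ B, a * x + b * y ∈ D) :
    ENNReal.ofReal a * volume A + ENNReal.ofReal b * volume B ≤ volume D := by
  rw [hA.measure_eq_iSup_isCompact, hB.measure_eq_iSup_isCompact]
  obtain ⟨x0, hx0⟩ := hAn
  obtain ⟨y0, hy0⟩ := hBn
  have key : ∀ K ⊆ A, IsCompact K → ∀ L ⊆ B, IsCompact L →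
      ENNReal.ofReal a * volume K + ENNReal.ofReal b * volume L ≤ volume D := by
    intro K hKA hK L hLB hL
    have h1 := bm_compact ((hK.insert x0).smul a) ((hL.insert y0).smul b)
      ((insert_nonempty _ _).smul_set) ((insert_nonempty _ _).smul_set)
    rw [Measure.addHaar_smul_of_nonneg _ ha.le, Measure.addHaar_smul_of_nonneg _ hb.le] at h1
    simp only [Module.finrank_self, pow_one] at h1
    refine le_trans ?_ (h1.trans (measure_mono ?_))
    · gcongr <;> exact subset_insert _ _
    · rintro _ ⟨_, ⟨x, hx, rfl⟩, _, ⟨y, hy, rfl⟩, rfl⟩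
      have hx' : x ∈ A := by
        rcases hx with rfl | hx
        · exact hx0
        · exact hKA hx
      have hy' : y ∈ B := by
        rcases hy with rfl | hy
        · exact hy0
        · exact hLB hy
      simpa using h x hx' y hy'
  simp only [ENNReal.mul_iSup, iSup_and']
  exact ENNReal.biSup_add_biSup_le' ⟨∅, empty_subset _, isCompact_empty⟩
    ⟨∅, empty_subset _, isCompact_empty⟩ fun K hK L hL => key K hK.1 hK.2 L hL.1 hL.2

/-- Weighted AM–GM in `ℝ≥0∞`. -/
lemma ennreal_geom_le {a b : ℝ} (ha : 0 < a) (hb : 0 < b) (hab : a + b = 1) (x y : ℝ≥0∞) :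
    x ^ a * y ^ b ≤ ENNReal.ofReal a * x + ENNReal.ofReal b * y := by
  have hpq : (1 / a).HolderConjugate (1 / b) := by
    rw [Real.holderConjugate_iff]
    refine ⟨?_, by simp [hab]⟩
    rw [lt_div_iff₀ ha]; linarith
  have := ENNReal.young_inequality (x ^ a) (y ^ b) hpq
  rw [← ENNReal.rpow_mul, ← ENNReal.rpow_mul, mul_one_div_cancel ha.ne', mul_one_div_cancel hb.ne',
    ENNReal.rpow_one, ENNReal.rpow_one] at this
  refine this.trans (le_of_eq ?_)
  rw [one_div, one_div, ENNReal.ofReal_inv_of_pos ha, ENNReal.ofReal_inv_of_pos hb, div_eq_mul_inv,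
    div_eq_mul_inv, inv_inv, inv_inv, mul_comm x, mul_comm y]

/-- The additive form of Prékopa–Leindler for functions with supremum exactly `1`: every superlevel set
at a level `t < 1` is nonempty, so Brunn–Minkowski applies to it, and integrating over `t` gives the
claim by the layer-cake formula. -/
lemma pl_core {a b : ℝ} (ha : 0 < a) (hb : 0 < b) {f g h : ℝ → ℝ}
    (hf : Measurable f) (hg : Measurable g) (hh : Measurable h)
    (hf0 : ∀ x, 0 ≤ f x) (hg0 : ∀ x, 0 ≤ g x) (hh0 : ∀ x, 0 ≤ h x)
    (hf1 : ∀ x, f x ≤ 1) (hg1 : ∀ x, g x ≤ 1)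
    (hfs : ∀ t < 1, ∃ x, t < f x) (hgs : ∀ t < 1, ∃ x, t < g x)
    (H : ∀ t, 0 < t → t < 1 → ∀ x y, t < f x → t < g y → t < h (a * x + b * y)) :
    ENNReal.ofReal a * (∫⁻ x, ENNReal.ofReal (f x)) + ENNReal.ofReal b * ∫⁻ x, ENNReal.ofReal (g x)
      ≤ ∫⁻ x, ENNReal.ofReal (h x) := by
  rw [lintegral_eq_lintegral_meas_lt _ (Filter.Eventually.of_forall hf0) hf.aemeasurable,
    lintegral_eq_lintegral_meas_lt _ (Filter.Eventually.of_forall hg0) hg.aemeasurable,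
    lintegral_eq_lintegral_meas_lt _ (Filter.Eventually.of_forall hh0) hh.aemeasurable]
  have m1 : ∀ u : ℝ → ℝ, Measurable (fun t : ℝ => volume {x | t < u x}) := fun u =>
    Antitone.measurable fun s t hst => measure_mono fun x hx => lt_of_le_of_lt hst hx
  rw [← lintegral_const_mul _ (m1 f), ← lintegral_const_mul _ (m1 g),
    ← lintegral_add_left ((m1 f).const_mul _)]
  refine setLIntegral_mono' measurableSet_Ioi fun t ht => ?_
  by_cases ht1 : t < 1
  · exact bm_scaled ha hb (measurableSet_lt measurable_const hf)
      (measurableSet_lt measurable_const hg) (hfs t ht1) (hgs t ht1)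
      fun x hx y hy => H t ht ht1 x y hx hy
  · have e1 : {x | t < f x} = ∅ := by
      ext x; simp only [mem_ofPred_eq, mem_empty_iff_false, iff_false, not_lt]
      linarith [hf1 x]
    have e2 : {x | t < g x} = ∅ := by
      ext x; simp only [mem_ofPred_eq, mem_empty_iff_false, iff_false, not_lt]
      linarith [hg1 x]
    simp [e1, e2]

/-- One-dimensional Prékopa–Leindler for bounded `f`, `g`. -/
lemma pl_one_bdd {a b : ℝ} (ha : 0 < a) (hb : 0 < b) (hab : a + b = 1) {f g h : ℝ → ℝ≥0∞}
    (hf : Measurable f) (hg : Measurable g) (hh : Measurable h)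
    (hfb : ⨆ x, f x ≠ ∞) (hgb : ⨆ x, g x ≠ ∞)
    (H : ∀ x y, f x ^ a * g y ^ b ≤ h (a * x + b * y)) :
    (∫⁻ x, f x) ^ a * (∫⁻ x, g x) ^ b ≤ ∫⁻ x, h x := by
  set S := ⨆ x, f x with hS
  set T := ⨆ x, g x with hT
  have hfS : ∀ x, f x ≤ S := fun x => le_iSup f x
  have hgT : ∀ x, g x ≤ T := fun x => le_iSup g x
  by_cases hS0 : S = 0
  · have : ∀ x, f x = 0 := fun x => le_antisymm (hS0 ▸ hfS x) bot_le
    simp [this, ha]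
  by_cases hT0 : T = 0
  · have : ∀ x, g x = 0 := fun x => le_antisymm (hT0 ▸ hgT x) bot_le
    simp [this, hb]
  -- Dividing `f` and `g` by their suprema, and `h` by the matching power mean `U`, brings the sup to 1.
  set U := S ^ a * T ^ b with hU
  have hSa0 : S ^ a ≠ 0 := by simp [ENNReal.rpow_eq_zero_iff, hS0, hfb]
  have hTb0 : T ^ b ≠ 0 := by simp [ENNReal.rpow_eq_zero_iff, hT0, hgb]
  have hSai : S ^ a ≠ ∞ := by simp [ENNReal.rpow_eq_top_iff, hS0, hfb]
  have hTbi : T ^ b ≠ ∞ := by simp [ENNReal.rpow_eq_top_iff, hT0, hgb]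
  have hU0 : U ≠ 0 := mul_ne_zero hSa0 hTb0
  have hUi : U ≠ ∞ := ENNReal.mul_ne_top hSai hTbi
  have hfn : ∀ x, f x / S ≤ 1 := fun x => ENNReal.div_le_of_le_mul (by simpa using hfS x)
  have hgn : ∀ x, g x / T ≤ 1 := fun x => ENNReal.div_le_of_le_mul (by simpa using hgT x)
  have hfn' : ∀ x, f x / S ≠ ∞ := fun x => ne_top_of_le_ne_top (by simp) (hfn x)
  have hgn' : ∀ x, g x / T ≠ ∞ := fun x => ne_top_of_le_ne_top (by simp) (hgn x)
  have hhn' : ∀ x, min (h x / U) 1 ≠ ∞ := fun x => ne_top_of_le_ne_top (by simp) (min_le_right _ _)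
  have hsup : ∀ (u : ℝ → ℝ≥0∞) (V : ℝ≥0∞), V ≠ 0 → V ≠ ∞ → V = ⨆ x, u x →
      (∀ x, u x / V ≠ ∞) → ∀ t < (1 : ℝ), ∃ x, t < (u x / V).toReal := by
    intro u V h0 hi hV hn t ht
    by_cases ht0 : t < 0
    · exact ⟨0, ht0.trans_le ENNReal.toReal_nonneg⟩
    have : ENNReal.ofReal t * V < ⨆ x, u x := by
      rw [← hV]
      calc ENNReal.ofReal t * V < 1 * V := by
            rw [ENNReal.mul_lt_mul_iff_left h0 hi]
            simpa using ht
        _ = V := one_mul V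
    obtain ⟨x, hx⟩ := lt_iSup_iff.1 this
    refine ⟨x, ?_⟩
    rw [← ENNReal.ofReal_lt_iff_lt_toReal (not_lt.1 ht0) (hn x)]
    rwa [ENNReal.lt_div_iff_mul_lt (Or.inl h0) (Or.inl hi)]
  have key := pl_core ha hb (f := fun x => (f x / S).toReal) (g := fun x => (g x / T).toReal)
    (h := fun x => (min (h x / U) 1).toReal) (by fun_prop) (by fun_prop) (by fun_prop)
    (fun _ => ENNReal.toReal_nonneg) (fun _ => ENNReal.toReal_nonneg)
    (fun _ => ENNReal.toReal_nonneg)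
    (fun x => by simpa using ENNReal.toReal_mono (by simp) (hfn x))
    (fun x => by simpa using ENNReal.toReal_mono (by simp) (hgn x))
    (hsup f S hS0 hfb hS hfn') (hsup g T hT0 hgb hT hgn') ?_
  · simp only [ENNReal.ofReal_toReal (hfn' _), ENNReal.ofReal_toReal (hgn' _),
      ENNReal.ofReal_toReal (hhn' _)] at key
    have e1 : ∫⁻ x, f x / S = (∫⁻ x, f x) / S := by
      simp only [div_eq_mul_inv]; rw [lintegral_mul_const _ hf]
    have e2 : ∫⁻ x, g x / T = (∫⁻ x, g x) / T := by
      simp only [div_eq_mul_inv]; rw [lintegral_mul_const _ hg]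
    have e3 : ∫⁻ x, min (h x / U) 1 ≤ (∫⁻ x, h x) / U := by
      calc _ ≤ ∫⁻ x, h x / U := lintegral_mono fun x => min_le_left _ _
        _ = _ := by simp only [div_eq_mul_inv]; rw [lintegral_mul_const _ hh]
    rw [e1, e2] at key
    have k2 := (ennreal_geom_le ha hb hab _ _).trans (key.trans e3)
    rw [ENNReal.div_rpow_of_nonneg _ _ ha.le, ENNReal.div_rpow_of_nonneg _ _ hb.le,
      ENNReal.le_div_iff_mul_le (Or.inl hU0) (Or.inl hUi)] at k2
    refine le_trans (le_of_eq ?_) k2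
    rw [hU, show ∀ p q r s : ℝ≥0∞, p / r * (q / s) * (r * s) = (p / r * r) * (q / s * s) by
      intros; ring, ENNReal.div_mul_cancel hSa0 hSai, ENNReal.div_mul_cancel hTb0 hTbi]
  · intro t ht ht1 x y hx hy
    rw [← ENNReal.ofReal_lt_iff_lt_toReal ht.le (hfn' x)] at hx
    rw [← ENNReal.ofReal_lt_iff_lt_toReal ht.le (hgn' y)] at hy
    rw [← ENNReal.ofReal_lt_iff_lt_toReal ht.le (hhn' _), lt_min_iff]
    refine ⟨?_, by simpa using ht1⟩
    have h1 : ENNReal.ofReal t ^ a < (f x / S) ^ a := ENNReal.rpow_lt_rpow hx ha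
    have h2 : ENNReal.ofReal t ^ b < (g y / T) ^ b := ENNReal.rpow_lt_rpow hy hb
    have h3 := ENNReal.mul_lt_mul h1 h2
    rw [← ENNReal.rpow_add _ _ (by simpa using ht) (by simp), hab, ENNReal.rpow_one] at h3
    refine h3.trans_le ?_
    rw [ENNReal.le_div_iff_mul_le (Or.inl hU0) (Or.inl hUi), ENNReal.div_rpow_of_nonneg _ _ ha.le,
      ENNReal.div_rpow_of_nonneg _ _ hb.le]
    refine le_trans (le_of_eq ?_) (H x y)
    rw [hU, show ∀ p q r s : ℝ≥0∞, p / r * (q / s) * (r * s) = (p / r * r) * (q / s * s) by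
      intros; ring, ENNReal.div_mul_cancel hSa0 hSai, ENNReal.div_mul_cancel hTb0 hTbi]

lemma iSup_min_nat (x : ℝ≥0∞) : ⨆ n : ℕ, min x (n : ℝ≥0∞) = x := by
  refine le_antisymm (iSup_le fun n => min_le_left _ _) ?_
  refine le_of_forall_lt fun y hy => ?_
  obtain ⟨n, hn⟩ := ENNReal.exists_nat_gt hy.ne_top
  exact lt_iSup_iff.2 ⟨n, lt_min hy hn⟩

/-- One-dimensional Prékopa–Leindler inequality. -/
lemma pl_one {a b : ℝ} (ha : 0 < a) (hb : 0 < b) (hab : a + b = 1) {f g h : ℝ → ℝ≥0∞}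
    (hf : Measurable f) (hg : Measurable g) (hh : Measurable h)
    (H : ∀ x y, f x ^ a * g y ^ b ≤ h (a * x + b * y)) :
    (∫⁻ x, f x) ^ a * (∫⁻ x, g x) ^ b ≤ ∫⁻ x, h x := by
  have conv : ∀ u : ℝ → ℝ≥0∞, Measurable u →
      Filter.Tendsto (fun n : ℕ => ∫⁻ x, min (u x) n) Filter.atTop (nhds (∫⁻ x, u x)) := by
    intro u hu
    have hm : Monotone fun (n : ℕ) (x : ℝ) => min (u x) (n : ℝ≥0∞) := fun m n hmn x =>
      min_le_min le_rfl (by exact_mod_cast hmn)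
    have := lintegral_iSup (μ := volume) (f := fun (n : ℕ) (x : ℝ) => min (u x) (n : ℝ≥0∞))
      (fun n => by fun_prop) hm
    simp only [iSup_min_nat] at this
    rw [this]
    exact tendsto_atTop_iSup fun m n hmn => lintegral_mono (hm hmn)
  have step : ∀ m n : ℕ, (∫⁻ x, min (f x) m) ^ a * (∫⁻ x, min (g x) n) ^ b ≤ ∫⁻ x, h x := by
    intro m n
    refine pl_one_bdd ha hb hab (by fun_prop) (by fun_prop) hh ?_ ?_ fun x y => ?_
    · exact ne_top_of_le_ne_top (ENNReal.natCast_ne_top m) (iSup_le fun x => min_le_right _ _)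
    · exact ne_top_of_le_ne_top (ENNReal.natCast_ne_top n) (iSup_le fun x => min_le_right _ _)
    · refine le_trans ?_ (H x y)
      gcongr <;> exact min_le_left _ _
  have sup : ∀ u : ℝ → ℝ≥0∞, Measurable u → ∀ c : ℝ, 0 < c →
      (∫⁻ x, u x) ^ c = ⨆ n : ℕ, (∫⁻ x, min (u x) n) ^ c := by
    intro u hu c hc
    refine tendsto_nhds_unique (((ENNReal.continuous_rpow_const (y := c)).tendsto _).comp
      (conv u hu)) (tendsto_atTop_iSup fun m n hmn => ?_)
    refine ENNReal.rpow_le_rpow (lintegral_mono fun x => ?_) hc.le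
    exact min_le_min le_rfl (by exact_mod_cast hmn)
  rw [sup f hf a ha, sup g hg b hb, ENNReal.iSup_mul]
  refine iSup_le fun m => ?_
  rw [ENNReal.mul_iSup]
  exact iSup_le fun n => step m n

/-- Prékopa–Leindler inequality on `ℝⁿ`, by induction on the dimension through Tonelli. -/
lemma pl_pi {a b : ℝ} (ha : 0 < a) (hb : 0 < b) (hab : a + b = 1) :
    ∀ (n : ℕ) {f g h : (Fin n → ℝ) → ℝ≥0∞}, Measurable f → Measurable g → Measurable h →
    (∀ x y, f x ^ a * g y ^ b ≤ h (a • x + b • y)) →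
    (∫⁻ x, f x) ^ a * (∫⁻ x, g x) ^ b ≤ ∫⁻ x, h x := by
  intro n
  induction n with
  | zero =>
    intro f g h hf hg hh H
    have e : ∀ u : (Fin 0 → ℝ) → ℝ≥0∞, ∫⁻ x, u x = u 0 := by
      intro u
      rw [Measure.volume_pi_eq_dirac 0, lintegral_dirac]
    rw [e, e, e]
    simpa using H 0 0
  | succ n ih =>
    intro f g h hf hg hh H
    have hmp := (volume_preserving_piFinSuccAbove (fun _ : Fin (n + 1) => ℝ) 0).symm
    set e := (MeasurableEquiv.piFinSuccAbove (fun _ : Fin (n + 1) => ℝ) 0).symm with he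
    have T : ∀ u : (Fin (n + 1) → ℝ) → ℝ≥0∞, Measurable u →
        ∫⁻ x, u x = ∫⁻ t : ℝ, ∫⁻ z : Fin n → ℝ, u (e (t, z)) := by
      intro u hu
      rw [← hmp.lintegral_comp hu]
      exact lintegral_prod _ (hu.comp e.measurable).aemeasurable
    have hlin : ∀ t z s w, e (a * t + b * s, a • z + b • w) = a • e (t, z) + b • e (s, w) := by
      intro t z s w
      ext i
      refine Fin.cases ?_ (fun j => ?_) i <;> simp [he, MeasurableEquiv.piFinSuccAbove]
    have hm : ∀ u : (Fin (n + 1) → ℝ) → ℝ≥0∞, Measurable u →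
        Measurable fun t : ℝ => ∫⁻ z : Fin n → ℝ, u (e (t, z)) := fun u hu =>
      Measurable.lintegral_prod_right' (f := fun p : ℝ × (Fin n → ℝ) => u (e p))
        (hu.comp e.measurable)
    rw [T f hf, T g hg, T h hh]
    refine pl_one ha hb hab (hm f hf) (hm g hg) (hm h hh) fun t s => ?_
    refine ih (hf.comp (e.measurable.comp measurable_prodMk_left))
      (hg.comp (e.measurable.comp measurable_prodMk_left))
      (hh.comp (e.measurable.comp measurable_prodMk_left)) fun z w => ?_
    rw [hlin]
    exact H _ _

/-! ### Log-concave measures -/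

/-- Log-concavity of a measure: `ν(A)^a ν(B)^b ≤ ν(D)` whenever `aA + bB ⊆ D`. Keeping `D` as a
separate measurable set avoids measurability questions for Minkowski sums and makes the notion
stable under linear push-forward. -/
def LogConcaveMeasure {E : Type*} [MeasurableSpace E] [AddCommGroup E] [Module ℝ E]
    (ν : Measure E) : Prop :=
  ∀ a b : ℝ, 0 < a → 0 < b → a + b = 1 → ∀ A B D : Set E, MeasurableSet A → MeasurableSet B →
    MeasurableSet D → (∀ x ∈ A, ∀ y ∈ B, a • x + b • y ∈ D) → ν A ^ a * ν B ^ b ≤ ν D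

/-- Linear images, in particular marginals, of log-concave measures are log-concave. -/
lemma LogConcaveMeasure.map {E F : Type*} [MeasurableSpace E] [AddCommGroup E] [Module ℝ E]
    [MeasurableSpace F] [AddCommGroup F] [Module ℝ F] {ν : Measure E} (h : LogConcaveMeasure ν)
    (P : E →ₗ[ℝ] F) (hP : Measurable P) : LogConcaveMeasure (ν.map P) := by
  intro a b ha hb hab A B D hA hB hD H
  rw [Measure.map_apply hP hA, Measure.map_apply hP hB, Measure.map_apply hP hD]
  refine h a b ha hb hab _ _ _ (hP hA) (hP hB) (hP hD) fun x hx y hy => ?_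
  simpa using H _ hx _ hy

/-- An a.e. measurable function has a measurable minorant and a measurable majorant, both a.e. equal
to it. A log-concave density is only a.e. measurable, while the hypothesis of Prékopa–Leindler is
pointwise, so the minorant is used for the two factors and the majorant for the right-hand side. -/
lemma exists_measurable_sandwich {α : Type*} [MeasurableSpace α] {μ : Measure α} {F : α → ℝ≥0∞}
    (hF : AEMeasurable F μ) : ∃ F1 F2 : α → ℝ≥0∞, Measurable F1 ∧ Measurable F2 ∧
      (∀ x, F1 x ≤ F x) ∧ (∀ x, F x ≤ F2 x) ∧ F1 =ᵐ[μ] F ∧ F2 =ᵐ[μ] F := by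
  classical
  set N := toMeasurable μ {x | F x ≠ hF.mk F x} with hN
  have hN0 : μ N = 0 := by
    rw [hN, measure_toMeasurable]; exact hF.ae_eq_mk
  have hNm : MeasurableSet N := measurableSet_toMeasurable _ _
  have hout : ∀ x, x ∉ N → hF.mk F x = F x := by
    intro x hx
    by_contra hne
    exact hx (subset_toMeasurable μ _ (fun h => hne h.symm))
  have hae : ∀ᵐ x ∂μ, x ∉ N := measure_eq_zero_iff_ae_notMem.1 hN0
  refine ⟨N.piecewise 0 (hF.mk F), N.piecewise (fun _ => ∞) (hF.mk F),
    Measurable.piecewise hNm measurable_const hF.measurable_mk,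
    Measurable.piecewise hNm measurable_const hF.measurable_mk, ?_, ?_, ?_, ?_⟩
  · intro x
    by_cases hx : x ∈ N <;> simp [hx, hout]
  · intro x
    by_cases hx : x ∈ N <;> simp [hx, hout]
  · filter_upwards [hae] with x hx
    simp [hx, hout]
  · filter_upwards [hae] with x hx
    simp [hx, hout]

lemma IsLogConcaveDensity.convex_superlevel {n : ℕ} {f : EuclideanSpace ℝ (Fin n) → ℝ}
    (hf : IsLogConcaveDensity f) (r : ℝ) : Convex ℝ {x | r < f x} := by
  intro x hx y hy a b ha hb hab
  simp only [mem_ofPred_eq] at hx hy ⊢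
  by_cases hr : r < 0
  · exact hr.trans_le (hf.1 _)
  push Not at hr
  have hm : r < min (f x) (f y) := lt_min hx hy
  have hm0 : 0 < min (f x) (f y) := hr.trans_lt hm
  calc r < min (f x) (f y) := hm
    _ = min (f x) (f y) ^ a * min (f x) (f y) ^ b := by
      rw [← Real.rpow_add hm0, hab, Real.rpow_one]
    _ ≤ f x ^ a * f y ^ b := by
      gcongr
      · exact Real.rpow_nonneg (hf.1 _) _
      · exact min_le_left _ _
      · exact min_le_right _ _
    _ ≤ _ := hf.2 x y a b ha hb hab

/-- The superlevel sets are convex, and convex sets are null measurable. -/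
lemma IsLogConcaveDensity.aemeasurable {n : ℕ} {f : EuclideanSpace ℝ (Fin n) → ℝ}
    (hf : IsLogConcaveDensity f) : AEMeasurable f volume := by
  have : NullMeasurable f (volume : Measure (EuclideanSpace ℝ (Fin n))) := by
    refine @measurable_of_Ioi _ (NullMeasurableSpace (EuclideanSpace ℝ (Fin n)) volume)
      _ _ _ _ _ _ _ _ fun r => ?_
    exact (hf.convex_superlevel r).nullMeasurableSet volume
  exact this.aemeasurable

/-- Prékopa: a measure with a log-concave density is log-concave, by Prékopa–Leindler applied to the
density restricted to the sets involved. -/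
lemma IsLogConcaveAC.logConcaveMeasure {n : ℕ} {μ : Measure (EuclideanSpace ℝ (Fin n))}
    (h : IsLogConcaveAC μ) : LogConcaveMeasure μ := by
  obtain ⟨f, hf, rfl⟩ := h
  intro a b ha hb hab A B D hA hB hD H
  have hmp := PiLp.volume_preserving_toLp (Fin n)
  have hFm : AEMeasurable (fun x : Fin n → ℝ => ENNReal.ofReal (f (WithLp.toLp 2 x))) volume :=
    (hf.aemeasurable.comp_quasiMeasurePreserving hmp.quasiMeasurePreserving).ennreal_ofReal
  obtain ⟨F1, F2, hF1, hF2, hl, hu, h1, h2⟩ := exists_measurable_sandwich hFm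
  have hlow : ∀ (A : Set (EuclideanSpace ℝ (Fin n))) (F' : (Fin n → ℝ) → ℝ≥0∞), MeasurableSet A →
      F' =ᵐ[volume] (fun x : Fin n → ℝ => ENNReal.ofReal (f (WithLp.toLp 2 x))) →
      (volume.withDensity fun x => ENNReal.ofReal (f x)) A
        = ∫⁻ x, (WithLp.toLp 2 ⁻¹' A).indicator F' x := by
    intro A F' hA hF'
    rw [withDensity_apply _ hA, lintegral_indicator (hmp.measurable hA),
      ← hmp.setLIntegral_comp_preimage_emb
        (MeasurableEquiv.toLp 2 (Fin n → ℝ)).measurableEmbedding]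
    exact lintegral_congr_ae (ae_restrict_of_ae (hF'.mono fun x hx => hx.symm))
  rw [hlow A F1 hA h1, hlow B F1 hB h1, hlow D F2 hD h2]
  refine pl_pi ha hb hab n (hF1.indicator (hmp.measurable hA)) (hF1.indicator (hmp.measurable hB))
    (hF2.indicator (hmp.measurable hD)) fun x y => ?_
  by_cases hx : WithLp.toLp 2 x ∈ A
  swap
  · simp [indicator, hx, ha]
  by_cases hy : WithLp.toLp 2 y ∈ B
  swap
  · simp [indicator, hy, hb]
  have hz : WithLp.toLp 2 (a • x + b • y) ∈ D := by simpa using H _ hx _ hy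
  rw [indicator_of_mem (by exact hx), indicator_of_mem (by exact hy), indicator_of_mem (by exact hz)]
  calc F1 x ^ a * F1 y ^ b
      ≤ ENNReal.ofReal (f (WithLp.toLp 2 x)) ^ a * ENNReal.ofReal (f (WithLp.toLp 2 y)) ^ b := by
        gcongr <;> exact hl _
    _ = ENNReal.ofReal (f (WithLp.toLp 2 x) ^ a * f (WithLp.toLp 2 y) ^ b) := by
        rw [ENNReal.ofReal_rpow_of_nonneg (hf.1 _) ha.le,
          ENNReal.ofReal_rpow_of_nonneg (hf.1 _) hb.le,
          ENNReal.ofReal_mul (Real.rpow_nonneg (hf.1 _) _)]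
    _ ≤ ENNReal.ofReal (f (WithLp.toLp 2 (a • x + b • y))) :=
        ENNReal.ofReal_le_ofReal (by simpa using hf.2 _ _ a b ha.le hb.le hab)
    _ ≤ F2 _ := hu _

/-! ### Moments of one-dimensional log-concave measures -/

/-- Log-concavity with weights `j/(j+1)` and `1/(j+1)`, in an integer-power form. For `j = 0` the first
weight vanishes and plain monotonicity is used. -/
lemma LogConcaveMeasure.pow_mul_le {E : Type*} [MeasurableSpace E] [AddCommGroup E] [Module ℝ E]
    {ν : Measure E} (h : LogConcaveMeasure ν) (j : ℕ) {A B D : Set E}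
    (hA : MeasurableSet A) (hB : MeasurableSet B) (hD : MeasurableSet D)
    (H : ∀ x ∈ A, ∀ y ∈ B, ((j : ℝ) / (j + 1)) • x + (1 / ((j : ℝ) + 1)) • y ∈ D)
    (hBD : j = 0 → B ⊆ D) :
    ν A ^ j * ν B ≤ ν D ^ (j + 1) := by
  rcases Nat.eq_zero_or_pos j with rfl | hj
  · simpa using measure_mono (hBD rfl)
  have hj' : (0 : ℝ) < j := by exact_mod_cast hj
  have hj1 : (0 : ℝ) < (j : ℝ) + 1 := by positivity
  have := h ((j : ℝ) / (j + 1)) (1 / ((j : ℝ) + 1)) (by positivity) (by positivity)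
    (by field_simp) A B D hA hB hD H
  have h2 := ENNReal.rpow_le_rpow this hj1.le
  rw [ENNReal.mul_rpow_of_nonneg _ _ hj1.le, ← ENNReal.rpow_mul, ← ENNReal.rpow_mul,
    div_mul_cancel₀ _ hj1.ne', one_div_mul_cancel hj1.ne', ENNReal.rpow_one,
    ENNReal.rpow_natCast] at h2
  exact_mod_cast h2

lemma measurableSet_le_real (c : ℝ) : MeasurableSet {y : ℝ | c ≤ y} := measurableSet_Ici

/-- A log-concave probability measure on `ℝ` with second moment at most `σ²` has geometrically
decaying tails at scale `σ`: the mass to the right drops by a factor `3` over a distance `4σ`. -/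
lemma tail_right {ν : Measure ℝ} [IsProbabilityMeasure ν] (h : LogConcaveMeasure ν) {σ : ℝ}
    (hσ : 0 < σ) (hi : Integrable (fun y => y ^ 2) ν) (h2 : ∫ y, y ^ 2 ∂ν ≤ σ ^ 2) (j : ℕ) :
    ν.real {y | 4 * σ * (j + 1) - 2 * σ ≤ y} ≤ 1 / 4 * (1 / 3) ^ j := by
  have cheb : ν.real {y | (2 * σ) ^ 2 ≤ y ^ 2} ≤ 1 / 4 := by
    have := mul_meas_ge_le_integral_of_nonneg (μ := ν) (f := fun y : ℝ => y ^ 2)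
      (Filter.Eventually.of_forall fun y => sq_nonneg y) hi ((2 * σ) ^ 2)
    have h3 := this.trans h2
    have : 0 < σ ^ 2 := by positivity
    nlinarith
  have hD : ν.real {y | 2 * σ ≤ y} ≤ 1 / 4 :=
    (measureReal_mono fun y hy => by
      simp only [mem_ofPred_eq] at hy ⊢; nlinarith).trans cheb
  have hA : 3 / 4 ≤ ν.real {y | -(2 * σ) ≤ y} := by
    have h4 : ν.real {y | -(2 * σ) ≤ y}ᶜ ≤ 1 / 4 :=
      (measureReal_mono fun y hy => by
        simp only [mem_ofPred_eq, mem_compl_iff] at hy ⊢; nlinarith).trans cheb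
    rw [measureReal_compl (measurableSet_le_real _)] at h4
    simp at h4 ⊢
    linarith
  have key := h.pow_mul_le j (A := {y | -(2 * σ) ≤ y}) (B := {y | 4 * σ * (j + 1) - 2 * σ ≤ y})
    (D := {y | 2 * σ ≤ y}) (measurableSet_le measurable_const measurable_id)
    (measurableSet_le measurable_const measurable_id)
    (measurableSet_le measurable_const measurable_id) ?_ ?_
  · have k2 : ν.real {y | -(2 * σ) ≤ y} ^ j * ν.real {y | 4 * σ * (j + 1) - 2 * σ ≤ y}
        ≤ ν.real {y | 2 * σ ≤ y} ^ (j + 1) := by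
      simp only [Measure.real]
      rw [← ENNReal.toReal_pow, ← ENNReal.toReal_pow, ← ENNReal.toReal_mul]
      exact ENNReal.toReal_mono (by finiteness) key
    set q := ν.real {y | 4 * σ * (j + 1) - 2 * σ ≤ y}
    have hq : 0 ≤ q := measureReal_nonneg
    have k3 : (3 / 4 : ℝ) ^ j * q ≤ (1 / 4) ^ (j + 1) :=
      calc (3 / 4 : ℝ) ^ j * q ≤ ν.real {y | -(2 * σ) ≤ y} ^ j * q := by gcongr
        _ ≤ _ := k2
        _ ≤ _ := by gcongr
    have e : (1 / 4 : ℝ) ^ (j + 1) = (3 / 4) ^ j * (1 / 4 * (1 / 3) ^ j) := by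
      rw [pow_succ, mul_comm (1 / 4 : ℝ) ((1 / 3) ^ j), ← mul_assoc, ← mul_pow]
      norm_num
    rw [e] at k3
    exact le_of_mul_le_mul_left k3 (by positivity)
  · intro x hx y hy
    simp only [mem_ofPred_eq, smul_eq_mul] at hx hy ⊢
    have : (j : ℝ) / (j + 1) * x + 1 / ((j : ℝ) + 1) * y = (j * x + y) / (j + 1) := by
      field_simp
    rw [this, le_div_iff₀ (by positivity)]
    have := mul_le_mul_of_nonneg_left hx (Nat.cast_nonneg (α := ℝ) j)
    nlinarith
  · rintro rfl y hy
    simp only [mem_ofPred_eq, Nat.cast_zero] at hy ⊢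
    linarith

/-- The two-sided tail bound, from `tail_right` for `ν` and its reflection. -/
lemma tail_abs {ν : Measure ℝ} [IsProbabilityMeasure ν] (h : LogConcaveMeasure ν) {σ : ℝ}
    (hσ : 0 < σ) (hi : Integrable (fun y => y ^ 2) ν) (h2 : ∫ y, y ^ 2 ∂ν ≤ σ ^ 2) (j : ℕ) :
    ν {y | 4 * σ * (j + 1) - 2 * σ ≤ |y|} ≤ ENNReal.ofReal ((1 / 3) ^ j) := by
  have hneg : Measurable fun y : ℝ => -y := measurable_neg
  have : IsProbabilityMeasure (ν.map fun y => -y) :=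
    Measure.isProbabilityMeasure_map hneg.aemeasurable
  have hl : LogConcaveMeasure (ν.map fun y => -y) := h.map (-LinearMap.id) hneg
  have hme : MeasurableEmbedding fun y : ℝ => -y := (MeasurableEquiv.neg ℝ).measurableEmbedding
  have t1 := tail_right h hσ hi h2 j
  have t2 := tail_right hl hσ ((hme.integrable_map_iff).2 (by simpa [Function.comp_def] using hi))
    (by rw [hme.integral_map]; simpa using h2) j
  rw [measureReal_def, Measure.map_apply hneg (measurableSet_le_real _),
    ← measureReal_def] at t2
  rw [← ofReal_measureReal]
  refine ENNReal.ofReal_le_ofReal ?_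
  calc ν.real {y | 4 * σ * (j + 1) - 2 * σ ≤ |y|}
      ≤ ν.real ({y | 4 * σ * (j + 1) - 2 * σ ≤ y} ∪
          (fun y => -y) ⁻¹' {y | 4 * σ * (j + 1) - 2 * σ ≤ y}) := by
        refine measureReal_mono fun y hy => ?_
        simp only [mem_ofPred_eq, mem_union, mem_preimage] at hy ⊢
        exact le_abs.1 hy
    _ ≤ _ := measureReal_union_le _ _
    _ ≤ 1 / 4 * (1 / 3) ^ j + 1 / 4 * (1 / 3) ^ j := add_le_add t1 t2
    _ ≤ (1 / 3) ^ j := by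
        have : (0 : ℝ) ≤ (1 / 3) ^ j := by positivity
        linarith

/-- Reverse Hölder inequality (fourth against second moment) for log-concave measures on `ℝ`. -/
lemma fourth_moment : ∃ C4 : ℝ, 0 < C4 ∧ ∀ (ν : Measure ℝ) [IsProbabilityMeasure ν],
    LogConcaveMeasure ν → ∀ σ : ℝ, 0 < σ → Integrable (fun y => y ^ 2) ν →
    ∫ y, y ^ 2 ∂ν ≤ σ ^ 2 →
    Integrable (fun y => y ^ 4) ν ∧ ∫ y, y ^ 4 ∂ν ≤ C4 * σ ^ 4 := by
  have hs : Summable fun j : ℕ => 256 * ((j : ℝ) + 2) ^ 4 * (1 / 3) ^ j := by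
    have h0 : Summable fun j : ℕ => ((j : ℝ)) ^ 4 * (1 / 3) ^ j :=
      summable_pow_mul_geometric_of_norm_lt_one 4 (by norm_num)
    have h1 := (summable_nat_add_iff 2).2 h0
    refine (h1.mul_left (256 * 9)).congr fun j => ?_
    push_cast
    rw [pow_add]
    ring
  set S := ∑' j : ℕ, 256 * ((j : ℝ) + 2) ^ 4 * (1 / 3) ^ j with hS
  have hS0 : 0 ≤ S := tsum_nonneg fun j => by positivity
  refine ⟨16 + S, by positivity, fun ν _ h σ hσ hi h2 => ?_⟩
  set A : ℕ → Set ℝ := fun j => {y | 4 * σ * (j + 1) - 2 * σ ≤ |y|} with hA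
  have hAm : ∀ j, MeasurableSet (A j) := fun j =>
    measurableSet_le measurable_const continuous_abs.measurable
  have pt : ∀ y : ℝ, ENNReal.ofReal (y ^ 4) ≤ ENNReal.ofReal (16 * σ ^ 4) +
      ∑' j : ℕ, (A j).indicator (fun _ => ENNReal.ofReal (256 * ((j : ℝ) + 2) ^ 4 * σ ^ 4)) y := by
    intro y
    by_cases hy : |y| < 2 * σ
    · refine le_add_right (ENNReal.ofReal_le_ofReal ?_)
      have := pow_le_pow_left₀ (abs_nonneg y) hy.le 4
      rw [show |y| ^ 4 = y ^ 4 from Even.pow_abs (by decide) y] at this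
      nlinarith
    · push Not at hy
      set j := ⌊(|y| - 2 * σ) / (4 * σ)⌋₊ with hj
      have h0 : 0 ≤ (|y| - 2 * σ) / (4 * σ) := div_nonneg (by linarith) (by linarith)
      have f1 := Nat.floor_le h0
      have f2 := Nat.lt_floor_add_one ((|y| - 2 * σ) / (4 * σ))
      rw [le_div_iff₀ (by positivity)] at f1
      rw [div_lt_iff₀ (by positivity)] at f2
      have hmem : y ∈ A j := by
        simp only [hA, mem_ofPred_eq]
        linarith
      refine le_add_left (le_trans ?_ (ENNReal.le_tsum j))
      rw [indicator_of_mem hmem]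
      refine ENNReal.ofReal_le_ofReal ?_
      have : |y| ≤ 4 * σ * (j + 2) := by linarith
      have := pow_le_pow_left₀ (abs_nonneg y) this 4
      rw [show |y| ^ 4 = y ^ 4 from Even.pow_abs (by decide) y] at this
      calc y ^ 4 ≤ _ := this
        _ = _ := by ring
  have lin : ∫⁻ y, ENNReal.ofReal (y ^ 4) ∂ν ≤ ENNReal.ofReal ((16 + S) * σ ^ 4) := by
    calc ∫⁻ y, ENNReal.ofReal (y ^ 4) ∂ν
        ≤ ∫⁻ y, (ENNReal.ofReal (16 * σ ^ 4) + ∑' j : ℕ, (A j).indicator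
            (fun _ => ENNReal.ofReal (256 * ((j : ℝ) + 2) ^ 4 * σ ^ 4)) y) ∂ν := lintegral_mono pt
      _ = ENNReal.ofReal (16 * σ ^ 4) +
            ∑' j : ℕ, ENNReal.ofReal (256 * ((j : ℝ) + 2) ^ 4 * σ ^ 4) * ν (A j) := by
          rw [lintegral_add_left measurable_const, lintegral_tsum fun j =>
            (measurable_const.indicator (hAm j)).aemeasurable]
          simp [hAm]
      _ ≤ ENNReal.ofReal (16 * σ ^ 4) +
            ∑' j : ℕ, ENNReal.ofReal (256 * ((j : ℝ) + 2) ^ 4 * (1 / 3) ^ j * σ ^ 4) := by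
          gcongr with j
          refine (mul_le_mul_right (tail_abs h hσ hi h2 j) _).trans (le_of_eq ?_)
          rw [← ENNReal.ofReal_mul (by positivity)]
          congr 1; ring
      _ = ENNReal.ofReal ((16 + S) * σ ^ 4) := by
          rw [← ENNReal.ofReal_tsum_of_nonneg (fun j => by positivity) (hs.mul_right _),
            tsum_mul_right, ← ENNReal.ofReal_add (by positivity) (by positivity), add_mul]
  have hint : Integrable (fun y : ℝ => y ^ 4) ν := by
    refine ⟨by fun_prop, ?_⟩
    rw [hasFiniteIntegral_iff_ofReal (Filter.Eventually.of_forall fun y => by positivity)]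
    exact lin.trans_lt ENNReal.ofReal_lt_top
  refine ⟨hint, ?_⟩
  rw [integral_eq_lintegral_of_nonneg_ae (Filter.Eventually.of_forall fun y => by positivity)
    (by fun_prop)]
  exact ENNReal.toReal_le_of_le_ofReal (by positivity) lin

/-- Paley–Zygmund type bound: a centered real variable whose fourth moment is controlled by its
variance exceeds a fixed fraction of its standard deviation with probability bounded below. -/
lemma paley_zygmund {C4 : ℝ} (hC4 : 0 < C4) : ∃ a δ : ℝ, 0 < a ∧ 0 < δ ∧
    ∀ (ν : Measure ℝ) [IsProbabilityMeasure ν] (σ : ℝ), 0 < σ → Integrable (fun y => y) ν →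
    Integrable (fun y => y ^ 2) ν → Integrable (fun y => y ^ 4) ν → ∫ y, y ∂ν = 0 →
    ∫ y, y ^ 2 ∂ν = σ ^ 2 → ∫ y, y ^ 4 ∂ν ≤ C4 * σ ^ 4 → δ ≤ ν.real {y | a * σ < y} := by
  set M := Real.sqrt (2 * C4) with hM
  have hM0 : 0 < M := Real.sqrt_pos.2 (by positivity)
  have hM2 : M ^ 2 = 2 * C4 := Real.sq_sqrt (by positivity)
  refine ⟨1 / (16 * M), 1 / (32 * M ^ 2), by positivity, by positivity, ?_⟩
  intro ν _ σ hσ h1 h2 h4 e1 e2 e4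
  set P := ν.real {y | 1 / (16 * M) * σ < y} with hP
  have hms : MeasurableSet {y : ℝ | 1 / (16 * M) * σ < y} :=
    measurableSet_lt measurable_const measurable_id
  -- `max y 0 = (|y| + y)/2` and `y² ≤ Mσ|y| + y⁴/(M²σ²)` bound the positive part from below.
  have lower : ∀ y : ℝ, 1 / (2 * M * σ) * (y ^ 2 - y ^ 4 / (M ^ 2 * σ ^ 2)) + y / 2 ≤ max y 0 := by
    intro y
    have hmax : max y 0 = (|y| + y) / 2 := by
      rcases le_total 0 y with hy | hy
      · rw [max_eq_left hy, abs_of_nonneg hy]; ring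
      · rw [max_eq_right hy, abs_of_nonpos hy]; ring
    have : y ^ 2 - y ^ 4 / (M ^ 2 * σ ^ 2) ≤ M * σ * |y| := by
      set z := |y| / (M * σ) with hz
      have hy : |y| = z * (M * σ) := by rw [hz]; field_simp
      have hz0 : 0 ≤ z := by positivity
      rw [← sq_abs y, show y ^ 4 = |y| ^ 4 from (Even.pow_abs (by decide) y).symm, hy]
      have : (z * (M * σ)) ^ 2 - (z * (M * σ)) ^ 4 / (M ^ 2 * σ ^ 2)
          = (z ^ 2 - z ^ 4) * (M * σ) ^ 2 := by field_simp
      rw [this]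
      have h3 : z ^ 2 - z ^ 4 ≤ z := by
        rcases le_total z 1 with h | h
        · nlinarith [pow_nonneg hz0 4, mul_nonneg hz0 (sub_nonneg.2 h)]
        · nlinarith [pow_nonneg hz0 2, mul_nonneg (pow_nonneg hz0 2) (sub_nonneg.2 h),
            pow_nonneg hz0 4, mul_nonneg (pow_nonneg hz0 3) (sub_nonneg.2 h)]
      have : 0 ≤ (M * σ) ^ 2 := by positivity
      nlinarith
    rw [hmax]
    have h5 : 1 / (2 * M * σ) * (y ^ 2 - y ^ 4 / (M ^ 2 * σ ^ 2)) ≤ 1 / (2 * M * σ) * (M * σ * |y|) := by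
      gcongr
    have h6 : 1 / (2 * M * σ) * (M * σ * |y|) = |y| / 2 := by field_simp
    linarith
  have upper : ∀ y : ℝ, max y 0 ≤ 1 / (16 * M) * σ +
      {y : ℝ | 1 / (16 * M) * σ < y}.indicator (fun _ => 2 * M * σ) y + y ^ 2 / (8 * M * σ) := by
    intro y
    have hq : 0 ≤ y ^ 2 / (8 * M * σ) := by positivity
    have ha : 0 < 1 / (16 * M) * σ := by positivity
    by_cases hy : 1 / (16 * M) * σ < y
    · rw [indicator_of_mem (by exact hy), max_eq_left (ha.trans hy).le]
      have : y ≤ 2 * M * σ + y ^ 2 / (8 * M * σ) := by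
        have : y ^ 2 / (8 * M * σ) + 2 * M * σ - y = (y - 4 * M * σ) ^ 2 / (8 * M * σ) := by
          field_simp; ring
        have h7 : 0 ≤ (y - 4 * M * σ) ^ 2 / (8 * M * σ) := by positivity
        linarith
      linarith
    · rw [indicator_of_notMem (by exact hy)]
      push Not at hy
      have := max_le hy ha.le
      linarith
  have hle := integral_mono (μ := ν)
    (f := fun y => 1 / (2 * M * σ) * (y ^ 2 - y ^ 4 / (M ^ 2 * σ ^ 2)) + y / 2)
    (g := fun y => 1 / (16 * M) * σ +
      {y : ℝ | 1 / (16 * M) * σ < y}.indicator (fun _ => 2 * M * σ) y + y ^ 2 / (8 * M * σ))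
    (((h2.sub (h4.div_const _)).const_mul _).add (h1.div_const _))
    (((integrable_const _).add ((integrable_const _).indicator hms)).add (h2.div_const _))
    (fun y => (lower y).trans (upper y))
  have i4 : Integrable (fun y : ℝ => y ^ 4 / (M ^ 2 * σ ^ 2)) ν := h4.div_const _
  have i1 : Integrable (fun y : ℝ => 1 / (2 * M * σ) * (y ^ 2 - y ^ 4 / (M ^ 2 * σ ^ 2))) ν :=
    (h2.sub i4).const_mul _
  have i0 : Integrable ({y : ℝ | 1 / (16 * M) * σ < y}.indicator (fun _ => 2 * M * σ)) ν :=
    (integrable_const _).indicator hms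
  have i3 : Integrable (fun y : ℝ => 1 / (16 * M) * σ +
      {y : ℝ | 1 / (16 * M) * σ < y}.indicator (fun _ => 2 * M * σ) y) ν :=
    (integrable_const _).add i0
  rw [integral_add i1 (h1.div_const _), integral_const_mul, integral_sub h2 i4, integral_div,
    integral_div, integral_add i3 (h2.div_const _), integral_add (integrable_const _) i0,
    integral_indicator_const _ hms, integral_div, e1, e2] at hle
  simp only [integral_const, probReal_univ, smul_eq_mul, one_mul, zero_div, add_zero] at hle
  rw [← hP] at hle
  have h4' : (∫ y, y ^ 4 ∂ν) / (M ^ 2 * σ ^ 2) ≤ σ ^ 2 / 2 := by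
    rw [div_le_iff₀ (by positivity), hM2]
    nlinarith
  have h8 : 1 / (2 * M * σ) * (σ ^ 2 / 2) ≤
      1 / (2 * M * σ) * (σ ^ 2 - (∫ y, y ^ 4 ∂ν) / (M ^ 2 * σ ^ 2)) := by
    gcongr; linarith
  have h9 : 1 / (2 * M * σ) * (σ ^ 2 / 2) ≤
      1 / (16 * M) * σ + P * (2 * M * σ) + σ ^ 2 / (8 * M * σ) := h8.trans hle
  have h10 : 1 / (2 * M * σ) * (σ ^ 2 / 2) - 1 / (16 * M) * σ - σ ^ 2 / (8 * M * σ)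
      = 1 / (32 * M ^ 2) * (2 * M * σ) := by field_simp; norm_num
  exact le_of_mul_le_mul_right (by linarith) (by positivity : 0 < 2 * M * σ)

/-! ### Small balls and negative moments in dimension three -/

/-- Tonelli for the set of pairs at distance at most `ε`. -/
lemma lintegral_ball_swap (ν : Measure E3) [IsProbabilityMeasure ν] (ε : ℝ) {S : Set E3}
    (hS : MeasurableSet S) :
    ∫⁻ x in S, ν (Metric.closedBall x ε) = ∫⁻ y, volume (Metric.closedBall y ε ∩ S) ∂ν := by
  have hT : MeasurableSet {p : E3 × E3 | dist p.1 p.2 ≤ ε} :=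
    measurableSet_le (by fun_prop) measurable_const
  have h1 := Measure.prod_apply (μ := ν) (ν := volume.restrict S) hT
  have h2 := Measure.prod_apply_symm (μ := ν) (ν := volume.restrict S) hT
  rw [h1] at h2
  refine (Eq.trans ?_ h2.symm).trans ?_
  · rfl
  · refine lintegral_congr fun y => ?_
    rw [← Measure.restrict_apply' hS]
    congr 1
    ext x
    simp [dist_comm]

lemma measurable_ball_measure (ν : Measure E3) [IsProbabilityMeasure ν] (ε : ℝ) :
    Measurable fun x : E3 => ν (Metric.closedBall x ε) := by
  have hT : MeasurableSet {p : E3 × E3 | dist p.2 p.1 ≤ ε} :=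
    measurableSet_le (by fun_prop) measurable_const
  exact measurable_measure_prodMk_left hT

lemma lintegral_comp_half (G : E3 → ℝ≥0∞) (hG : Measurable G) :
    ∫⁻ x, G ((1 / 2 : ℝ) • x) = 8 * ∫⁻ x, G x := by
  have := Measure.map_addHaar_smul (volume : Measure E3) (r := (1 / 2 : ℝ)) (by norm_num)
  rw [← lintegral_map (f := G) (g := fun x : E3 => (1 / 2 : ℝ) • x) hG (by fun_prop)]
  rw [this, lintegral_smul_measure]
  congr 1
  simp
  norm_num

/-- `x ↦ ν(B(x, ε))` is log-concave. -/
lemma LogConcaveMeasure.ball {ν : Measure E3} (h : LogConcaveMeasure ν) (ε : ℝ) {a b : ℝ}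
    (ha : 0 < a) (hb : 0 < b) (hab : a + b = 1) (x y : E3) :
    ν (Metric.closedBall x ε) ^ a * ν (Metric.closedBall y ε) ^ b
      ≤ ν (Metric.closedBall (a • x + b • y) ε) := by
  refine h a b ha hb hab _ _ _ measurableSet_closedBall measurableSet_closedBall
    measurableSet_closedBall fun u hu v hv => ?_
  rw [mem_closedBall_iff_norm] at *
  have : a • u + b • v - (a • x + b • y) = a • (u - x) + b • (v - y) := by module
  rw [this]
  calc _ ≤ ‖a • (u - x)‖ + ‖b • (v - y)‖ := norm_add_le _ _
    _ = a * ‖u - x‖ + b * ‖v - y‖ := by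
      rw [norm_smul, norm_smul, Real.norm_of_nonneg ha.le, Real.norm_of_nonneg hb.le]
    _ ≤ a * ε + b * ε := by gcongr
    _ = ε := by rw [← add_mul, hab, one_mul]

/-- Small ball estimate in dimension three. If `ν` is log-concave and in every direction puts mass
at least `δ` beyond distance `a s`, then balls of radius `ε` at the origin have mass
`O((ε/s)³)`. The function `G x = ν(B(x, ε))` is log-concave with integral `vol B(0, ε)`. Either
its superlevel set `{G ≥ G 0 / K}` fills a ball of radius `c ~ s`, and Markov's inequality bounds
`G 0`, or that set lies in a half-space at distance at most `c`, and log-concavity along rays makes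
the mass of `G` at distance `2c` in that direction too small. -/
lemma small_ball {a δ : ℝ} (ha : 0 < a) (hδ : 0 < δ) : ∃ C : ℝ, 0 < C ∧
    ∀ (ν : Measure E3) [IsProbabilityMeasure ν], LogConcaveMeasure ν → ∀ s : ℝ, 0 < s →
    (∀ θ : E3, ‖θ‖ = 1 → δ ≤ ν.real {y | a * s < ⟪θ, y⟫}) →
    ∀ ε : ℝ, 0 < ε → ν (Metric.closedBall 0 ε) ≤ ENNReal.ofReal (C * (ε / s) ^ 3) := by
  refine ⟨9 / δ * (4 / a) ^ 3 + (2 / a) ^ 3, by positivity, ?_⟩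
  intro ν _ h s hs hdir ε hε
  by_cases hεs : a * s / 2 < ε
  · refine prob_le_one.trans ?_
    rw [← ENNReal.ofReal_one]
    refine ENNReal.ofReal_le_ofReal ?_
    have h1 : 1 ≤ 2 / a * (ε / s) := by
      rw [div_mul_div_comm, le_div_iff₀ (by positivity)]; linarith
    have h2 : 1 ≤ (2 / a * (ε / s)) ^ 3 := one_le_pow₀ h1
    rw [mul_pow] at h2
    have : 0 ≤ 9 / δ * (4 / a) ^ 3 * (ε / s) ^ 3 := by positivity
    nlinarith
  push Not at hεs
  set G : E3 → ℝ≥0∞ := fun x => ν (Metric.closedBall x ε) with hG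
  have hGm : Measurable G := measurable_ball_measure ν ε
  have hGi : ∀ x, G x ≠ ∞ := fun x => measure_ne_top _ _
  set V := volume (Metric.closedBall (0 : E3) ε) with hV
  have hV0 : V ≠ 0 := (Metric.measure_closedBall_pos volume _ hε).ne'
  have hVi : V ≠ ∞ := measure_closedBall_lt_top.ne
  have hVt : ∀ y : E3, volume (Metric.closedBall y ε) = V := fun y => by
    rw [hV, Measure.addHaar_closedBall_center]
  have htot : ∫⁻ x, G x = V := by
    have := lintegral_ball_swap ν ε MeasurableSet.univ
    rw [Measure.restrict_univ] at this
    rw [hG, this]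
    simp [hVt]
  set g := G 0 with hg
  change g ≤ _
  by_cases hg0 : g = 0
  · simp [hg0]
  set K := ENNReal.ofReal (9 / δ) with hK
  have hK0 : K ≠ 0 := by simp [hK]; positivity
  have hKi : K ≠ ∞ := ENNReal.ofReal_ne_top
  set r := g / K with hr
  have hr0 : r ≠ 0 := by simp [hr, hg0, hKi]
  have hri : r ≠ ∞ := ENNReal.div_ne_top (hGi 0) hK0
  set c := a * s / 4 with hc
  have hc0 : 0 < c := by positivity
  set L := {x | r ≤ G x} with hL
  have hLc : Convex ℝ L := by
    rw [convex_iff_forall_pos]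
    intro x hx y hy p q hp hq hpq
    calc r = r ^ p * r ^ q := by rw [← ENNReal.rpow_add _ _ hr0 hri, hpq, ENNReal.rpow_one]
      _ ≤ G x ^ p * G y ^ q := by gcongr <;> assumption
      _ ≤ _ := h.ball ε hp hq hpq x y
  have h0L : (0 : E3) ∈ L := by
    have h1K : 1 ≤ K := by
      rw [hK, ← ENNReal.ofReal_one]
      refine ENNReal.ofReal_le_ofReal ?_
      have : δ ≤ 1 := (hdir (EuclideanSpace.single 0 1) (by simp)).trans
        measureReal_le_one
      rw [le_div_iff₀ hδ]; linarith
    change r ≤ g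
    exact ENNReal.div_le_of_le_mul (le_mul_of_one_le_right' h1K)
  -- Dichotomy: Markov if `L` is thick, otherwise a half-space at distance at most `c` avoids `L`.
  by_cases hsub : Metric.ball 0 c ⊆ closure L
  · have e1 : volume (closure L) ≤ volume L := by
      calc volume (closure L) ≤ volume (L ∪ frontier L) := by
            refine measure_mono fun x hx => ?_
            by_cases hxL : x ∈ L
            · exact Or.inl hxL
            · exact Or.inr ⟨hx, fun hi => hxL (interior_subset hi)⟩
        _ ≤ volume L + volume (frontier L) := measure_union_le _ _
        _ = volume L := by rw [hLc.addHaar_frontier volume, add_zero]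
    have e2 : r * volume L ≤ V := htot ▸ mul_meas_ge_le_lintegral hGm r
    have e3 : g * volume (Metric.ball (0 : E3) c) ≤ K * V := by
      calc g * volume (Metric.ball (0 : E3) c) ≤ g * volume L := by
            exact mul_le_mul' le_rfl ((measure_mono hsub).trans e1)
        _ = K * (r * volume L) := by
            rw [hr, ← mul_assoc, ENNReal.mul_div_cancel hK0 hKi]
        _ ≤ _ := by gcongr
    have e4 : V = ENNReal.ofReal ((ε / c) ^ 3) * volume (Metric.ball (0 : E3) c) := by
      rw [hV, Measure.addHaar_closedBall _ _ hε.le, Measure.addHaar_ball _ _ hc0.le, ← mul_assoc,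
        ← ENNReal.ofReal_mul (by positivity)]
      congr 2
      simp
      field_simp
    rw [e4, ← mul_assoc, ENNReal.mul_le_mul_iff_left (Metric.measure_ball_pos _ _ hc0).ne'
      measure_ball_lt_top.ne, hK, ← ENNReal.ofReal_mul (by positivity)] at e3
    refine e3.trans (ENNReal.ofReal_le_ofReal ?_)
    have : ε / c = 4 / a * (ε / s) := by rw [hc]; field_simp
    rw [this, mul_pow, ← mul_assoc, add_mul]
    have : 0 ≤ (2 / a) ^ 3 * (ε / s) ^ 3 := by positivity
    linarith
  · exfalso
    rw [not_subset] at hsub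
    obtain ⟨y, hy, hyL⟩ := hsub
    obtain ⟨f, u, hfu, huf⟩ := geometric_hahn_banach_closed_point hLc.closure isClosed_closure hyL
    have hu0 : 0 < u := by simpa using hfu 0 (subset_closure h0L)
    set w := (InnerProductSpace.toDual ℝ E3).symm f with hw
    have hwf : ∀ x, ⟪w, x⟫ = f x := fun x => InnerProductSpace.toDual_symm_apply
    have hw0 : w ≠ 0 := by
      intro h0
      have := hwf y
      rw [h0, inner_zero_left] at this
      linarith
    have hwn : 0 < ‖w‖ := norm_pos_iff.2 hw0
    set θ := ‖w‖⁻¹ • w with hθ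
    have hθ1 : ‖θ‖ = 1 := by
      rw [hθ, norm_smul, norm_inv, norm_norm, inv_mul_cancel₀ hwn.ne']
    have hθf : ∀ x, ⟪θ, x⟫ = ‖w‖⁻¹ * f x := fun x => by
      rw [hθ, real_inner_smul_left, hwf]
    have hout : ∀ x, c ≤ ⟪θ, x⟫ → G x < r := by
      intro x hx
      by_contra hxL
      push Not at hxL
      have h1 : f x < f y := (hfu x (subset_closure hxL)).trans huf
      have h2 : ⟪θ, x⟫ < ⟪θ, y⟫ := by
        rw [hθf, hθf]
        exact mul_lt_mul_of_pos_left h1 (inv_pos.2 hwn)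
      have h3 : ⟪θ, y⟫ ≤ ‖θ‖ * ‖y‖ := real_inner_le_norm _ _
      rw [hθ1, one_mul] at h3
      have : ‖y‖ < c := by simpa using hy
      linarith
    -- Midpoint log-concavity between `0` and `x` gives `G 0 * G x ≤ G (x / 2) ^ 2`.
    have hdec : ∀ x, 2 * c ≤ ⟪θ, x⟫ → G x ≤ G ((1 / 2 : ℝ) • x) / K := by
      intro x hx
      have h1 : G ((1 / 2 : ℝ) • x) < r := hout _ (by rw [real_inner_smul_right]; linarith)
      have h2 := h.ball ε (a := 1 / 2) (b := 1 / 2) (by norm_num) (by norm_num) (by norm_num) 0 x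
      rw [smul_zero, zero_add] at h2
      have h3 := ENNReal.rpow_le_rpow h2 (z := 2) (by norm_num)
      rw [ENNReal.mul_rpow_of_nonneg _ _ (by norm_num), ← ENNReal.rpow_mul, ← ENNReal.rpow_mul] at h3
      norm_num at h3
      have h4 : g * G x ≤ g * (G ((1 / 2 : ℝ) • x) / K) := by
        calc g * G x ≤ G ((1 / 2 : ℝ) • x) ^ 2 := h3
          _ ≤ r * G ((1 / 2 : ℝ) • x) := by rw [sq]; gcongr
          _ = _ := by simp only [hr, div_eq_mul_inv _ K]; ring
      exact (ENNReal.mul_le_mul_iff_right hg0 (hGi 0)).1 h4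
    set S := {x : E3 | 2 * c ≤ ⟪θ, x⟫} with hS
    have hSm : MeasurableSet S := measurableSet_le measurable_const (by fun_prop)
    -- The mass of `G` far out in direction `θ` is at most `8 V / K`, yet at least `δ V`; `K = 9 / δ`.
    have up : ∫⁻ x in S, G x ≤ 8 * V / K := by
      calc ∫⁻ x in S, G x ≤ ∫⁻ x in S, G ((1 / 2 : ℝ) • x) / K :=
            setLIntegral_mono' hSm fun x hx => hdec x hx
        _ ≤ ∫⁻ x, G ((1 / 2 : ℝ) • x) / K := setLIntegral_le_lintegral _ _
        _ = 8 * V / K := by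
            simp only [div_eq_mul_inv _ K]
            rw [lintegral_mul_const _ (by fun_prop), lintegral_comp_half _ hGm, htot]
    have low : ENNReal.ofReal δ * V ≤ ∫⁻ x in S, G x := by
      rw [hG, lintegral_ball_swap ν ε hSm]
      have hm : MeasurableSet {y : E3 | a * s < ⟪θ, y⟫} :=
        measurableSet_lt measurable_const (by fun_prop)
      calc ENNReal.ofReal δ * V ≤ ν {y | a * s < ⟪θ, y⟫} * V := by
            gcongr
            rw [← ofReal_measureReal]
            exact ENNReal.ofReal_le_ofReal (hdir θ hθ1)
        _ = ∫⁻ y, {y : E3 | a * s < ⟪θ, y⟫}.indicator (fun _ => V) y ∂ν := by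
            rw [lintegral_indicator_const hm, mul_comm]
        _ ≤ _ := by
            refine lintegral_mono fun y => ?_
            by_cases hy : a * s < ⟪θ, y⟫
            · rw [indicator_of_mem (by exact hy), ← hVt y]
              refine measure_mono fun x hx => ⟨hx, ?_⟩
              change 2 * c ≤ ⟪θ, x⟫
              have h1 : ⟪θ, y - x⟫ ≤ ‖θ‖ * ‖y - x‖ := real_inner_le_norm _ _
              rw [inner_sub_right, hθ1, one_mul] at h1
              have h2 : ‖y - x‖ ≤ ε := by
                rw [← mem_closedBall_iff_norm']; exact hx
              linarith
            · rw [indicator_of_notMem (by exact hy)]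
              exact zero_le
    have fin := low.trans up
    rw [ENNReal.le_div_iff_mul_le (Or.inl hK0) (Or.inl hKi), mul_right_comm,
      ENNReal.mul_le_mul_iff_left hV0 hVi, hK, ← ENNReal.ofReal_mul hδ.le,
      mul_div_cancel₀ _ hδ.ne'] at fin
    norm_num at fin

/-- The small ball estimate bounds the negative second moment. -/
lemma neg_moment {C : ℝ} (hC : 0 < C) (ν : Measure E3) {s : ℝ} [IsProbabilityMeasure ν]
    (hs : 0 < s)
    (h : ∀ ε : ℝ, 0 < ε → ν (Metric.closedBall 0 ε) ≤ ENNReal.ofReal (C * (ε / s) ^ 3)) :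
    ∫⁻ y, (ENNReal.ofReal (‖y‖ ^ 2))⁻¹ ∂ν ≤ ENNReal.ofReal ((1 + 8 * C) / s ^ 2) := by
  set B : ℕ → Set E3 := fun k => Metric.closedBall 0 ((1 / 2) ^ k * s) with hB
  have hBm : ∀ k, MeasurableSet (B k) := fun k => measurableSet_closedBall
  -- Dyadic decomposition of `‖y‖⁻²`; both sides are infinite at `y = 0`.
  have pt : ∀ y : E3, (ENNReal.ofReal (‖y‖ ^ 2))⁻¹ ≤ ENNReal.ofReal (1 / s ^ 2) +
      ∑' k : ℕ, (B k).indicator (fun _ => ENNReal.ofReal (4 ^ (k + 1) / s ^ 2)) y := by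
    intro y
    by_cases hy0 : y = 0
    · have : ∑' k : ℕ, (B k).indicator (fun _ => ENNReal.ofReal (4 ^ (k + 1) / s ^ 2)) y = ∞ := by
        refine top_le_iff.1 ?_
        rw [← ENNReal.tsum_const_eq_top_of_ne_zero (α := ℕ) (c := ENNReal.ofReal (1 / s ^ 2))
          (by simp; positivity)]
        refine ENNReal.tsum_le_tsum fun k => ?_
        rw [indicator_of_mem (by simp [hB, hy0]; positivity)]
        refine ENNReal.ofReal_le_ofReal ?_
        gcongr
        exact one_le_pow₀ (by norm_num)
      rw [this]
      simp
    have hyn : 0 < ‖y‖ := norm_pos_iff.2 hy0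
    rw [← ENNReal.ofReal_inv_of_pos (by positivity)]
    by_cases hys : s < ‖y‖
    · refine le_add_right (ENNReal.ofReal_le_ofReal ?_)
      rw [← one_div]
      gcongr
    · push Not at hys
      obtain ⟨k, hk1, hk2⟩ := exists_nat_pow_near_of_lt_one (x := ‖y‖ / s) (y := (1 / 2 : ℝ))
        (by positivity) (by rw [div_le_one hs]; exact hys) (by norm_num) (by norm_num)
      rw [lt_div_iff₀ hs] at hk1
      rw [div_le_iff₀ hs] at hk2
      refine le_add_left (le_trans ?_ (ENNReal.le_tsum k))
      rw [indicator_of_mem (by simpa [hB] using hk2)]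
      refine ENNReal.ofReal_le_ofReal ?_
      rw [← one_div, div_le_div_iff₀ (by positivity) (by positivity), one_mul]
      have := pow_le_pow_left₀ (by positivity) hk1.le 2
      rw [mul_pow, ← pow_mul, mul_comm (k + 1) 2, pow_mul] at this
      calc s ^ 2 = 4 ^ (k + 1) * (((1 / 2) ^ 2) ^ (k + 1) * s ^ 2) := by
            rw [← mul_assoc, ← mul_pow]; norm_num
        _ ≤ _ := by gcongr
  have hsum : HasSum (fun k : ℕ => 4 * C / s ^ 2 * (1 / 2 : ℝ) ^ k) (4 * C / s ^ 2 * 2) :=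
    hasSum_geometric_two.mul_left _
  calc ∫⁻ y, (ENNReal.ofReal (‖y‖ ^ 2))⁻¹ ∂ν
      ≤ ∫⁻ y, (ENNReal.ofReal (1 / s ^ 2) + ∑' k : ℕ, (B k).indicator
          (fun _ => ENNReal.ofReal (4 ^ (k + 1) / s ^ 2)) y) ∂ν := lintegral_mono pt
    _ = ENNReal.ofReal (1 / s ^ 2) + ∑' k : ℕ, ENNReal.ofReal (4 ^ (k + 1) / s ^ 2) * ν (B k) := by
        rw [lintegral_add_left measurable_const, lintegral_tsum fun j =>
            (measurable_const.indicator (hBm j)).aemeasurable]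
        simp [hBm]
    _ ≤ ENNReal.ofReal (1 / s ^ 2) + ∑' k : ℕ, ENNReal.ofReal (4 * C / s ^ 2 * (1 / 2) ^ k) := by
        gcongr with k
        refine (mul_le_mul_right (h _ (by positivity)) _).trans (le_of_eq ?_)
        rw [← ENNReal.ofReal_mul (by positivity)]
        congr 1
        rw [mul_div_cancel_right₀ _ hs.ne', pow_succ, ← pow_mul, mul_comm k 3, pow_mul]
        have : (4 : ℝ) ^ k * ((1 / 2) ^ 3) ^ k = (1 / 2) ^ k := by
          rw [← mul_pow]; norm_num
        rw [← this]
        ring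
    _ = ENNReal.ofReal ((1 + 8 * C) / s ^ 2) := by
        rw [← ENNReal.ofReal_tsum_of_nonneg (fun j => by positivity) hsum.summable,
            hsum.tsum_eq, ← ENNReal.ofReal_add (by positivity) (by positivity)]
        congr 1
        ring

/-! ### Weighted second moments -/

lemma rpow_le_one_add {u q : ℝ} (hu : 0 < u) (h0 : 0 ≤ q) (h1 : q ≤ 1) : u ^ q ≤ 1 + u := by
  rcases le_total u 1 with h | h
  · have := Real.rpow_le_one hu.le h h0
    linarith
  · have := Real.rpow_le_rpow_of_exponent_le h h1
    rw [Real.rpow_one] at this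
    linarith

section Weighted

variable {Ω : Type*} [MeasurableSpace Ω] {P : Measure Ω} {u Y : Ω → ℝ}
  {q v z C4 D : ℝ}

/-- The weight `u ^ (-q)` is at least `1 / (1 + u)`, hence at least the parabola `5/8 - u²/8` touching
`1 / (1 + u)` at `u = 1`. -/
lemma weight_lower [IsProbabilityMeasure P] (hu : ∀ᵐ x ∂P, 0 < u x)
    (h0 : 0 ≤ q) (h1 : q ≤ 1)
    (hu2 : Integrable (fun x => u x ^ 2) P) (hu21 : ∫ x, u x ^ 2 ∂P = 1)
    (hw : Integrable (fun x => u x ^ (-q)) P) : 1 / 2 ≤ ∫ x, u x ^ (-q) ∂P := by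
  have h : ∫ x, (5 / 8 - u x ^ 2 / 8) ∂P ≤ ∫ x, u x ^ (-q) ∂P := by
    refine integral_mono_ae ((integrable_const _).sub (hu2.div_const 8)) hw ?_
    filter_upwards [hu] with x hx
    have e1 := rpow_le_one_add hx h0 h1
    have e2 : 1 / (1 + u x) ≤ u x ^ (-q) := by
      rw [Real.rpow_neg hx.le, ← one_div]
      exact one_div_le_one_div_of_le (Real.rpow_pos_of_pos hx _) e1
    refine le_trans ?_ e2
    rw [le_div_iff₀ (by linarith)]
    nlinarith [mul_nonneg (sq_nonneg (u x - 1)) (by linarith : 0 ≤ u x + 3)]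
  rw [integral_sub (integrable_const _) (hu2.div_const 8), integral_div (8 : ℝ) (fun x => u x ^ 2),
    hu21, integral_const] at h
  simp at h
  linarith

/-- The unweighted variance is at most a constant times the weighted one: Young gives
`1 ≤ (B/2) u ^ (-q) + u ^ q / (2B)`, then `u ^ q ≤ 1 + u`, and `Y² u` is bounded by `u²` and the fourth
moment of `Y`. The choice of `B` lets the error be absorbed in half of `v`. -/
lemma variance_le_weighted [IsProbabilityMeasure P] (hC4 : 0 < C4) (hu : ∀ᵐ x ∂P, 0 < u x)
    (h0 : 0 ≤ q) (h1 : q ≤ 1)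
    (hu2 : Integrable (fun x => u x ^ 2) P) (hu21 : ∫ x, u x ^ 2 ∂P = 1)
    (hY : Integrable (fun x => Y x ^ 2) P) (hYv : ∫ x, Y x ^ 2 ∂P = v) (hv : 0 < v)
    (hY4 : Integrable (fun x => Y x ^ 4) P) (hY4v : ∫ x, Y x ^ 4 ∂P ≤ C4 * v ^ 2)
    (hYw : Integrable (fun x => Y x ^ 2 * u x ^ (-q)) P) :
    v ≤ (3 + C4) / 2 * ∫ x, Y x ^ 2 * u x ^ (-q) ∂P := by
  set B := (3 + C4) / 2 with hB
  have hB0 : 0 < B := by positivity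
  set I := ∫ x, Y x ^ 2 * u x ^ (-q) ∂P with hI
  have i1 : Integrable (fun x => B / 2 * (Y x ^ 2 * u x ^ (-q))) P := hYw.const_mul _
  have i2 : Integrable (fun x => 1 / (2 * B) * Y x ^ 2) P := hY.const_mul _
  have i3 : Integrable (fun x => v / (4 * B) * u x ^ 2) P := hu2.const_mul _
  have i4 : Integrable (fun x => 1 / (4 * B * v) * Y x ^ 4) P := hY4.const_mul _
  have i12 : Integrable (fun x => B / 2 * (Y x ^ 2 * u x ^ (-q)) + 1 / (2 * B) * Y x ^ 2) P :=
    i1.add i2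
  have i123 : Integrable (fun x => B / 2 * (Y x ^ 2 * u x ^ (-q)) + 1 / (2 * B) * Y x ^ 2
      + v / (4 * B) * u x ^ 2) P := i12.add i3
  have h : ∫ x, Y x ^ 2 ∂P ≤ ∫ x, (B / 2 * (Y x ^ 2 * u x ^ (-q)) + 1 / (2 * B) * Y x ^ 2
      + v / (4 * B) * u x ^ 2 + 1 / (4 * B * v) * Y x ^ 4) ∂P := by
    refine integral_mono_ae hY (i123.add i4) ?_
    filter_upwards [hu] with x hx
    have e1 := rpow_le_one_add hx h0 h1
    have hp := Real.rpow_pos_of_pos hx q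
    rw [Real.rpow_neg hx.le]
    set W := u x ^ q
    have e2 : 1 ≤ B / 2 * W⁻¹ + 1 / (2 * B) * W := by
      have : B / 2 * W⁻¹ + 1 / (2 * B) * W - 1 = (B - W) ^ 2 / (2 * B * W) := by
        field_simp; ring
      have : 0 ≤ (B - W) ^ 2 / (2 * B * W) := by positivity
      linarith
    have e3 : Y x ^ 2 * u x ≤ v / 2 * u x ^ 2 + 1 / (2 * v) * Y x ^ 4 := by
      have : v / 2 * u x ^ 2 + 1 / (2 * v) * Y x ^ 4 - Y x ^ 2 * u x
          = (v * u x - Y x ^ 2) ^ 2 / (2 * v) := by field_simp; ring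
      have : 0 ≤ (v * u x - Y x ^ 2) ^ 2 / (2 * v) := by positivity
      linarith
    have e4 : 1 / (2 * B) * (W * Y x ^ 2) ≤ 1 / (2 * B) *
        (Y x ^ 2 + (v / 2 * u x ^ 2 + 1 / (2 * v) * Y x ^ 4)) := by
      gcongr
      nlinarith [mul_le_mul_of_nonneg_right e1 (sq_nonneg (Y x))]
    have e5 := mul_le_mul_of_nonneg_right e2 (sq_nonneg (Y x))
    have e6 : 1 / (2 * B) * (Y x ^ 2 + (v / 2 * u x ^ 2 + 1 / (2 * v) * Y x ^ 4))
        = 1 / (2 * B) * Y x ^ 2 + v / (4 * B) * u x ^ 2 + 1 / (4 * B * v) * Y x ^ 4 := by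
      field_simp; ring
    nlinarith
  rw [integral_add i123 i4, integral_add i12 i3, integral_add i1 i2,
    integral_const_mul, integral_const_mul, integral_const_mul, integral_const_mul, hYv, hu21,
    ← hI] at h
  have e : 1 / (4 * B * v) * ∫ x, Y x ^ 4 ∂P ≤ C4 * v / (4 * B) := by
    calc _ ≤ 1 / (4 * B * v) * (C4 * v ^ 2) := by gcongr
      _ = _ := by field_simp
  have e' : 1 / (2 * B) * v + v / (4 * B) * 1 + C4 * v / (4 * B) = v / 2 := by
    have : C4 = 2 * B - 3 := by rw [hB]; ring
    rw [this]; field_simp; ring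
  linarith

lemma integrable_inv_sq (hum : AEMeasurable u P) (hD : 0 ≤ D)
    (hu : ∀ᵐ x ∂P, 0 < u x)
    (h : ∫⁻ x, (ENNReal.ofReal (u x ^ 2))⁻¹ ∂P ≤ ENNReal.ofReal D) :
    Integrable (fun x => (u x ^ 2)⁻¹) P ∧ ∫ x, (u x ^ 2)⁻¹ ∂P ≤ D := by
  have hm : AEStronglyMeasurable (fun x => (u x ^ 2)⁻¹) P :=
    (hum.pow_const 2).inv.aestronglyMeasurable
  have e : ∫⁻ x, ENNReal.ofReal ((u x ^ 2)⁻¹) ∂P ≤ ENNReal.ofReal D := by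
    refine le_trans (le_of_eq (lintegral_congr_ae ?_)) h
    filter_upwards [hu] with x hx
    rw [ENNReal.ofReal_inv_of_pos (by positivity)]
  have hn : 0 ≤ᵐ[P] fun x => (u x ^ 2)⁻¹ := Filter.Eventually.of_forall fun x => by positivity
  refine ⟨⟨hm, ?_⟩, ?_⟩
  · rw [hasFiniteIntegral_iff_ofReal hn]
    exact e.trans_lt ENNReal.ofReal_lt_top
  · rw [integral_eq_lintegral_of_nonneg_ae hn hm]
    exact ENNReal.toReal_le_of_le_ofReal hD e

lemma inv_rpow_le {u q : ℝ} (hu : 0 < u) (h0 : 0 ≤ q) (h1 : q ≤ 1) : u ^ (-q) ≤ 1 + u⁻¹ := by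
  rw [Real.rpow_neg hu.le, ← Real.inv_rpow hu.le]
  exact rpow_le_one_add (inv_pos.2 hu) h0 h1

/-- A negative second moment of `u` bounds the total weight, as `u ^ (-q) ≤ 1 + u⁻¹ ≤ 2 + u⁻²`. -/
lemma weight_upper [IsProbabilityMeasure P] (hu : ∀ᵐ x ∂P, 0 < u x)
    (h0 : 0 ≤ q) (h1 : q ≤ 1)
    (hw : Integrable (fun x => u x ^ (-q)) P)
    (hi : Integrable (fun x => (u x ^ 2)⁻¹) P) (hiD : ∫ x, (u x ^ 2)⁻¹ ∂P ≤ D) :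
    ∫ x, u x ^ (-q) ∂P ≤ 2 + D := by
  have h : ∫ x, u x ^ (-q) ∂P ≤ ∫ x, (2 + (u x ^ 2)⁻¹) ∂P := by
    refine integral_mono_ae hw ((integrable_const _).add hi) ?_
    filter_upwards [hu] with x hx
    refine (inv_rpow_le hx h0 h1).trans ?_
    rw [← inv_pow]
    nlinarith [sq_nonneg ((u x)⁻¹ - 1 / 2)]
  rw [integral_add (integrable_const _) hi] at h
  simp at h
  linarith

/-- The converse of `variance_le_weighted`, given a negative second moment of `u`: here
`u ^ (-q) ≤ 1 + u⁻¹`, and `Y² u⁻¹` is bounded by `u⁻²` and the fourth moment of `Y`. -/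
lemma weighted_le_variance [IsProbabilityMeasure P] (hu : ∀ᵐ x ∂P, 0 < u x)
    (h0 : 0 ≤ q) (h1 : q ≤ 1)
    (hi : Integrable (fun x => (u x ^ 2)⁻¹) P) (hiD : ∫ x, (u x ^ 2)⁻¹ ∂P ≤ D)
    (hY : Integrable (fun x => Y x ^ 2) P) (hYv : ∫ x, Y x ^ 2 ∂P = v) (hv : 0 < v)
    (hY4 : Integrable (fun x => Y x ^ 4) P) (hY4v : ∫ x, Y x ^ 4 ∂P ≤ C4 * v ^ 2)
    (hYw : Integrable (fun x => Y x ^ 2 * u x ^ (-q)) P) :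
    ∫ x, Y x ^ 2 * u x ^ (-q) ∂P ≤ v * (1 + (D + C4) / 2) := by
  have i3 : Integrable (fun x => v / 2 * (u x ^ 2)⁻¹) P := hi.const_mul _
  have i4 : Integrable (fun x => 1 / (2 * v) * Y x ^ 4) P := hY4.const_mul _
  have i13 : Integrable (fun x => Y x ^ 2 + v / 2 * (u x ^ 2)⁻¹) P := hY.add i3
  have h : ∫ x, Y x ^ 2 * u x ^ (-q) ∂P ≤
      ∫ x, (Y x ^ 2 + v / 2 * (u x ^ 2)⁻¹ + 1 / (2 * v) * Y x ^ 4) ∂P := by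
    refine integral_mono_ae hYw (i13.add i4) ?_
    filter_upwards [hu] with x hx
    have e1 := mul_le_mul_of_nonneg_left (inv_rpow_le hx h0 h1) (sq_nonneg (Y x))
    have e3 : Y x ^ 2 * (u x)⁻¹ ≤ v / 2 * (u x)⁻¹ ^ 2 + 1 / (2 * v) * Y x ^ 4 := by
      have : v / 2 * (u x)⁻¹ ^ 2 + 1 / (2 * v) * Y x ^ 4 - Y x ^ 2 * (u x)⁻¹
          = (v * (u x)⁻¹ - Y x ^ 2) ^ 2 / (2 * v) := by field_simp; ring
      have : 0 ≤ (v * (u x)⁻¹ - Y x ^ 2) ^ 2 / (2 * v) := by positivity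
      linarith
    rw [← inv_pow]
    linarith
  rw [integral_add i13 i4, integral_add hY i3, integral_const_mul, integral_const_mul,
    hYv] at h
  have e : 1 / (2 * v) * ∫ x, Y x ^ 4 ∂P ≤ C4 * v / 2 := by
    calc _ ≤ 1 / (2 * v) * (C4 * v ^ 2) := by gcongr
      _ = _ := by field_simp
  have e' : v / 2 * ∫ x, (u x ^ 2)⁻¹ ∂P ≤ v / 2 * D := by gcongr
  linarith

/-- AM–HM: if each of `k` nonnegative functions has reciprocal mean at most `M`, then the reciprocal
of a function dominating their sum has mean at most `M / k`. -/
lemma lintegral_inv_le_of_sum_le {k : ℕ} (hk : 0 < k) {Q : Fin k → Ω → ℝ} {S : Ω → ℝ}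
    (hQm : ∀ j, Measurable (Q j)) (hQ0 : ∀ j x, 0 ≤ Q j x) (hS : ∀ x, ∑ j, Q j x ≤ S x) {M : ℝ}
    (hM : ∀ j, ∫⁻ x, (ENNReal.ofReal (Q j x))⁻¹ ∂P ≤ ENNReal.ofReal M) :
    ∫⁻ x, (ENNReal.ofReal (S x))⁻¹ ∂P ≤ ENNReal.ofReal (M / k) := by
  have hk' : (0 : ℝ) < k := by exact_mod_cast hk
  have pt : ∀ x, (ENNReal.ofReal (S x))⁻¹ ≤
      ENNReal.ofReal (1 / (k : ℝ) ^ 2) * ∑ j, (ENNReal.ofReal (Q j x))⁻¹ := by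
    intro x
    by_cases h : ∀ j, 0 < Q j x
    · have : Nonempty (Fin k) := ⟨⟨0, hk⟩⟩
      have hs : 0 < ∑ j, Q j x := Finset.sum_pos (fun j _ => h j) Finset.univ_nonempty
      have e := Finset.sq_sum_div_le_sum_sq_div Finset.univ (fun _ : Fin k => (1 : ℝ))
        (g := fun j => Q j x) (fun j _ => h j)
      simp only [Finset.sum_const, Finset.card_univ, Fintype.card_fin, nsmul_eq_mul, mul_one,
        one_pow] at e
      have e2 : (S x)⁻¹ ≤ 1 / (k : ℝ) ^ 2 * ∑ j, (Q j x)⁻¹ := by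
        have h1 : (S x)⁻¹ ≤ (∑ j, Q j x)⁻¹ := inv_anti₀ hs (hS x)
        simp only [one_div] at e ⊢
        have h2 : (∑ j, Q j x)⁻¹ = ((k : ℝ) ^ 2)⁻¹ * ((k : ℝ) ^ 2 / ∑ j, Q j x) := by
          field_simp
        rw [h2] at h1
        exact h1.trans (by gcongr)
      rw [← ENNReal.ofReal_inv_of_pos (hs.trans_le (hS x))]
      calc _ ≤ ENNReal.ofReal (1 / (k : ℝ) ^ 2 * ∑ j, (Q j x)⁻¹) := ENNReal.ofReal_le_ofReal e2
        _ = _ := by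
            rw [ENNReal.ofReal_mul (by positivity), ENNReal.ofReal_sum_of_nonneg
              (fun j _ => inv_nonneg.2 (hQ0 j x))]
            simp only [ENNReal.ofReal_inv_of_pos (h _)]
    · push Not at h
      obtain ⟨j, hj⟩ := h
      have : ∑ j, (ENNReal.ofReal (Q j x))⁻¹ = ⊤ :=
        ENNReal.sum_eq_top.2 ⟨j, Finset.mem_univ _, by rw [ENNReal.ofReal_of_nonpos hj]; simp⟩
      rw [this, ENNReal.mul_top]
      · exact le_top
      · exact (ENNReal.ofReal_pos.2 (by positivity)).ne'
  calc ∫⁻ x, (ENNReal.ofReal (S x))⁻¹ ∂P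
      ≤ ∫⁻ x, ENNReal.ofReal (1 / (k : ℝ) ^ 2) * ∑ j, (ENNReal.ofReal (Q j x))⁻¹ ∂P :=
        lintegral_mono pt
    _ = ENNReal.ofReal (1 / (k : ℝ) ^ 2) * ∑ j, ∫⁻ x, (ENNReal.ofReal (Q j x))⁻¹ ∂P := by
        rw [lintegral_const_mul _ (by fun_prop), lintegral_finsetSum _ (fun j _ => by fun_prop)]
    _ ≤ ENNReal.ofReal (1 / (k : ℝ) ^ 2) * ∑ j : Fin k, ENNReal.ofReal M := by
        gcongr with j; exact hM j
    _ = ENNReal.ofReal (M / k) := by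
        rw [Finset.sum_const, Finset.card_univ, Fintype.card_fin, nsmul_eq_mul,
          ← ENNReal.ofReal_natCast, ← ENNReal.ofReal_mul hk'.le, ← ENNReal.ofReal_mul (by positivity)]
        congr 1
        field_simp

end Weighted

/-- Selecting disjoint triples of large entries. -/
lemma exists_triples {n : ℕ} (hn : 0 < n) {lam : Fin n → ℝ} {W K : ℝ} (hW : 0 < W) (hK : 0 < K)
    (hsum : ∑ i, lam i = W) (hle : ∀ i, lam i ≤ K * W / n) (hnK : 8 * K ≤ n) :
    ∃ (k : ℕ) (g : Fin k × Fin 3 → Fin n), Function.Injective g ∧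
      (n : ℝ) / (12 * K) ≤ k ∧ ∀ a, W / (2 * n) ≤ lam (g a) := by
  have hn' : (0 : ℝ) < n := by exact_mod_cast hn
  set s := Finset.univ.filter fun i => W / (2 * n) ≤ lam i with hs
  -- Entries below half the average contribute at most half of the sum.
  have h1 : W ≤ s.card * (K * W / n) + W / 2 := by
    have a0 := Finset.sum_filter_add_sum_filter_not Finset.univ (fun i => W / (2 * n) ≤ lam i) lam
    rw [hsum] at a0
    have a1 : ∑ i ∈ s, lam i ≤ s.card * (K * W / n) := by
      simpa using Finset.sum_le_card_nsmul s lam _ (fun i _ => hle i)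
    have a2 : ∑ i with ¬ W / (2 * n) ≤ lam i, lam i ≤ W / 2 := by
      calc ∑ i with ¬ W / (2 * n) ≤ lam i, lam i
          ≤ (Finset.univ.filter fun i => ¬ W / (2 * n) ≤ lam i).card • (W / (2 * n)) :=
            Finset.sum_le_card_nsmul _ lam _ fun i hi => by
              have := (Finset.mem_filter.1 hi).2
              linarith
        _ ≤ n • (W / (2 * n)) := by
            refine nsmul_le_nsmul_left (by positivity) ?_
            simpa using Finset.card_le_univ (Finset.univ.filter fun i => ¬ W / (2 * n) ≤ lam i)
        _ = W / 2 := by rw [nsmul_eq_mul]; field_simp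
    linarith
  have h2 : (n : ℝ) / (2 * K) ≤ s.card := by
    rw [div_le_iff₀ (by positivity)]
    have : (s.card : ℝ) * (K * W / n) = s.card * K / n * W := by ring
    rw [this] at h1
    have h3 : 1 / 2 ≤ (s.card : ℝ) * K / n := by
      by_contra hh
      push Not at hh
      nlinarith
    rw [le_div_iff₀ hn'] at h3
    linarith
  have hcard : Fintype.card (Fin (s.card / 3) × Fin 3) ≤ Fintype.card s := by
    simp
    omega
  obtain ⟨e⟩ := Function.Embedding.nonempty_of_card_le hcard
  refine ⟨s.card / 3, fun a => (e a : Fin n), fun a b h => e.injective (Subtype.ext h), ?_, ?_⟩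
  · have h4 : (s.card : ℝ) ≤ 3 * (s.card / 3 : ℕ) + 2 := by
      have : s.card ≤ 3 * (s.card / 3) + 2 := by omega
      exact_mod_cast this
    have h5 : (n : ℝ) / (2 * K) = 6 * (n / (12 * K)) := by field_simp; norm_num
    have h6 : 2 / 3 ≤ (n : ℝ) / (12 * K) := by
      rw [le_div_iff₀ (by positivity)]; linarith
    linarith
  · intro a
    exact (Finset.mem_filter.1 (e a).2).2

/-! ### Covariance and marginals -/

/-- A (weighted) isotropy relation in coordinates is a quadratic-form identity. Integrability is
automatic on the diagonal because the integrals there are nonzero, and off the diagonal by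
`2 |x_i x_j| ≤ x_i ^ 2 + x_j ^ 2`. -/
lemma quad_form {n : ℕ} {ν : Measure (EuclideanSpace ℝ (Fin n))}
    {w : EuclideanSpace ℝ (Fin n) → ℝ} (hw : Measurable w) (hw0 : ∀ x, 0 ≤ w x) {c : ℝ}
    (hc : c ≠ 0) (h : ∀ i j : Fin n, ∫ x, x i * x j * w x ∂ν = if i = j then c else 0)
    (θ : EuclideanSpace ℝ (Fin n)) :
    Integrable (fun x => ⟪x, θ⟫ ^ 2 * w x) ν ∧ ∫ x, ⟪x, θ⟫ ^ 2 * w x ∂ν = c * ‖θ‖ ^ 2 := by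
  have hd : ∀ i, Integrable (fun x : EuclideanSpace ℝ (Fin n) => x i * x i * w x) ν := fun i =>
    Integrable.of_integral_ne_zero (by rw [h i i, if_pos rfl]; exact hc)
  have hij : ∀ i j, Integrable (fun x : EuclideanSpace ℝ (Fin n) => x i * x j * w x) ν := by
    intro i j
    refine ((hd i).add (hd j)).mono' (by fun_prop) (Filter.Eventually.of_forall fun x => ?_)
    rw [Real.norm_eq_abs, abs_mul, abs_of_nonneg (hw0 x)]
    simp only [Pi.add_apply]
    rw [← add_mul]
    refine mul_le_mul_of_nonneg_right ?_ (hw0 x)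
    rw [abs_le]
    constructor <;> nlinarith [sq_nonneg (x i + x j), sq_nonneg (x i - x j)]
  have e : ∀ x : EuclideanSpace ℝ (Fin n),
      ⟪x, θ⟫ ^ 2 * w x = ∑ i, ∑ j, θ i * θ j * (x i * x j * w x) := by
    intro x
    rw [PiLp.inner_apply, sq, Finset.sum_mul_sum, Finset.sum_mul]
    refine Finset.sum_congr rfl fun i _ => ?_
    rw [Finset.sum_mul]
    refine Finset.sum_congr rfl fun j _ => ?_
    simp
    ring
  have hI : ∀ i, Integrable (fun x : EuclideanSpace ℝ (Fin n) =>
      ∑ j, θ i * θ j * (x i * x j * w x)) ν := fun i =>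
    integrable_finsetSum _ fun j _ => (hij i j).const_mul _
  simp only [e]
  refine ⟨integrable_finsetSum _ fun i _ => hI i, ?_⟩
  rw [integral_finsetSum _ fun i _ => hI i]
  have : ∀ i, ∫ x : EuclideanSpace ℝ (Fin n), ∑ j, θ i * θ j * (x i * x j * w x) ∂ν
      = θ i * θ i * c := by
    intro i
    rw [integral_finsetSum _ fun j _ => (hij i j).const_mul _]
    simp only [integral_const_mul, h]
    simp
  simp only [this]
  rw [EuclideanSpace.real_norm_sq_eq, Finset.mul_sum]
  exact Finset.sum_congr rfl fun i _ => by ring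

/-- The marginals of `μ` are centered, and the covariance of `μ` is the Gram form of `A`. -/
structure CovarianceData {n : ℕ} (μ : Measure (EuclideanSpace ℝ (Fin n)))
    (A : EuclideanSpace ℝ (Fin n) →L[ℝ] EuclideanSpace ℝ (Fin n)) : Prop where
  prob : IsProbabilityMeasure μ
  lc : LogConcaveMeasure μ
  int : ∀ θ, Integrable (fun x => ⟪x, θ⟫ ^ 2) μ
  mean : ∀ θ, ∫ x, ⟪x, θ⟫ ∂μ = 0
  cov : ∀ θ, ∫ x, ⟪x, θ⟫ ^ 2 ∂μ = ‖A θ‖ ^ 2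

lemma CovarianceData.marginal {n : ℕ} {μ : Measure (EuclideanSpace ℝ (Fin n))}
    {A : EuclideanSpace ℝ (Fin n) →L[ℝ] EuclideanSpace ℝ (Fin n)} (h : CovarianceData μ A)
    (θ : EuclideanSpace ℝ (Fin n)) :
    IsProbabilityMeasure (μ.map fun x => ⟪x, θ⟫) ∧ LogConcaveMeasure (μ.map fun x => ⟪x, θ⟫) := by
  have := h.prob
  have hm : Measurable fun x : EuclideanSpace ℝ (Fin n) => ⟪x, θ⟫ := by fun_prop
  refine ⟨Measure.isProbabilityMeasure_map hm.aemeasurable, ?_⟩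
  have e : (fun x : EuclideanSpace ℝ (Fin n) => ⟪x, θ⟫) = (innerSL ℝ θ).toLinearMap := by
    ext x
    simp [real_inner_comm]
  rw [e] at hm ⊢
  exact h.lc.map _ hm

/-- The reverse Hölder inequality for the marginals, uniformly in the dimension. -/
lemma exists_marginal_fourth : ∃ C4 : ℝ, 0 < C4 ∧ ∀ (n : ℕ) (μ : Measure (EuclideanSpace ℝ (Fin n)))
    (A : EuclideanSpace ℝ (Fin n) →L[ℝ] EuclideanSpace ℝ (Fin n)), CovarianceData μ A →
    ∀ θ, 0 < ‖A θ‖ → Integrable (fun x => ⟪x, θ⟫ ^ 4) μ ∧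
      ∫ x, ⟪x, θ⟫ ^ 4 ∂μ ≤ C4 * (‖A θ‖ ^ 2) ^ 2 := by
  obtain ⟨C4, h4, H⟩ := fourth_moment
  refine ⟨C4, h4, fun n μ A h θ hθ => ?_⟩
  have := h.prob
  obtain ⟨hp, hl⟩ := h.marginal θ
  have hm : AEMeasurable (fun x : EuclideanSpace ℝ (Fin n) => ⟪x, θ⟫) μ := by fun_prop
  have := H _ hl ‖A θ‖ hθ ((integrable_map_measure (by fun_prop) hm).2 (h.int θ))
    (by rw [integral_map hm (by fun_prop)]; exact (h.cov θ).le)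
  rw [integrable_map_measure (by fun_prop) hm, integral_map hm (by fun_prop)] at this
  refine ⟨this.1, this.2.trans (le_of_eq (by ring))⟩

/-- Each marginal exceeds a fixed fraction of its standard deviation with probability bounded below,
uniformly in the dimension. -/
lemma exists_marginal_tail : ∃ a δ : ℝ, 0 < a ∧ 0 < δ ∧
    ∀ (n : ℕ) (μ : Measure (EuclideanSpace ℝ (Fin n)))
    (A : EuclideanSpace ℝ (Fin n) →L[ℝ] EuclideanSpace ℝ (Fin n)), CovarianceData μ A →
    ∀ θ s, 0 < s → s ≤ ‖A θ‖ → δ ≤ μ.real {x | a * s < ⟪x, θ⟫} := by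
  obtain ⟨C4, h4, H⟩ := exists_marginal_fourth
  obtain ⟨a, δ, ha, hδ, G⟩ := paley_zygmund h4
  refine ⟨a, δ, ha, hδ, fun n μ A h θ s hs hsθ => ?_⟩
  have := h.prob
  obtain ⟨hp, hl⟩ := h.marginal θ
  have hθ := hs.trans_le hsθ
  have hm' : Measurable (fun x : EuclideanSpace ℝ (Fin n) => ⟪x, θ⟫) := by fun_prop
  have hm := hm'.aemeasurable (μ := μ)
  have e4 := H n μ A h θ hθ
  have i1 : Integrable (fun x : EuclideanSpace ℝ (Fin n) => ⟪x, θ⟫) μ := by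
    refine ((h.int θ).add (integrable_const 1)).mono' (by fun_prop)
      (Filter.Eventually.of_forall fun x => ?_)
    simp only [Pi.add_apply, Real.norm_eq_abs]
    nlinarith [sq_abs (⟪x, θ⟫), sq_nonneg (|⟪x, θ⟫| - 1 / 2)]
  have := G (μ.map fun x => ⟪x, θ⟫) ‖A θ‖ hθ ((integrable_map_measure (by fun_prop) hm).2 i1)
    ((integrable_map_measure (by fun_prop) hm).2 (h.int θ))
    ((integrable_map_measure (by fun_prop) hm).2 e4.1)
    (by rw [integral_map hm (by fun_prop)]; exact h.mean θ)
    (by rw [integral_map hm (by fun_prop)]; exact h.cov θ)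
    (by rw [integral_map hm (by fun_prop)]; exact e4.2.trans (le_of_eq (by ring)))
  rw [map_measureReal_apply hm' (s := {y | a * ‖A θ‖ < y}) measurableSet_Ioi] at this
  refine this.trans (measureReal_mono fun x hx => ?_)
  have hx' : a * ‖A θ‖ < ⟪x, θ⟫ := hx
  exact (mul_le_mul_of_nonneg_left hsθ ha.le).trans_lt hx'

/-- Pythagoras for axes whose images under `A` are pairwise orthogonal. -/
lemma norm_sq_apply_sum {n : ℕ} (A : EuclideanSpace ℝ (Fin n) →L[ℝ] EuclideanSpace ℝ (Fin n))
    {b : Fin 3 → EuclideanSpace ℝ (Fin n)} (hA : ∀ l m, l ≠ m → ⟪A (b l), A (b m)⟫ = 0)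
    (θ : E3) : ‖A (∑ l, θ l • b l)‖ ^ 2 = ∑ l, θ l ^ 2 * ‖A (b l)‖ ^ 2 := by
  rw [← real_inner_self_eq_norm_sq, map_sum]
  simp only [map_smul]
  rw [sum_inner]
  refine Finset.sum_congr rfl fun l _ => ?_
  rw [inner_sum, Finset.sum_eq_single l]
  · rw [real_inner_smul_left, real_inner_smul_right, real_inner_self_eq_norm_sq]; ring
  · intro m _ hm
    rw [real_inner_smul_left, real_inner_smul_right, hA l m hm.symm]; ring
  · simp

/-- The negative second moment of a three-dimensional projection along principal axes. Three
dimensions are needed for `∫ ‖y‖⁻²` to converge. -/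
lemma exists_triple_neg_moment : ∃ C : ℝ, 0 < C ∧
    ∀ (n : ℕ) (μ : Measure (EuclideanSpace ℝ (Fin n)))
    (A : EuclideanSpace ℝ (Fin n) →L[ℝ] EuclideanSpace ℝ (Fin n)), CovarianceData μ A →
    ∀ b : Fin 3 → EuclideanSpace ℝ (Fin n), (∀ l m, l ≠ m → ⟪A (b l), A (b m)⟫ = 0) →
    ∀ s, 0 < s → (∀ l, s ^ 2 ≤ ‖A (b l)‖ ^ 2) →
    ∫⁻ x, (ENNReal.ofReal (∑ l, ⟪b l, x⟫ ^ 2))⁻¹ ∂μ ≤ ENNReal.ofReal (C / s ^ 2) := by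
  obtain ⟨a, δ, ha, hδ, H⟩ := exists_marginal_tail
  obtain ⟨C, hC, G⟩ := small_ball ha hδ
  refine ⟨1 + 8 * C, by positivity, fun n μ A h b hb s hs hbs => ?_⟩
  have := h.prob
  set P : EuclideanSpace ℝ (Fin n) →ₗ[ℝ] E3 :=
    (WithLp.linearEquiv 2 ℝ (Fin 3 → ℝ)).symm.toLinearMap ∘ₗ
      LinearMap.pi fun l => (innerSL ℝ (b l)).toLinearMap with hP
  have hPl : ∀ x l, P x l = ⟪b l, x⟫ := fun x l => by simp [hP]
  have hPm : Measurable P := P.continuous_of_finiteDimensional.measurable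
  have hpr : IsProbabilityMeasure (μ.map P) := Measure.isProbabilityMeasure_map hPm.aemeasurable
  have hn : ∀ x, ‖P x‖ ^ 2 = ∑ l, ⟪b l, x⟫ ^ 2 := fun x => by
    rw [EuclideanSpace.real_norm_sq_eq]
    simp only [hPl]
  have key := neg_moment hC (μ.map P) hs (G (μ.map P) (h.lc.map P hPm) s hs ?_)
  · rw [lintegral_map (by fun_prop) hPm] at key
    simpa only [hn] using key
  · intro θ hθ
    rw [map_measureReal_apply hPm (measurableSet_lt measurable_const (by fun_prop))]
    have e : ∀ x, ⟪θ, P x⟫ = ⟪x, ∑ l, θ l • b l⟫ := by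
      intro x
      rw [PiLp.inner_apply, inner_sum]
      refine Finset.sum_congr rfl fun l _ => ?_
      rw [real_inner_smul_right, hPl, real_inner_comm (b l) x]
      simp [mul_comm]
    have hs' : s ≤ ‖A (∑ l, θ l • b l)‖ := by
      refine (sq_le_sq₀ hs.le (norm_nonneg _)).1 ?_
      rw [norm_sq_apply_sum A hb]
      calc s ^ 2 = ∑ l, θ l ^ 2 * s ^ 2 := by
            rw [← Finset.sum_mul, ← EuclideanSpace.real_norm_sq_eq, hθ]; ring
        _ ≤ _ := Finset.sum_le_sum fun l _ => mul_le_mul_of_nonneg_left (hbs l) (sq_nonneg _)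
    have := H n μ A h _ s hs hs'
    simpa only [preimage_ofPred_eq, e] using this

/-! ### Uniform bounds on the variances -/

/-- The trace of the covariance is the second moment of the norm. -/
lemma CovarianceData.sum_basis {n : ℕ} {μ : Measure (EuclideanSpace ℝ (Fin n))}
    {A : EuclideanSpace ℝ (Fin n) →L[ℝ] EuclideanSpace ℝ (Fin n)} (h : CovarianceData μ A)
    (b : OrthonormalBasis (Fin n) ℝ (EuclideanSpace ℝ (Fin n))) :
    Integrable (fun x => ‖x‖ ^ 2) μ ∧ ∑ i, ‖A (b i)‖ ^ 2 = ∫ x, ‖x‖ ^ 2 ∂μ := by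
  have e : ∀ x : EuclideanSpace ℝ (Fin n), ‖x‖ ^ 2 = ∑ i, ⟪x, b i⟫ ^ 2 := fun x => by
    rw [← b.sum_sq_inner_left]
  rw [funext e]
  refine ⟨integrable_finsetSum _ fun i _ => h.int _, ?_⟩
  rw [integral_finsetSum _ fun i _ => h.int _]
  simp only [h.cov]

/-- Eigenvectors of `A* A` are mapped by `A` to an orthogonal family. -/
lemma exists_principal_axes {n : ℕ}
    (A : EuclideanSpace ℝ (Fin n) →L[ℝ] EuclideanSpace ℝ (Fin n)) :
    ∃ b : OrthonormalBasis (Fin n) ℝ (EuclideanSpace ℝ (Fin n)),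
      ∀ i j, i ≠ j → ⟪A (b i), A (b j)⟫ = 0 := by
  set L : EuclideanSpace ℝ (Fin n) →ₗ[ℝ] EuclideanSpace ℝ (Fin n) :=
    A.toLinearMap with hL
  have hS : (LinearMap.adjoint L * L).IsSymmetric := LinearMap.isSymmetric_adjoint_mul_self L
  refine ⟨hS.eigenvectorBasis finrank_euclideanSpace_fin, fun i j hij => ?_⟩
  have h1 := hS.apply_eigenvectorBasis finrank_euclideanSpace_fin j
  set b := hS.eigenvectorBasis finrank_euclideanSpace_fin with hb
  have h2 : ⟪b i, (LinearMap.adjoint L * L) (b j)⟫ = ⟪A (b i), A (b j)⟫ := by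
    rw [Module.End.mul_apply, LinearMap.adjoint_inner_right]
    rfl
  rw [← h2, h1, real_inner_smul_right, b.orthonormal.2 hij, mul_zero]

/-- If no direction carries much more than its share of the total variance `W`, then `‖x‖⁻²` has
mean of order `W⁻¹`: a positive proportion of the principal axes have variance of order `W / n`,
and the bounds for disjoint triples of them are averaged. -/
lemma exists_norm_neg_moment : ∃ C : ℝ, 0 < C ∧
    ∀ (n : ℕ) (μ : Measure (EuclideanSpace ℝ (Fin n)))
    (A : EuclideanSpace ℝ (Fin n) →L[ℝ] EuclideanSpace ℝ (Fin n)), CovarianceData μ A →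
    0 < n → ∀ W K : ℝ, 0 < W → 0 < K → ∫ x, ‖x‖ ^ 2 ∂μ = W → 8 * K ≤ n →
    (∀ θ, ‖θ‖ = 1 → ‖A θ‖ ^ 2 ≤ K * W / n) →
    ∫⁻ x, (ENNReal.ofReal (‖x‖ ^ 2))⁻¹ ∂μ ≤ ENNReal.ofReal (24 * K * C / W) := by
  obtain ⟨C, hC, H⟩ := exists_triple_neg_moment
  refine ⟨C, hC, fun n μ A h hn W K hW hK hWe hnK hle => ?_⟩
  have hn' : (0 : ℝ) < n := by exact_mod_cast hn
  obtain ⟨b, hb⟩ := exists_principal_axes A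
  obtain ⟨k, g, hg, hk, hgl⟩ := exists_triples hn hW hK ((h.sum_basis b).2.trans hWe)
    (fun i => hle _ (b.orthonormal.1 i)) hnK
  have hk0 : (0 : ℝ) < k := lt_of_lt_of_le (by positivity) hk
  set s := √(W / (2 * n)) with hs
  have hs0 : 0 < s := Real.sqrt_pos.2 (by positivity)
  have hs2 : s ^ 2 = W / (2 * n) := Real.sq_sqrt (by positivity)
  have key := lintegral_inv_le_of_sum_le (P := μ) (k := k) (by exact_mod_cast hk0)
    (Q := fun j x => ∑ l, ⟪b (g (j, l)), x⟫ ^ 2) (S := fun x => ‖x‖ ^ 2) (M := C / s ^ 2)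
    (fun j => by fun_prop) (fun j x => Finset.sum_nonneg fun l _ => sq_nonneg _) ?_ ?_
  · refine key.trans (ENNReal.ofReal_le_ofReal ?_)
    rw [hs2, div_le_iff₀ hk0]
    have e : C / (W / (2 * n)) = 24 * K * C / W * (n / (12 * K)) := by field_simp; norm_num
    rw [e]
    gcongr
  · intro x
    rw [← b.sum_sq_inner_right x, ← Fintype.sum_prod_type (fun a => ⟪b (g a), x⟫ ^ 2),
      ← Finset.sum_image (f := fun i => ⟪b i, x⟫ ^ 2) (s := Finset.univ) (g := g) hg.injOn]
    exact Finset.sum_le_sum_of_subset_of_nonneg (Finset.subset_univ _) fun i _ _ => sq_nonneg _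
  · intro j
    refine H n μ A h _ (fun l m hlm => hb _ _ ?_) s hs0 fun l => hs2.le.trans (hgl _)
    intro he
    exact hlm (Prod.ext_iff.1 (hg he)).2

/-- The variances of all one-dimensional marginals of an `L^p`-isotropic log-concave measure are
bounded above and below by universal constants. -/
theorem exists_variance_bounds : ∃ c0 C0 : ℝ, ∃ N : ℕ, 0 < c0 ∧ 0 < C0 ∧ 0 < N ∧
    ∀ p : ℝ, 1 ≤ p → p ≤ 2 → ∀ n : ℕ, N ≤ n → ∀ (μ : Measure (EuclideanSpace ℝ (Fin n)))
    (A : EuclideanSpace ℝ (Fin n) →L[ℝ] EuclideanSpace ℝ (Fin n)), CovarianceData μ A →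
    (∀ θ, θ ≠ 0 → 0 < ‖A θ‖) → μ {0} = 0 → Integrable (fun x => ‖x‖ ^ (p - 2)) μ →
    (∀ θ, Integrable (fun x => ⟪x, θ⟫ ^ 2 * ‖x‖ ^ (p - 2)) μ ∧
      ∫ x, ⟪x, θ⟫ ^ 2 * ‖x‖ ^ (p - 2) ∂μ = (∫ x, ‖x‖ ^ (p - 2) ∂μ) * ‖θ‖ ^ 2) →
    ∀ θ, ‖θ‖ = 1 → c0 ≤ ‖A θ‖ ^ 2 ∧ ‖A θ‖ ^ 2 ≤ C0 := by
  obtain ⟨C4, h4, H4⟩ := exists_marginal_fourth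
  obtain ⟨C, hC, HC⟩ := exists_norm_neg_moment
  set B := (3 + C4) / 2 with hB
  have hB0 : 0 < B := by positivity
  set D := 24 * (2 * B) * C with hD
  have hD0 : 0 < D := by positivity
  refine ⟨1 / 2 / (1 + (D + C4) / 2), B * (2 + D), ⌈8 * (2 * B)⌉₊ + 1, by positivity,
    by positivity, by positivity, fun p hp1 hp2 n hn μ A h hA h0 hZi hZ => ?_⟩
  have := h.prob
  have hn0 : 0 < n := by omega
  have hn' : (0 : ℝ) < n := by exact_mod_cast hn0
  have hnB : 8 * (2 * B) ≤ n :=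
    (Nat.le_ceil _).trans (by exact_mod_cast (Nat.le_succ _).trans hn)
  set e := EuclideanSpace.basisFun (Fin n) ℝ with he
  obtain ⟨i2, hW⟩ := h.sum_basis e
  set W := ∫ x, ‖x‖ ^ 2 ∂μ with hWd
  have hW0 : 0 < W := by
    rw [← hW]
    have : Nonempty (Fin n) := ⟨⟨0, hn0⟩⟩
    refine Finset.sum_pos (fun i _ => pow_pos (hA _ ?_) 2) Finset.univ_nonempty
    exact e.orthonormal.ne_zero i
  -- The weight is normalised by `u = ‖x‖ / R`, which has second moment one.
  set R := √W with hR
  have hR0 : 0 < R := Real.sqrt_pos.2 hW0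
  have hR2 : R ^ 2 = W := Real.sq_sqrt hW0.le
  set q := 2 - p with hq
  have hq0 : 0 ≤ q := by linarith
  have hq1 : q ≤ 1 := by linarith
  set u : EuclideanSpace ℝ (Fin n) → ℝ := fun x => ‖x‖ / R with hu
  have hnorm : ∀ᵐ x ∂μ, 0 < ‖x‖ := by
    have : ∀ᵐ x ∂μ, x ≠ 0 := by
      rw [ae_iff]
      simpa using h0
    filter_upwards [this] with x hx using norm_pos_iff.2 hx
  have hu0 : ∀ᵐ x ∂μ, 0 < u x := by
    filter_upwards [hnorm] with x hx using div_pos hx hR0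
  have hur : ∀ x, u x ^ (-q) = R ^ q * ‖x‖ ^ (p - 2) := fun x => by
    rw [hu, Real.div_rpow (norm_nonneg _) hR0.le, Real.rpow_neg hR0.le, div_inv_eq_mul, mul_comm]
    congr 2
    ring
  have hu2 : Integrable (fun x => u x ^ 2) μ := by
    simp only [hu, div_pow]
    exact i2.div_const _
  have hu21 : ∫ x, u x ^ 2 ∂μ = 1 := by
    simp only [hu, div_pow]
    rw [integral_div, hR2, ← hWd, div_self hW0.ne']
  have hw : Integrable (fun x => u x ^ (-q)) μ := by
    simp only [hur]
    exact hZi.const_mul _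
  set z := ∫ x, u x ^ (-q) ∂μ with hz
  have hzR : z = R ^ q * ∫ x, ‖x‖ ^ (p - 2) ∂μ := by
    rw [hz]
    simp only [hur]
    rw [integral_const_mul]
  have hθw : ∀ θ, ‖θ‖ = 1 → Integrable (fun x => ⟪x, θ⟫ ^ 2 * u x ^ (-q)) μ ∧
      ∫ x, ⟪x, θ⟫ ^ 2 * u x ^ (-q) ∂μ = z := by
    intro θ hθ
    obtain ⟨a1, a2⟩ := hZ θ
    have e1 : ∀ x : EuclideanSpace ℝ (Fin n),
        ⟪x, θ⟫ ^ 2 * u x ^ (-q) = R ^ q * (⟪x, θ⟫ ^ 2 * ‖x‖ ^ (p - 2)) := fun x => by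
      rw [hur]; ring
    simp only [e1]
    refine ⟨a1.const_mul _, ?_⟩
    rw [integral_const_mul, a2, hθ, hzR]
    ring
  have hzl : 1 / 2 ≤ z := weight_lower hu0 hq0 hq1 hu2 hu21 hw
  have hApos : ∀ θ, ‖θ‖ = 1 → 0 < ‖A θ‖ := fun θ hθ =>
    hA θ (norm_pos_iff.1 (by rw [hθ]; norm_num))
  have hvz : ∀ θ, ‖θ‖ = 1 → ‖A θ‖ ^ 2 ≤ B * z := by
    intro θ hθ
    have hp := hApos θ hθ
    obtain ⟨a1, a2⟩ := H4 n μ A h θ hp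
    have := variance_le_weighted h4 hu0 hq0 hq1 hu2 hu21 (h.int θ) (h.cov θ) (by positivity) a1 a2
      (hθw θ hθ).1
    rwa [(hθw θ hθ).2] at this
  -- Taking the trace of the weighted isotropy relation.
  have htrace : n * z ≤ 2 * W := by
    have e1 : ∀ x : EuclideanSpace ℝ (Fin n),
        ‖x‖ ^ 2 * u x ^ (-q) = ∑ i, ⟪x, e i⟫ ^ 2 * u x ^ (-q) := fun x => by
      rw [← Finset.sum_mul, e.sum_sq_inner_left]
    have hei : ∀ i, ‖e i‖ = 1 := fun i => e.orthonormal.1 i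
    have i3 : Integrable (fun x => ‖x‖ ^ 2 * u x ^ (-q)) μ := by
      simp only [e1]
      exact integrable_finsetSum _ fun i _ => (hθw _ (hei i)).1
    have e2 : ∫ x, ‖x‖ ^ 2 * u x ^ (-q) ∂μ = n * z := by
      simp only [e1]
      rw [integral_finsetSum _ fun i _ => (hθw _ (hei i)).1]
      simp [(hθw _ (hei _)).2]
    rw [← e2]
    have i4 : Integrable (fun x => W * (3 / 2 * u x ^ 2 + 1 / 2)) μ :=
      ((hu2.const_mul _).add (integrable_const _)).const_mul _
    calc ∫ x, ‖x‖ ^ 2 * u x ^ (-q) ∂μ ≤ ∫ x, W * (3 / 2 * u x ^ 2 + 1 / 2) ∂μ := by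
          refine integral_mono_ae i3 i4 ?_
          filter_upwards [hu0] with x hx
          have e3 : ‖x‖ ^ 2 = W * u x ^ 2 := by
            rw [hu, ← hR2]; field_simp
          rw [e3, mul_assoc]
          refine mul_le_mul_of_nonneg_left ?_ hW0.le
          have e4 := mul_le_mul_of_nonneg_left (inv_rpow_le hx hq0 hq1) (sq_nonneg (u x))
          have e5 : u x ^ 2 * (1 + (u x)⁻¹) = u x ^ 2 + u x := by field_simp
          nlinarith [sq_nonneg (u x - 1)]
      _ = 2 * W := by
          rw [integral_const_mul, integral_add (hu2.const_mul _) (integrable_const _),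
            integral_const_mul, hu21]
          simp
          ring
  have hvW : ∀ θ, ‖θ‖ = 1 → ‖A θ‖ ^ 2 ≤ 2 * B * W / n := by
    intro θ hθ
    rw [le_div_iff₀ hn']
    nlinarith [hvz θ hθ]
  have hneg := HC n μ A h hn0 W (2 * B) hW0 (by positivity) rfl hnB hvW
  obtain ⟨j1, j2⟩ := integrable_inv_sq (u := fun x => ‖x‖) (by fun_prop) (by positivity) hnorm hneg
  have einv : ∀ x, (u x ^ 2)⁻¹ = W * (‖x‖ ^ 2)⁻¹ := fun x => by
    rw [hu, div_pow, hR2, inv_div]; ring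
  have hi : Integrable (fun x => (u x ^ 2)⁻¹) μ := by
    simp only [einv]
    exact j1.const_mul _
  have hiD : ∫ x, (u x ^ 2)⁻¹ ∂μ ≤ D := by
    simp only [einv]
    rw [integral_const_mul]
    calc _ ≤ W * (24 * (2 * B) * C / W) := by gcongr
      _ = D := by rw [hD]; field_simp
  have hzu : z ≤ 2 + D := weight_upper hu0 hq0 hq1 hw hi hiD
  intro θ hθ
  have hp := hApos θ hθ
  obtain ⟨a1, a2⟩ := H4 n μ A h θ hp
  have h5 := weighted_le_variance hu0 hq0 hq1 hi hiD (h.int θ) (h.cov θ) (by positivity) a1 a2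
      (hθw θ hθ).1
  rw [(hθw θ hθ).2] at h5
  refine ⟨?_, (hvz θ hθ).trans (by gcongr)⟩
  rw [div_le_iff₀ (by positivity)]
  exact hzl.trans h5

/-! ### Transfer to operator norms -/

lemma IsLogConcaveAC.measure_zero {n : ℕ} (hn : 0 < n) {μ : Measure (EuclideanSpace ℝ (Fin n))}
    (h : IsLogConcaveAC μ) : μ {0} = 0 := by
  obtain ⟨f, -, rfl⟩ := h
  have : Nonempty (Fin n) := ⟨⟨0, hn⟩⟩
  exact withDensity_absolutelyContinuous _ _ (measure_singleton 0)

/-- If the push-forward under `T` is isotropic, the covariance of `μ` is the Gram form of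
`(T⁻¹)*`, because `⟪x, θ⟫ = ⟪T x, (T⁻¹)* θ⟫`. -/
lemma covarianceData_of_isotropic {n : ℕ} {μ : Measure (EuclideanSpace ℝ (Fin n))}
    (hp : IsProbabilityMeasure μ) (hlc : IsLogConcaveAC μ) (h0 : ∫ x, x ∂μ = 0)
    (T : EuclideanSpace ℝ (Fin n) ≃L[ℝ] EuclideanSpace ℝ (Fin n))
    (hT : ∀ i j : Fin n, (∫ x, x i * x j ∂(Measure.map (fun x => T x) μ)) = if i = j then 1 else 0) :
    CovarianceData μ (ContinuousLinearMap.adjoint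
      (T.symm : EuclideanSpace ℝ (Fin n) →L[ℝ] EuclideanSpace ℝ (Fin n))) := by
  set A := ContinuousLinearMap.adjoint
      (T.symm : EuclideanSpace ℝ (Fin n) →L[ℝ] EuclideanSpace ℝ (Fin n)) with hA
  have hTm : AEMeasurable (fun x => T x) μ := T.continuous.measurable.aemeasurable
  have hin : ∀ x θ, ⟪T x, A θ⟫ = ⟪x, θ⟫ := fun x θ => by
    rw [hA, ContinuousLinearMap.adjoint_inner_right]
    simp
  have hq : ∀ θ, Integrable (fun x => ⟪x, θ⟫ ^ 2) μ ∧ ∫ x, ⟪x, θ⟫ ^ 2 ∂μ = ‖A θ‖ ^ 2 := by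
    intro θ
    obtain ⟨h1, h2⟩ := quad_form (w := fun _ => 1) measurable_const (fun _ => zero_le_one)
      (c := 1) one_ne_zero (by simpa using hT) (A θ)
    simp only [mul_one, one_mul] at h1 h2
    rw [integrable_map_measure (by fun_prop) hTm] at h1
    rw [integral_map hTm (by fun_prop)] at h2
    simp only [Function.comp_def, hin] at h1 h2
    exact ⟨h1, h2⟩
  have hi : Integrable (fun x => x) μ := by
    have i2 : Integrable (fun x => ‖x‖ ^ 2) μ := by
      have e : ∀ x : EuclideanSpace ℝ (Fin n), ‖x‖ ^ 2 =
          ∑ i, ⟪x, EuclideanSpace.basisFun (Fin n) ℝ i⟫ ^ 2 := fun x => by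
        rw [← (EuclideanSpace.basisFun (Fin n) ℝ).sum_sq_inner_left]
      rw [funext e]
      exact integrable_finsetSum _ fun i _ => (hq _).1
    refine (i2.add (integrable_const 1)).mono' (by fun_prop)
      (Filter.Eventually.of_forall fun x => ?_)
    simp only [Pi.add_apply]
    nlinarith [sq_nonneg (‖x‖ - 1 / 2)]
  refine ⟨hp, hlc.logConcaveMeasure, fun θ => (hq θ).1, fun θ => ?_, fun θ => (hq θ).2⟩
  simp only [real_inner_comm θ]
  rw [integral_inner hi, h0, inner_zero_right]

/-- Two-sided bounds for `(T⁻¹)*` transfer to the operator norms of `T` and `T⁻¹`. -/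
lemma norm_bounds_of_adjoint {n : ℕ} (hn : 0 < n)
    (T : EuclideanSpace ℝ (Fin n) ≃L[ℝ] EuclideanSpace ℝ (Fin n)) {c C : ℝ} (hc : 0 < c)
    (hC : 0 < C)
    (h : ∀ θ, ‖θ‖ = 1 → c ≤ ‖ContinuousLinearMap.adjoint
        (T.symm : EuclideanSpace ℝ (Fin n) →L[ℝ] EuclideanSpace ℝ (Fin n)) θ‖ ∧
      ‖ContinuousLinearMap.adjoint
        (T.symm : EuclideanSpace ℝ (Fin n) →L[ℝ] EuclideanSpace ℝ (Fin n)) θ‖ ≤ C) :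
    (1 / C ≤ ‖(T : EuclideanSpace ℝ (Fin n) →L[ℝ] EuclideanSpace ℝ (Fin n))‖ ∧
      ‖(T : EuclideanSpace ℝ (Fin n) →L[ℝ] EuclideanSpace ℝ (Fin n))‖ ≤ 1 / c) ∧
    (c ≤ ‖(T.symm : EuclideanSpace ℝ (Fin n) →L[ℝ] EuclideanSpace ℝ (Fin n))‖ ∧
      ‖(T.symm : EuclideanSpace ℝ (Fin n) →L[ℝ] EuclideanSpace ℝ (Fin n))‖ ≤ C) := by
  set E := EuclideanSpace ℝ (Fin n)
  set A : E →L[ℝ] E := ContinuousLinearMap.adjoint (T.symm : E →L[ℝ] E) with hA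
  set B : E →L[ℝ] E := ContinuousLinearMap.adjoint (T : E →L[ℝ] E) with hB
  have nA : ‖(T.symm : E →L[ℝ] E)‖ = ‖A‖ := (LinearIsometryEquiv.norm_map _ _).symm
  have nB : ‖(T : E →L[ℝ] E)‖ = ‖B‖ := (LinearIsometryEquiv.norm_map _ _).symm
  have hAB : ∀ θ, A (B θ) = θ := fun θ => by
    refine ext_inner_left ℝ fun x => ?_
    rw [hA, hB, ContinuousLinearMap.adjoint_inner_right, ContinuousLinearMap.adjoint_inner_right]
    simp
  have hBA : ∀ θ, B (A θ) = θ := fun θ => by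
    refine ext_inner_left ℝ fun x => ?_
    rw [hA, hB, ContinuousLinearMap.adjoint_inner_right, ContinuousLinearMap.adjoint_inner_right]
    simp
  have hs : ∀ θ, c * ‖θ‖ ≤ ‖A θ‖ ∧ ‖A θ‖ ≤ C * ‖θ‖ := by
    intro θ
    rcases eq_or_ne θ 0 with rfl | hθ
    · simp
    have hn : 0 < ‖θ‖ := norm_pos_iff.2 hθ
    have := h (‖θ‖⁻¹ • θ) (by rw [norm_smul, norm_inv, norm_norm, inv_mul_cancel₀ hn.ne'])
    rw [map_smul, norm_smul, norm_inv, norm_norm, inv_mul_eq_div, le_div_iff₀ hn,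
      div_le_iff₀ hn] at this
    exact this
  have : Nonempty (Fin n) := ⟨⟨0, hn⟩⟩
  obtain ⟨θ, hθ⟩ := exists_norm_eq E zero_le_one
  rw [nA, nB]
  refine ⟨⟨?_, ?_⟩, ?_, ?_⟩
  · have h1 := B.le_opNorm (A θ)
    rw [hBA, hθ] at h1
    have h2 := (hs θ).2
    rw [hθ, mul_one] at h2
    rw [div_le_iff₀ hC]
    exact h1.trans (by gcongr)
  · refine B.opNorm_le_bound (by positivity) fun x => ?_
    have h1 := (hs (B x)).1
    rw [hAB] at h1
    rw [one_div, inv_mul_eq_div, le_div_iff₀ hc, mul_comm]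
    exact h1
  · have h1 := A.le_opNorm θ
    have h2 := (hs θ).1
    rw [hθ, mul_one] at h1 h2
    exact h2.trans h1
  · exact A.opNorm_le_bound hC.le fun x => (hs x).2

end Helpers

/-- Proximity to the isotropic position: there are universal constants
`c, C, C' > 0` such that for `1 ≤ p ≤ 2`, `n ≥ C'`, an Lᵖ-isotropic absolutely continuous
log-concave probability measure `μ` on `ℝⁿ`, and `T ∈ GL_n(ℝ)` with `T_*μ` isotropic,
the operator norms of `T` and `T⁻¹` lie in `[c, C]`. -/
theorem stmt_12 :
    ∃ c C : ℝ, ∃ C' : ℕ, 0 < c ∧ 0 < C ∧ 0 < C' ∧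
      ∀ p : ℝ, 1 ≤ p → p ≤ 2 →
      ∀ (n : ℕ), C' ≤ n →
      ∀ μ : Measure (EuclideanSpace ℝ (Fin n)),
        IsProbabilityMeasure μ → IsLogConcaveAC μ → IsLpIsotropic p μ →
      ∀ T : EuclideanSpace ℝ (Fin n) ≃L[ℝ] EuclideanSpace ℝ (Fin n),
        -- T_*μ is isotropic: centered with identity covariance
        (∫ x, x ∂(Measure.map (fun x => T x) μ)) = 0 →
        (∀ i j : Fin n, (∫ x, x i * x j ∂(Measure.map (fun x => T x) μ))
            = if i = j then 1 else 0) →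
        (c ≤ ‖(T : EuclideanSpace ℝ (Fin n) →L[ℝ] EuclideanSpace ℝ (Fin n))‖ ∧
          ‖(T : EuclideanSpace ℝ (Fin n) →L[ℝ] EuclideanSpace ℝ (Fin n))‖ ≤ C) ∧
        (c ≤ ‖(T.symm : EuclideanSpace ℝ (Fin n) →L[ℝ] EuclideanSpace ℝ (Fin n))‖ ∧
          ‖(T.symm : EuclideanSpace ℝ (Fin n) →L[ℝ] EuclideanSpace ℝ (Fin n))‖ ≤ C) := by
  obtain ⟨c0, C0, N, hc0, hC0, hN, H⟩ := exists_variance_bounds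
  have hc := Real.sqrt_pos.2 hc0
  have hC := Real.sqrt_pos.2 hC0
  refine ⟨min √c0 (1 / √C0), max √C0 (1 / √c0), N, by positivity, by positivity, hN,
    fun p hp1 hp2 n hn μ hμ hlc hiso T _ hT => ?_⟩
  obtain ⟨hcent, hZi, hZ0, hZ⟩ := hiso
  have hn0 : 0 < n := by omega
  have hcov := covarianceData_of_isotropic hμ hlc hcent T hT
  have key := H p hp1 hp2 n hn μ _ hcov ?_ (hlc.measure_zero hn0) hZi
    (quad_form (by fun_prop) (fun x => by positivity) hZ0 hZ)
  · obtain ⟨⟨h1, h2⟩, h3, h4⟩ := norm_bounds_of_adjoint hn0 T hc hC fun θ hθ =>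
      ⟨Real.sqrt_le_iff.2 ⟨norm_nonneg _, (key θ hθ).1⟩,
        Real.le_sqrt_of_sq_le (key θ hθ).2⟩
    exact ⟨⟨(min_le_right _ _).trans h1, h2.trans (le_max_right _ _)⟩,
      (min_le_left _ _).trans h3, h4.trans (le_max_left _ _)⟩
  · intro θ hθ
    refine norm_pos_iff.2 fun h0 => hθ (ext_inner_left ℝ fun x => ?_)
    have := ContinuousLinearMap.adjoint_inner_right
      (T.symm : EuclideanSpace ℝ (Fin n) →L[ℝ] EuclideanSpace ℝ (Fin n)) (T x) θ
    rw [h0, inner_zero_right] at this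
    simpa using this.symm
end

section
/- There exist universal constants c, C' > 0 such that the following holds. Let 1 ≤ p ≤ 2, let n ≥ C', and let μ be an L^p-isotropic, absolutely continuous log-concave probability measure on ℝⁿ such that there exists T ∈ GL_n(ℝ) with T_*μ isotropic. Then Z_{p,μ} = ∫ |x|^{p-2} dμ ≥ c·n^{p/2 − 1}. -/
/-!
The bound holds with `c = C' = 1`, for every `n ≥ 1`. Put `Z = ∫ ‖x‖^(p-2) dμ`. Summing the diagonal
entries of the `Lᵖ`-isotropy identity gives `∫ ‖x‖^p dμ = n Z`. With `θ = 1 - p/2 ∈ [0, 1]`, the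
weighted arithmetic-geometric mean inequality states that, for `x ≠ 0`,
`n^(-θ) = (‖x‖^p / n)^θ (‖x‖^(p-2))^(1-θ) ≤ θ ‖x‖^p / n + (1-θ) ‖x‖^(p-2)`,
because the powers of `‖x‖` on the left cancel. Integration yields `n^(p/2-1) ≤ θ Z + (1-θ) Z = Z`.
Log-concavity enters only through absolute continuity, which gives `μ {0} = 0`.
-/

open MeasureTheory

/-- The trace of the `Lᵖ`-isotropy identity. Integrability is automatic: a non-integrable diagonal
entry would have Bochner integral `0`, which is excluded by `Z ≠ 0`. -/
lemma IsLpIsotropic.integral_norm_rpow {n : ℕ} {p : ℝ} {μ : Measure (EuclideanSpace ℝ (Fin n))}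
    (h : IsLpIsotropic p μ) :
    Integrable (fun x => ‖x‖ ^ 2 * ‖x‖ ^ (p - 2)) μ ∧
      ∫ x, ‖x‖ ^ 2 * ‖x‖ ^ (p - 2) ∂μ = n * ∫ x, ‖x‖ ^ (p - 2) ∂μ := by
  obtain ⟨-, -, hZ, hC⟩ := h
  have hd (i : Fin n) : Integrable (fun x : EuclideanSpace ℝ (Fin n) =>
      x i * x i * ‖x‖ ^ (p - 2)) μ := by
    by_contra hi
    have := hC i i
    rw [integral_undef hi, if_pos rfl] at this
    exact hZ this.symm
  have he : (fun x : EuclideanSpace ℝ (Fin n) => ‖x‖ ^ 2 * ‖x‖ ^ (p - 2))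
      = fun x => ∑ i, x i * x i * ‖x‖ ^ (p - 2) := by
    funext x
    rw [← Finset.sum_mul, EuclideanSpace.real_norm_sq_eq]
    simp only [sq]
  rw [he]
  refine ⟨integrable_finsetSum _ fun i _ => hd i, ?_⟩
  rw [integral_finsetSum _ fun i _ => hd i]
  simp [hC]

lemma IsLogConcaveAC.ae_ne_zero {n : ℕ} (hn : 1 ≤ n) {μ : Measure (EuclideanSpace ℝ (Fin n))}
    (h : IsLogConcaveAC μ) : ∀ᵐ x ∂μ, x ≠ 0 := by
  obtain ⟨f, -, rfl⟩ := h
  have : Nonempty (Fin n) := ⟨⟨0, hn⟩⟩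
  refine (withDensity_absolutelyContinuous _ _).ae_le ?_
  exact Measure.ae_ne volume 0

/-- The weighted arithmetic-geometric mean inequality for `r^p / m` and `r^(p-2)`, with the weights
that cancel `r` from the geometric mean. -/
lemma rpow_le_weighted_mean {p m r : ℝ} (hp1 : 1 ≤ p) (hp2 : p ≤ 2) (hm : 0 < m) (hr : 0 < r) :
    m ^ (p / 2 - 1) ≤ (1 - p / 2) / m * (r ^ 2 * r ^ (p - 2)) + p / 2 * r ^ (p - 2) := by
  have h := Real.geom_mean_le_arith_mean2_weighted (w₁ := 1 - p / 2) (w₂ := p / 2)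
    (p₁ := r ^ p * m⁻¹) (p₂ := r ^ (p - 2)) (by linarith) (by linarith) (by positivity)
    (by positivity) (by ring)
  have e1 : (r ^ p * m⁻¹) ^ (1 - p / 2) * (r ^ (p - 2)) ^ (p / 2) = m ^ (p / 2 - 1) := by
    rw [Real.mul_rpow (by positivity) (by positivity), ← Real.rpow_mul hr.le,
      ← Real.rpow_mul hr.le, Real.inv_rpow hm.le, ← Real.rpow_neg hm.le, mul_right_comm,
      ← Real.rpow_add hr]
    ring_nf
    simp
  have e2 : r ^ 2 * r ^ (p - 2) = r ^ p := by
    rw [← Real.rpow_natCast, ← Real.rpow_add hr]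
    norm_num
  rw [e1] at h
  rw [e2]
  calc _ ≤ _ := h
    _ = _ := by ring

/-- there are universal constants `c, C' > 0` such that whenever `1 ≤ p ≤ 2`,
`n ≥ C'`, and `μ` is an Lᵖ-isotropic absolutely continuous log-concave probability measure
on `ℝⁿ` admitting a linear image `T_*μ` which is isotropic, one has
`Z_{p,μ} = ∫‖x‖^{p-2} dμ ≥ c·n^{p/2−1}`. -/
theorem stmt_19 :
    ∃ c : ℝ, ∃ C' : ℕ, 0 < c ∧ 0 < C' ∧
      ∀ p : ℝ, 1 ≤ p → p ≤ 2 →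
      ∀ (n : ℕ), C' ≤ n →
      ∀ μ : Measure (EuclideanSpace ℝ (Fin n)),
        IsProbabilityMeasure μ → IsLogConcaveAC μ → IsLpIsotropic p μ →
      ∀ T : EuclideanSpace ℝ (Fin n) ≃ₗ[ℝ] EuclideanSpace ℝ (Fin n),
        -- T_*μ is isotropic: centered with identity covariance
        (∫ x, x ∂(Measure.map (fun x => T x) μ)) = 0 →
        (∀ i j : Fin n, (∫ x, x i * x j ∂(Measure.map (fun x => T x) μ))
            = if i = j then 1 else 0) →
        c * (n : ℝ) ^ (p / 2 - 1) ≤ ∫ x, ‖x‖ ^ (p - 2) ∂μ := by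
  refine ⟨1, 1, one_pos, one_pos, ?_⟩
  intro p hp1 hp2 n hn μ hμ hac hiso T _ _
  obtain ⟨hI, hS⟩ := hiso.integral_norm_rpow
  have hm : (0 : ℝ) < n := by exact_mod_cast hn
  have hJ := hiso.2.1
  have key : ∫ _x, (n : ℝ) ^ (p / 2 - 1) ∂μ ≤
      ∫ x, ((1 - p / 2) / n * (‖x‖ ^ 2 * ‖x‖ ^ (p - 2)) + p / 2 * ‖x‖ ^ (p - 2)) ∂μ := by
    refine integral_mono_ae (integrable_const _) ((hI.const_mul _).add (hJ.const_mul _)) ?_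
    filter_upwards [hac.ae_ne_zero hn] with x hx
    exact rpow_le_weighted_mean hp1 hp2 hm (norm_pos_iff.2 hx)
  rw [integral_add (hI.const_mul _) (hJ.const_mul _), integral_const_mul, integral_const_mul, hS,
    integral_const, probReal_univ, one_smul] at key
  rw [one_mul]
  calc _ ≤ _ := key
    _ = _ := by field_simp; ring
end
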